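/- For every finite simple graph H there exists an integer c_H such that the following holds: for every finite simple graph G not containing H as an odd minor, every set S of positive integers with 1 ∈ S, and every positive integer k, if every induced bipartite subgraph of G is S-achieved k-choosable, then G is S-achieved (k+c_H)-choosable. -/

import Mathlib

open SimpleGraph

universe u v

namespace CFPaper

variable {V : Type u} {W : Type v}

/-- A coloring is proper if adjacent vertices get distinct colors. -/
def Proper (G : SimpleGraph V) (φ : V → ℕ) : Prop :=
  ∀ ⦃u w : V⦄, G.Adj u w → φ u ≠ φ w

/-- A coloring is conflict-free if every non-isolated vertex has a color appearing
exactly once in its open neighborhood. -/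
def ConflictFree (G : SimpleGraph V) (φ : V → ℕ) : Prop :=
  ∀ v : V, (G.neighborSet v).Nonempty →
    ∃ c : ℕ, {u : V | G.Adj v u ∧ φ u = c}.ncard = 1

/-- `G` is conflict-free `k`-choosable (k a real number). -/
def CFChoosable (G : SimpleGraph V) (k : ℝ) : Prop :=
  ∀ L : V → Finset ℕ, (∀ v, k ≤ ((L v).card : ℝ)) →
    ∃ φ : V → ℕ, (∀ v, φ v ∈ L v) ∧ Proper G φ ∧ ConflictFree G φ

/-- A coloring is `S`-achieved if for every non-isolated vertex there are `s ∈ S`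
and a color appearing exactly `s` times in its open neighborhood. -/
def SAchieved (S : Set ℕ) (G : SimpleGraph V) (φ : V → ℕ) : Prop :=
  ∀ v : V, (G.neighborSet v).Nonempty →
    ∃ s ∈ S, ∃ c : ℕ, {u : V | G.Adj v u ∧ φ u = c}.ncard = s

/-- `G` is `S`-achieved `t`-choosable. -/
def SChoosable (S : Set ℕ) (G : SimpleGraph V) (t : ℕ) : Prop :=
  ∀ L : V → Finset ℕ, (∀ v, t ≤ (L v).card) →
    ∃ φ : V → ℕ, (∀ v, φ v ∈ L v) ∧ Proper G φ ∧ SAchieved S G φ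

/-- `G` is properly `S`-achieved `t`-colorable (colors from `{1,…,t}`). -/
def SColorable (S : Set ℕ) (G : SimpleGraph V) (t : ℕ) : Prop :=
  ∃ φ : V → ℕ, (∀ v, φ v ∈ Finset.Icc 1 t) ∧ Proper G φ ∧ SAchieved S G φ

/-- `G` has a proper conflict-free coloring with colors from `{1,…,t}`. -/
def PCFColorable (G : SimpleGraph V) (t : ℕ) : Prop :=
  ∃ φ : V → ℕ, (∀ v, φ v ∈ Finset.Icc 1 t) ∧ Proper G φ ∧ ConflictFree G φ

/-- The proper conflict-free chromatic number. -/
noncomputable def chiPCF (G : SimpleGraph V) : ℕ := sInf {t : ℕ | PCFColorable G t}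

/-- `(B x : x : ι)` is a tree-decomposition of `G` with underlying tree `T`. -/
structure IsTreeDecomp (G : SimpleGraph V) {ι : Type*} (T : SimpleGraph ι) (B : ι → Set V) :
    Prop where
  tree : T.IsTree
  bags_connected : ∀ vv : V, (T.induce {x : ι | vv ∈ B x}).Connected
  edge_in_bag : ∀ ⦃a b : V⦄, G.Adj a b → ∃ x : ι, a ∈ B x ∧ b ∈ B x

/-- The torso of a tree-decomposition at a node `x`. -/
def torso (G : SimpleGraph V) {ι : Type*} (T : SimpleGraph ι) (B : ι → Set V) (x : ι) :
    SimpleGraph (B x) :=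
  SimpleGraph.fromRel fun a b =>
    G.Adj a b ∨ ∃ y : ι, T.Adj x y ∧ (a : V) ∈ B y ∧ (b : V) ∈ B y

/-- The frame of a tree-decomposition at a node `x`. -/
def frame (G : SimpleGraph V) {ι : Type*} (T : SimpleGraph ι) (B : ι → Set V) (x : ι) :
    Set (Set (B x)) :=
  {s : Set (B x) | ∃ y : ι, T.Adj x y ∧ s = {a : B x | (a : V) ∈ B y}}

/-- A subgraph `H` of `G` is `C`-compatible: every edge of `H` has both ends in some member
of `C`. -/
def Compatible (C : Set (Set V)) (H : SimpleGraph V) : Prop :=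
  ∀ ⦃a b : V⦄, H.Adj a b → ∃ c ∈ C, a ∈ c ∧ b ∈ c

/-- `G` is `(S,C,L,t)`-extendable. -/
def Extendable (S : Set ℕ) (G : SimpleGraph V) (C : Set (Set V)) (L : V → Finset ℕ)
    (t : ℕ) : Prop :=
  ∀ (Wc : Set V), G.IsClique Wc → Wc.ncard ≤ t →
  ∀ (H : SimpleGraph V), H ≤ G → Compatible C H →
  ∀ (φW : V → ℕ), (∀ w ∈ Wc, φW w ∈ L w) →
    (∀ a ∈ Wc, ∀ b ∈ Wc, G.Adj a b → φW a ≠ φW b) →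
  ∀ (f : V → ℕ) (g : V → Bool),
  ∃ φ : V → ℕ, (∀ w, φ w ∈ L w) ∧ Proper G φ ∧ (∀ w ∈ Wc, φ w = φW w) ∧
    (∀ w ∈ Wc, g w = false → ∀ u : V, G.Adj w u → u ∉ Wc → φ u ≠ f w) ∧
    (∀ w : V, (w ∉ Wc ∨ (w ∈ Wc ∧ g w = true)) →
      (((G \ H).neighborSet w = ∅) ∨
        ∃ c : ℕ, {u : V | (G \ H).Adj w u ∧ φ u = c}.ncard ∈ S))

/-- `H` is a minor of `G` (branch-set definition). -/
def IsMinor (H : SimpleGraph W) (G : SimpleGraph V) : Prop :=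
  ∃ ρ : W → Set V,
    (∀ w : W, (G.induce (ρ w)).Connected) ∧
    (Pairwise fun a b => Disjoint (ρ a) (ρ b)) ∧
    ∀ ⦃a b : W⦄, H.Adj a b → ∃ x ∈ ρ a, ∃ y ∈ ρ b, G.Adj x y

/-- The spanning subgraph of `G` whose edges are those between `A` and its complement. -/
def crossGraph (G : SimpleGraph V) (A : Set V) : SimpleGraph V :=
  SimpleGraph.fromRel fun x y => G.Adj x y ∧ x ∈ A ∧ y ∉ A

/-- The odd contraction of `G` determined by the bipartition `{A, Aᶜ}`: contract each
connected component of the spanning bipartite subgraph between `A` and `Aᶜ`. -/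
def oddContract (G : SimpleGraph V) (A : Set V) :
    SimpleGraph ((crossGraph G A).ConnectedComponent) :=
  SimpleGraph.fromRel fun Ct Dt =>
    ∃ x y : V, (crossGraph G A).connectedComponentMk x = Ct ∧
      (crossGraph G A).connectedComponentMk y = Dt ∧ G.Adj x y

/-- `OddContractions G H`: `H` is obtained from `G` by repeatedly applying odd
contractions. -/
inductive OddContractions : ∀ {α : Type u}, SimpleGraph α → ∀ {β : Type u}, SimpleGraph β → Prop
  | refl {α : Type u} (G : SimpleGraph α) : OddContractions G G
  | step {α : Type u} (G : SimpleGraph α) (A : Set α) {β : Type u} {H : SimpleGraph β} :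
      OddContractions (oddContract G A) H → OddContractions G H

/-- `H` is an odd minor of `G`: `H` is isomorphic to a graph obtained from a subgraph of `G`
by repeatedly applying odd contractions. -/
def IsOddMinor (H : SimpleGraph W) (G : SimpleGraph V) : Prop :=
  ∃ (s : Set V) (G₀ : SimpleGraph s), G₀ ≤ G.induce s ∧
    ∃ (β : Type u) (K : SimpleGraph β), OddContractions G₀ K ∧ Nonempty (H ≃g K)

/-- The graph obtained from `H` by subdividing each edge `e` exactly `n e` times, where
`σ` chooses an orientation of each edge. -/
def subdivGraph (H : SimpleGraph W) (σ : H.edgeSet → W × W) (n : H.edgeSet → ℕ) :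
    SimpleGraph (W ⊕ (Σ e : H.edgeSet, Fin (n e))) :=
  SimpleGraph.fromRel fun a b =>
    (∃ (x y : W) (h : H.Adj x y),
        a = Sum.inl x ∧ b = Sum.inl y ∧ n ⟨s(x, y), H.mem_edgeSet.mpr h⟩ = 0) ∨
    (∃ (x : W) (p : Σ e : H.edgeSet, Fin (n e)), a = Sum.inl x ∧ b = Sum.inr p ∧
        ((x = (σ p.1).1 ∧ (p.2 : ℕ) = 0) ∨ (x = (σ p.1).2 ∧ (p.2 : ℕ) = n p.1 - 1))) ∨
    (∃ p q : Σ e : H.edgeSet, Fin (n e), a = Sum.inr p ∧ b = Sum.inr q ∧ p.1 = q.1 ∧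
        (p.2 : ℕ) + 1 = (q.2 : ℕ))

/-- `σ` is a valid orientation of the edges of `H`. -/
def ValidOrientation (H : SimpleGraph W) (σ : H.edgeSet → W × W) : Prop :=
  ∀ e : H.edgeSet, s((σ e).1, (σ e).2) = (e : Sym2 W)

/-- `G` contains a subdivision of `H` as a subgraph. -/
def ContainsSubdivision (H : SimpleGraph W) (G : SimpleGraph V) : Prop :=
  ∃ (σ : H.edgeSet → W × W) (n : H.edgeSet → ℕ), ValidOrientation H σ ∧
    ∃ f : subdivGraph H σ n →g G, Function.Injective f

/-- The strong product of two graphs. -/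
def strongProd {α : Type*} {β : Type*} (A : SimpleGraph α) (B : SimpleGraph β) :
    SimpleGraph (α × β) :=
  SimpleGraph.fromRel fun p q =>
    (A.Adj p.1 q.1 ∧ p.2 = q.2) ∨ (p.1 = q.1 ∧ B.Adj p.2 q.2) ∨
      (A.Adj p.1 q.1 ∧ B.Adj p.2 q.2)


/-- A layering of `G`. -/
def IsLayering (G : SimpleGraph V) (Vl : ℕ → Set V) : Prop :=
  (∀ vv : V, ∃ i : ℕ, vv ∈ Vl i) ∧ (Pairwise fun i j => Disjoint (Vl i) (Vl j)) ∧
  ∀ ⦃a b : V⦄, G.Adj a b → ∃ i : ℕ, a ∈ Vl i ∪ Vl (i + 1) ∧ b ∈ Vl i ∪ Vl (i + 1)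

open scoped Classical in
/-- A form of the Tutte-Berge formula. -/
theorem tutteBerge {P : Type} [Fintype P] (H : SimpleGraph P) (d : ℕ)
    (hev : Even (Fintype.card P + d)) :
    (∃ μ : P → Option P, (∀ x y, μ x = some y → μ y = some x ∧ H.Adj x y) ∧
      (Finset.univ.filter fun x => μ x = none).card ≤ d) ∨
    (∃ (Y : Finset P) (ι : Type) (κ : P → ι) (O : Finset ι),
      (∀ x y, x ∉ Y → y ∉ Y → H.Adj x y → κ x = κ y) ∧
      (∀ o ∈ O, Odd (Finset.univ.filter fun x => x ∉ Y ∧ κ x = o).card) ∧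
      Y.card + d < O.card) := by
  let HP : SimpleGraph (P ⊕ Fin d) := SimpleGraph.fromRel fun a b =>
    (∃ x y, a = Sum.inl x ∧ b = Sum.inl y ∧ H.Adj x y) ∨ (∃ i, a = Sum.inr i)
  have hl : ∀ x y, HP.Adj (Sum.inl x) (Sum.inl y) ↔ H.Adj x y := by
    intro x y
    simp only [HP, SimpleGraph.fromRel_adj]
    constructor
    · rintro ⟨h, h' | h'⟩
      · rcases h' with ⟨a, b, h1, h2, h3⟩ | ⟨i, h⟩ <;> simp_all
      · rcases h' with ⟨a, b, h1, h2, h3⟩ | ⟨i, h⟩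
        · simp only [Sum.inl.injEq] at h1 h2; subst h1 h2; exact h3.symm
        · simp at h
    · intro h
      exact ⟨by simpa using h.ne, Or.inl (Or.inl ⟨x, y, rfl, rfl, h⟩)⟩
  have hr : ∀ i a, a ≠ Sum.inr i → HP.Adj (Sum.inr i) a := by
    intro i a h
    simp only [HP, SimpleGraph.fromRel_adj]
    exact ⟨h.symm, Or.inl (Or.inr ⟨i, rfl⟩)⟩
  by_cases hM : ∃ M : HP.Subgraph, M.IsPerfectMatching
  · left
    obtain ⟨M, hM⟩ := hM
    rw [Subgraph.isPerfectMatching_iff] at hM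
    choose m hm hm' using hM
    have hmm : ∀ a, m (m a) = a := fun a => (hm' _ _ (hm a).symm).symm
    refine ⟨fun x => (m (Sum.inl x)).getLeft?, ?_, ?_⟩
    · intro x y h
      rw [Sum.getLeft?_eq_some_iff] at h
      constructor
      · rw [Sum.getLeft?_eq_some_iff, ← h, hmm]
      · rw [← hl, ← h]; exact (hm _).adj_sub
    · calc _ ≤ (Finset.univ.map (Function.Embedding.inr : Fin d ↪ P ⊕ Fin d)).card := by
            apply Finset.card_le_card_of_injOn (fun x => m (Sum.inl x))
            · intro x hx
              simp only [Finset.coe_filter, Finset.mem_univ, true_and, Set.mem_setOf_eq,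
                Sum.getLeft?_eq_none_iff] at hx
              obtain ⟨i, hi⟩ := Sum.isRight_iff.1 hx
              simp [hi]
            · intro x _ y _ h
              have := congrArg m h
              simpa [hmm] using this
        _ = d := by simp
  · right
    rw [SimpleGraph.tutte] at hM
    push Not at hM
    obtain ⟨u, hu⟩ := hM
    unfold IsTutteViolator at hu
    set K := ((⊤ : HP.Subgraph).deleteVerts u).coe with hK
    have hmem : ∀ a, a ∉ u → a ∈ ((⊤ : HP.Subgraph).deleteVerts u).verts := by
      intro a ha; simp [ha]
    have hKadj : ∀ a b (ha : a ∉ u) (hb : b ∉ u), HP.Adj a b →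
        K.Adj ⟨a, hmem a ha⟩ ⟨b, hmem b hb⟩ := by
      intro a b ha hb h
      simp [hK, Subgraph.deleteVerts_adj, ha, hb, h]
    have hDu : ∀ i : Fin d, Sum.inr i ∈ u := by
      intro i
      by_contra hi
      have hall : ∀ c : K.ConnectedComponent, c = K.connectedComponentMk ⟨_, hmem _ hi⟩ := by
        intro c
        induction c using SimpleGraph.ConnectedComponent.ind with
        | h v =>
          rw [SimpleGraph.ConnectedComponent.eq]
          by_cases hv : v.1 = Sum.inr i
          · have : v = ⟨_, hmem _ hi⟩ := Subtype.ext hv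
            rw [this]
          · have hvu : v.1 ∉ u := by
              have := v.2
              simpa using this
            exact (hKadj _ _ hi hvu (hr i _ hv)).symm.reachable
      have hsub : K.oddComponents.ncard ≤ 1 := by
        rw [Set.ncard_le_one_iff]
        intro a b _ _
        rw [hall a, hall b]
      have hu0 : u.ncard = 0 := by omega
      rw [Set.ncard_eq_zero] at hu0
      have h1 : K.oddComponents.ncard = 1 := by omega
      have h2 : Odd K.oddComponents.ncard := by rw [h1]; exact odd_one
      rw [SimpleGraph.odd_ncard_oddComponents] at h2
      have h3 : Nat.card ((⊤ : HP.Subgraph).deleteVerts u).verts = Fintype.card P + d := by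
        subst hu0
        simp
      rw [h3] at h2
      exact (Nat.not_odd_iff_even.2 hev) h2
    let κ : P → Option K.ConnectedComponent := fun x =>
      if h : Sum.inl x ∉ u then some (K.connectedComponentMk ⟨_, hmem _ h⟩) else none
    let Y : Finset P := Finset.univ.filter fun x => Sum.inl x ∈ u
    have hYc : u.ncard = Y.card + d := by
      have : u = ((Y.map Function.Embedding.inl ∪
          Finset.univ.map (Function.Embedding.inr : Fin d ↪ P ⊕ Fin d) : Finset (P ⊕ Fin d)) :
          Set (P ⊕ Fin d)) := by
        ext a
        cases a with
        | inl x => simp [Y]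
        | inr i => simp [hDu i]
      rw [this, Set.ncard_coe_finset, Finset.card_union_of_disjoint]
      · simp
      · rw [Finset.disjoint_left]
        simp
    refine ⟨Y, Option K.ConnectedComponent, κ,
      (Set.toFinite K.oddComponents).toFinset.map Function.Embedding.some, ?_, ?_, ?_⟩
    · intro x y hx hy h
      have hx' : Sum.inl x ∉ u := by simpa [Y] using hx
      have hy' : Sum.inl y ∉ u := by simpa [Y] using hy
      simp only [κ, hx', hy', not_false_eq_true, dite_true]
      congr 1
      rw [SimpleGraph.ConnectedComponent.eq]
      exact (hKadj _ _ hx' hy' ((hl _ _).2 h)).reachable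
    · intro o ho
      simp only [Finset.mem_map, Set.Finite.mem_toFinset, Set.mem_setOf_eq] at ho
      obtain ⟨c, hc, rfl⟩ := ho
      have : c.supp.ncard = (Finset.univ.filter fun x => x ∉ Y ∧ κ x = some c).card := by
        rw [← Set.ncard_coe_finset]
        symm
        apply Set.ncard_congr (fun x _ => if h : Sum.inl x ∉ u then (⟨_, hmem (Sum.inl x) h⟩ :
          ((⊤ : HP.Subgraph).deleteVerts u).verts) else c.out)
        · intro x hx
          simp only [Finset.coe_filter, Finset.mem_univ, true_and, Set.mem_setOf_eq, Y,
            Finset.mem_filter] at hx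
          obtain ⟨h1, h2⟩ := hx
          simp only [κ, h1, not_false_eq_true, dite_true, Option.some.injEq] at h2 ⊢
          exact h2
        · intro x y hx hy h
          simp only [Finset.coe_filter, Finset.mem_univ, true_and, Set.mem_setOf_eq, Y,
            Finset.mem_filter] at hx hy
          simpa [hx.1, hy.1] using h
        · intro v hv
          have hvu : v.1 ∉ u := by simpa using v.2
          obtain ⟨a, ha⟩ := v
          cases a with
          | inr i => exact absurd (hDu i) hvu
          | inl x =>
            refine ⟨x, ?_, ?_⟩
            · simp only [Finset.coe_filter, Finset.mem_univ, true_and, Set.mem_setOf_eq, Y,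
                Finset.mem_filter]
              refine ⟨hvu, ?_⟩
              simp only [κ]
              rw [dif_pos hvu]
              congr 1
            · simp only at hvu
              simp [hvu]
      have hc' : Odd c.supp.ncard := hc
      rw [this] at hc'
      simpa using hc'
    · rw [Finset.card_map, ← Set.ncard_eq_toFinset_card, ← hYc]
      exact hu

/-- Total weight of a walk. -/
def wt {V : Type} {G : SimpleGraph V} (τ : V → V → ZMod 2) : ∀ {a b : V}, G.Walk a b → ZMod 2
  | _, _, .nil => 0
  | u, _, .cons (v := v) _ p => τ u v + wt τ p

/-- A certificate that no large family of breaking paths exists. -/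
structure IsCert {V : Type} (G : SimpleGraph V) (τ : V → V → ZMod 2) (X : Finset V) (U : Set V)
    (r : V → Option V) (χ : V → ZMod 2) : Prop where
  disj : ∀ v ∈ U, v ∉ X
  mem : ∀ v u, r v = some u → u ∈ U
  edge : ∀ u v, G.Adj u v → u ∉ X → v ∉ X →
    (u ∈ U ∧ v ∈ U ∧ χ u + χ v = τ u v) ∨ (u ∈ U ∧ v ∉ U ∧ r v = some u) ∨
    (u ∉ U ∧ v ∈ U ∧ r u = some v) ∨ (u ∉ U ∧ v ∉ U ∧ r u = r v)

/-- A family of pairwise disjoint breaking paths. -/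
structure IsFamily {V : Type} (G : SimpleGraph V) (τ : V → V → ZMod 2) (T : Finset V) {k : ℕ}
    (a b : Fin k → V) (p : ∀ i, G.Walk (a i) (b i)) : Prop where
  isPath : ∀ i, (p i).IsPath
  left : ∀ i, a i ∈ T
  right : ∀ i, b i ∈ T
  wt_eq : ∀ i, wt τ (p i) = 1
  inner : ∀ i, ∀ v ∈ (p i).support, v ∈ T → v = a i ∨ v = b i
  ne : ∀ i, a i ≠ b i
  disj : ∀ i j, i ≠ j → ∀ v ∈ (p i).support, v ∉ (p j).support

theorem zmod2_eq_of_ne {a b : ZMod 2} (h : a ≠ b) : a = b + 1 := by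
  revert a b; decide

theorem zmod2_cases (a : ZMod 2) : a = 0 ∨ a = 1 := by
  revert a; decide

theorem wt_mapLe {V : Type} {G G' : SimpleGraph V} (h : G ≤ G') (τ : V → V → ZMod 2) {a b : V}
    (p : G.Walk a b) : wt τ (p.mapLe h) = wt τ p := by
  induction p with
  | nil => rfl
  | cons hh p ih =>
    simp only [Walk.mapLe, Walk.map_cons, wt] at ih ⊢
    rw [ih]; rfl

/-- auxiliary graph for signed paths -/
def auxG {V : Type} (G : SimpleGraph V) (τ : V → V → ZMod 2) (hτ : ∀ u v, τ u v = τ v u)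
    (T : Finset V) : SimpleGraph (V × ZMod 2) where
  Adj x y := (x.1 = y.1 ∧ x.2 ≠ y.2 ∧ x.1 ∉ T) ∨
    (G.Adj x.1 y.1 ∧ y.2 = x.2 + τ x.1 y.1 + 1 ∧ (x.1 ∈ T → x.2 = 0) ∧ (y.1 ∈ T → y.2 = 0))
  symm := ⟨by
    rintro ⟨u, i⟩ ⟨v, j⟩ (⟨h1, h2, h3⟩ | ⟨h1, h2, h3, h4⟩)
    · simp only at *; subst h1; exact Or.inl ⟨rfl, h2.symm, h3⟩
    · refine Or.inr ⟨h1.symm, ?_, h4, h3⟩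
      simp only at *
      rw [hτ v u, h2]; grind⟩
  loopless := ⟨by
    rintro ⟨u, i⟩ (⟨h1, h2, h3⟩ | ⟨h1, h2⟩)
    · exact h2 rfl
    · exact G.loopless.irrefl _ h1⟩

theorem aux_wt {V : Type} {G : SimpleGraph V} {τ : V → V → ZMod 2} {hτ : ∀ u v, τ u v = τ v u}
    {T : Finset V} {Γ : SimpleGraph V}
    {μ : V × ZMod 2 → Option (V × ZMod 2)}
    (hμ : ∀ x y, μ x = some y → μ y = some x ∧ (auxG G τ hτ T).Adj x y)
    (hΓ : ∀ u v, Γ.Adj u v → u ≠ v ∧ ∃ i j, μ (u, i) = some (v, j))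
    {u b : V} (p : Γ.Walk u b) (hp : p.IsPath) (hb : b ∈ T) (i : ZMod 2)
    (hi : ∀ v, (h : Γ.Adj u v) → ∀ q : Γ.Walk v b, p = .cons h q → ∃ j, μ (u, i) = some (v, j))
    (hn : u ≠ b) :
    wt τ p = 1 + i := by
  induction p generalizing i with
  | nil => exact absurd rfl hn
  | @cons u v b h p ih =>
    obtain ⟨j, hj⟩ := hi v h p rfl
    have hne := (hΓ _ _ h).1
    have had := (hμ _ _ hj).2
    have hjj : j = i + τ u v + 1 ∧ (v ∈ T → j = 0) := by
      rcases had with ⟨h1, _⟩ | ⟨_, h2, _, h3⟩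
      · exact absurd h1 hne
      · exact ⟨h2, h3⟩
    simp only [wt]
    rw [Walk.cons_isPath_iff] at hp
    by_cases hvb : v = b
    · subst hvb
      have : p = .nil := by
        have := hp.1
        exact (Walk.isPath_iff_nil.1 this).eq_nil
      subst this
      have := hjj.2 hb
      simp only [wt]
      rw [hjj.1] at this
      grind
    · have := ih hp.1 hb (j + 1) ?_ hvb
      · rw [this, hjj.1]
        grind
      · rintro w hw q rfl
        obtain ⟨i', j', hij⟩ := (hΓ _ _ hw).2
        have hne : i' ≠ j := by
          rintro rfl
          have h1 := (hμ _ _ hj).1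
          rw [h1] at hij
          have : u = w := by simpa using congrArg (Option.map Prod.fst) hij
          apply hp.2
          simp [this]
        rw [← zmod2_eq_of_ne hne]
        exact ⟨j', hij⟩

open scoped Classical in
theorem deg_bound {V : Type} [Fintype V] (Γ : SimpleGraph V) (T : Finset V)
    (hconn : Γ.Connected) (h2 : ∀ v, Γ.degree v ≤ 2) (h1 : ∀ v ∈ T, Γ.degree v ≤ 1) : T.card ≤ 2 := by
  have hE := hconn.card_vert_le_card_edgeSet_add_one
  have hs := Γ.sum_degrees_eq_twice_card_edges
  have : ∑ v, Γ.degree v + T.card ≤ 2 * Fintype.card V := by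
    have : ∑ v, (Γ.degree v + if v ∈ T then 1 else 0) ≤ ∑ _v : V, 2 := by
      apply Finset.sum_le_sum
      intro v _
      split_ifs with h
      · have := h1 v h; omega
      · simpa using h2 v
    simp only [Finset.sum_add_distrib, Finset.sum_const, smul_eq_mul, Finset.sum_boole] at this
    simp only [Finset.filter_mem_eq_inter, Finset.univ_inter, Finset.card_univ] at this
    simp at this; omega
  rw [Nat.card_eq_fintype_card, Nat.card_eq_fintype_card, ← edgeFinset_card] at hE
  omega

open scoped Classical in
theorem even_matched {P : Type} [Fintype P] (μ : P → Option P)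
    (hμ : ∀ x y, μ x = some y → μ y = some x ∧ x ≠ y) (Q : Finset P)
    (hQ : ∀ x y, μ x = some y → x ∈ Q → y ∈ Q) :
    Even (Q.filter fun x => μ x ≠ none).card := by
  have key : ∑ x ∈ Q.filter fun x => μ x ≠ none, (1 : ZMod 2) = 0 := by
    apply Finset.sum_involution (fun x _ => (μ x).getD x)
    · intro a _; decide
    · intro a ha _
      rw [Finset.mem_filter, Option.ne_none_iff_exists'] at ha
      obtain ⟨_, y, hy⟩ := ha
      rw [hy]; exact (hμ _ _ hy).2.symm
    · intro a ha
      rw [Finset.mem_filter, Option.ne_none_iff_exists'] at ha ⊢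
      obtain ⟨h, y, hy⟩ := ha
      rw [hy]; exact ⟨hQ _ _ hy h, a, (hμ _ _ hy).1⟩
    · intro a ha
      rw [Finset.mem_filter, Option.ne_none_iff_exists'] at ha
      obtain ⟨h, y, hy⟩ := ha
      simp [hy, (hμ _ _ hy).1]
  rw [Finset.sum_const, nsmul_one] at key
  exact (ZMod.natCast_eq_zero_iff_even).1 key

open scoped Classical in
theorem matching_case {V : Type} [Fintype V] (G : SimpleGraph V) (τ : V → V → ZMod 2)
    (hτ : ∀ u v, τ u v = τ v u) (T : Finset V) (k : ℕ) (hk : 2 * k ≤ T.card)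
    (μ : V × ZMod 2 → Option (V × ZMod 2))
    (hμ : ∀ x y, μ x = some y → μ y = some x ∧ (auxG G τ hτ T).Adj x y)
    (hd : (Finset.univ.filter fun x => μ x = none).card ≤ 2 * T.card - 2 * k) :
    ∃ (a b : Fin k → V) (p : ∀ i, G.Walk (a i) (b i)), IsFamily G τ T a b p := by
  let Γ : SimpleGraph V :=
    { Adj := fun u v => u ≠ v ∧ ∃ i j, μ (u, i) = some (v, j)
      symm := ⟨fun u v ⟨h, i, j, hij⟩ => ⟨h.symm, j, i, (hμ _ _ hij).1⟩⟩
      loopless := ⟨fun u h => h.1 rfl⟩ }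
  have hΓ : ∀ u v, Γ.Adj u v → u ≠ v ∧ ∃ i j, μ (u, i) = some (v, j) := fun u v h => h
  have hΓG : Γ ≤ G := by
    rintro u v ⟨h, i, j, hij⟩
    rcases (hμ _ _ hij).2 with ⟨h1, _⟩ | ⟨h1, _⟩
    · exact absurd h1 h
    · exact h1
  have hT1 : ∀ s ∈ T, μ (s, 1) = none := by
    intro s hs
    by_contra h
    obtain ⟨y, hy⟩ := Option.ne_none_iff_exists'.1 h
    rcases (hμ _ _ hy).2 with ⟨_, _, h1⟩ | ⟨_, _, h1, _⟩
    · exact h1 hs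
    · exact absurd (h1 hs) (one_ne_zero (α := ZMod 2))
  have hdeg2 : ∀ v, Γ.degree v ≤ 2 := by
    intro v
    have : Γ.neighborFinset v ⊆ Finset.univ.image (fun i : ZMod 2 => ((μ (v, i)).map Prod.fst).getD v) := by
      intro w hw
      rw [mem_neighborFinset] at hw
      obtain ⟨_, i, j, hij⟩ := hw
      simp only [Finset.mem_image, Finset.mem_univ, true_and]
      exact ⟨i, by simp [hij]⟩
    calc Γ.degree v ≤ _ := Finset.card_le_card this
      _ ≤ _ := Finset.card_image_le
      _ = 2 := by simp [ZMod.card]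
  have hdeg1 : ∀ v ∈ T, Γ.degree v ≤ 1 := by
    intro v hv
    have : Γ.neighborFinset v ⊆ {((μ (v, 0)).map Prod.fst).getD v} := by
      intro w hw
      rw [mem_neighborFinset] at hw
      obtain ⟨_, i, j, hij⟩ := hw
      rcases zmod2_cases i with rfl | rfl
      · simp [hij]
      · rw [hT1 v hv] at hij; simp at hij
    calc Γ.degree v ≤ _ := Finset.card_le_card this
      _ = 1 := by simp
  let t : Γ.ConnectedComponent → ℕ := fun K => (T.filter fun v => Γ.connectedComponentMk v = K).card
  have ht2 : ∀ K, t K ≤ 2 := by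
    intro K
    have hc := K.connected_toSimpleGraph
    let T' : Finset K := Finset.univ.filter fun v => v.1 ∈ T
    have hdle : ∀ v : K, (K.toSimpleGraph).degree v ≤ Γ.degree v.1 := by
      intro v
      rw [← card_neighborFinset_eq_degree, ← card_neighborFinset_eq_degree]
      apply Finset.card_le_card_of_injOn Subtype.val
      · intro w hw
        simp only [Finset.mem_coe, mem_neighborFinset] at hw ⊢
        exact hw
      · exact Subtype.val_injective.injOn
    have := deg_bound K.toSimpleGraph T' hc (fun v => (hdle v).trans (hdeg2 _))
      (fun v hv => (hdle v).trans (hdeg1 _ (by simpa [T'] using hv)))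
    refine le_trans ?_ this
    apply Finset.card_le_card_of_injOn (fun v => if h : v ∈ K.supp then (⟨v, h⟩ : K) else ⟨_, K.nonempty_supp.some_mem⟩)
    · intro v hv
      simp only [Finset.coe_filter, Set.mem_ofPred_eq] at hv
      have h : v ∈ K.supp := by rw [ConnectedComponent.mem_supp_iff]; exact hv.2
      simp [T', h, hv.1]
    · intro v hv w hw hvw
      simp only [Finset.coe_filter, Set.mem_ofPred_eq] at hv hw
      simpa [ConnectedComponent.mem_supp_iff, hv.2, hw.2] using hvw
  let un : Γ.ConnectedComponent → ℕ := fun K =>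
    (Finset.univ.filter fun x : V × ZMod 2 => μ x = none ∧ Γ.connectedComponentMk x.1 = K).card
  have hsumT : ∑ K, t K = T.card :=
    (Finset.card_eq_sum_card_fiberwise (fun _ _ => Finset.mem_coe.2 (Finset.mem_univ _))).symm
  have hsumU : ∑ K, un K = (Finset.univ.filter fun x => μ x = none).card := by
    rw [Finset.card_eq_sum_card_fiberwise (f := fun x => Γ.connectedComponentMk x.1)
      (t := Finset.univ) (fun _ _ => Finset.mem_coe.2 (Finset.mem_univ _))]
    simp [un, Finset.filter_filter]
  have hun : ∀ K, t K ≤ un K := by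
    intro K
    apply Finset.card_le_card_of_injOn (fun v => (v, (1 : ZMod 2)))
    · intro v hv
      simp only [Finset.coe_filter, Set.mem_ofPred_eq] at hv
      simp [hv.2, hT1 v hv.1]
    · intro v _ w _ h; simpa using h
  have heven : ∀ K, Even (un K) := by
    intro K
    have h1 := even_matched μ (fun x y h => ⟨(hμ x y h).1, (hμ x y h).2.ne⟩)
      (Finset.univ.filter fun x : V × ZMod 2 => Γ.connectedComponentMk x.1 = K) (by
        rintro ⟨u, i⟩ ⟨v, j⟩ h hx
        simp only [Finset.mem_filter, Finset.mem_univ, true_and] at hx ⊢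
        by_cases huv : u = v
        · rw [← huv]; exact hx
        · rw [← hx]
          have : Γ.Adj u v := ⟨huv, i, j, h⟩
          exact (ConnectedComponent.connectedComponentMk_eq_of_adj this).symm)
    have h2 : Even (Finset.univ.filter fun x : V × ZMod 2 => Γ.connectedComponentMk x.1 = K).card := by
      have : (Finset.univ.filter fun x : V × ZMod 2 => Γ.connectedComponentMk x.1 = K) =
        (Finset.univ.filter fun v => Γ.connectedComponentMk v = K) ×ˢ Finset.univ := by
          ext ⟨x, i⟩; simp
      rw [this, Finset.card_product]
      simp [ZMod.card]
    have h3 := Finset.card_filter_add_card_filter_not (s := Finset.univ.filter fun x : V × ZMod 2 => Γ.connectedComponentMk x.1 = K) (fun x => μ x = none)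
    have h4 : un K = ((Finset.univ.filter fun x : V × ZMod 2 => Γ.connectedComponentMk x.1 = K).filter (fun x => μ x = none)).card := by
      simp only [un, Finset.filter_filter]
      congr 1; ext x; simp [and_comm]
    rw [← h4] at h3
    rw [← h3] at h2
    exact (Nat.even_add.1 h2).2 h1
  have hcount : k ≤ (Finset.univ.filter fun K => t K = 2).card := by
    have : ∑ K, 2 * t K ≤ ∑ K, (un K + 2 * if t K = 2 then 1 else 0) := by
      apply Finset.sum_le_sum
      intro K _
      have h1 := ht2 K
      have h2 := hun K
      obtain ⟨e, he⟩ := heven K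
      split_ifs <;> omega
    rw [← Finset.mul_sum, Finset.sum_add_distrib, ← Finset.mul_sum, hsumT, hsumU] at this
    simp only [Finset.sum_boole, Nat.cast_id] at this
    omega
  obtain ⟨e⟩ : Nonempty (Fin k ↪ (Finset.univ.filter fun K => t K = 2)) := by
    rw [Function.Embedding.nonempty_iff_card_le, Fintype.card_fin, Fintype.card_coe]; exact hcount
  have hab : ∀ i, ∃ a b, a ≠ b ∧ (T.filter fun v => Γ.connectedComponentMk v = (e i).1) = {a, b} := by
    intro i
    have := (e i).2
    simp only [Finset.mem_filter, Finset.mem_univ, true_and] at this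
    exact Finset.card_eq_two.1 this
  choose a b hne hab using hab
  have ha : ∀ i, a i ∈ T ∧ Γ.connectedComponentMk (a i) = (e i).1 := by
    intro i; rw [← Finset.mem_filter (p := fun v => Γ.connectedComponentMk v = (e i).1), hab]; simp
  have hb : ∀ i, b i ∈ T ∧ Γ.connectedComponentMk (b i) = (e i).1 := by
    intro i; rw [← Finset.mem_filter (p := fun v => Γ.connectedComponentMk v = (e i).1), hab]; simp
  have hp : ∀ i, ∃ p : Γ.Walk (a i) (b i), p.IsPath := by
    intro i
    have : Γ.Reachable (a i) (b i) := ConnectedComponent.exact ((ha i).2.trans (hb i).2.symm)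
    obtain ⟨p⟩ := this
    exact ⟨p.toPath.1, p.toPath.2⟩
  choose p hp using hp
  have hcomp : ∀ i, ∀ v ∈ (p i).support, Γ.connectedComponentMk v = (e i).1 := by
    intro i v hv
    rw [← (ha i).2]
    exact (ConnectedComponent.sound ⟨(p i).takeUntil v hv⟩).symm
  refine ⟨a, b, fun i => (p i).mapLe hΓG, ⟨?_, fun i => (ha i).1, fun i => (hb i).1, ?_, ?_, hne, ?_⟩⟩
  · intro i; exact (Walk.isPath_mapLe hΓG).2 (hp i)
  · intro i
    rw [wt_mapLe]
    have := aux_wt hμ hΓ (p i) (hp i) (hb i).1 0 ?_ (hne i)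
    · simpa using this
    · intro v h q _
      obtain ⟨_, j, j', hj⟩ := hΓ _ _ h
      rcases zmod2_cases j with rfl | rfl
      · exact ⟨j', hj⟩
      · rw [hT1 _ (ha i).1] at hj; simp at hj
  · intro i v hv hvT
    rw [Walk.support_mapLe_eq_support] at hv
    have : v ∈ T.filter fun v => Γ.connectedComponentMk v = (e i).1 := by
      simp [hvT, hcomp i v hv]
    rw [hab] at this
    simpa using this
  · intro i j hij v hv hv'
    rw [Walk.support_mapLe_eq_support] at hv hv'
    have := (hcomp i v hv).symm.trans (hcomp j v hv')
    exact hij (e.injective (Subtype.ext this))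

theorem zsum2 (f : ZMod 2 → ℕ) : ∑ i, f i = f 0 + f 1 :=
  Fin.sum_univ_two (fun i : Fin 2 => f i)

open scoped Classical in
theorem violator_case {V : Type} [Fintype V] (G : SimpleGraph V) (τ : V → V → ZMod 2)
    (hτ : ∀ u v, τ u v = τ v u) (T : Finset V) (k : ℕ) (hk : 2 * k ≤ T.card)
    (Y : Finset (V × ZMod 2)) {ι : Type} (κ : V × ZMod 2 → ι) (O : Finset ι)
    (hκ : ∀ x y, x ∉ Y → y ∉ Y → (auxG G τ hτ T).Adj x y → κ x = κ y)
    (hO : ∀ o ∈ O, Odd (Finset.univ.filter fun x => x ∉ Y ∧ κ x = o).card)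
    (hlt : Y.card + (2 * T.card - 2 * k) < O.card) :
    ∃ (X : Finset V) (U : Set V) (r : V → Option V) (χ : V → ZMod 2), X.card ≤ 2 * k ∧
      IsCert G τ X U r χ ∧ ∀ t ∈ T, t ∉ X → t ∈ U ∧ χ t = 0 := by
  let c : V → ZMod 2 := fun v => if v ∈ T then 0 else if (v, 0) ∈ Y then 1 else 0
  let X0 : Finset V := Finset.univ.filter fun v => (v, 0) ∈ Y ∧ (v ∈ T ∨ (v, 1) ∈ Y)
  let vB : Finset V := Finset.univ.filter fun v => (v, c v) ∉ Y ∧ (v ∈ T ∨ (v, c v + 1) ∈ Y)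
  let T1 : Finset V := T.filter fun v => (v, 1) ∉ Y
  have hc1 : ∀ v ∈ T, c v = 0 := fun v hv => by simp [c, hv]
  have hcard : Y.card + T1.card = 2 * X0.card + vB.card := by
    have hY : Y.card = ∑ v : V, ((if (v, 0) ∈ Y then 1 else 0) + (if (v, 1) ∈ Y then 1 else 0)) := by
      have : Y.card = ∑ x : V × ZMod 2, if x ∈ Y then 1 else 0 := by simp
      rw [this, Fintype.sum_prod_type]
      apply Finset.sum_congr rfl
      intro v _
      exact zsum2 _
    rw [hY]
    simp only [X0, vB, T1, Finset.card_filter, Finset.mul_sum]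
    rw [← Finset.sum_filter_add_sum_filter_not Finset.univ (fun v => v ∈ T)] 
    have hT : Finset.univ.filter (fun v => v ∈ T) = T := by ext; simp
    simp only [← Finset.sum_add_distrib]
    rw [← Finset.sum_filter_add_sum_filter_not Finset.univ (fun v => v ∈ T) (f := fun v => (2 * (if (v, 0) ∈ Y ∧ (v ∈ T ∨ (v, 1) ∈ Y) then 1 else 0) + if (v, c v) ∉ Y ∧ (v ∈ T ∨ (v, c v + 1) ∈ Y) then 1 else 0))]
    rw [hT, add_right_comm, ← Finset.sum_add_distrib]
    congr 1
    · apply Finset.sum_congr rfl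
      intro v hv
      simp only [hv, hc1 v hv]
      by_cases h0 : (v, (0 : ZMod 2)) ∈ Y <;> by_cases h1 : (v, (1 : ZMod 2)) ∈ Y <;> simp [h0, h1]
    · apply Finset.sum_congr rfl
      intro v hv
      have hv : v ∉ T := by simpa using hv
      have h11 : (1 : ZMod 2) + 1 = 0 := rfl
      by_cases h0 : (v, (0 : ZMod 2)) ∈ Y <;> by_cases h1 : (v, (1 : ZMod 2)) ∈ Y <;> simp [h0, h1, c, hv, h11]
  have hboth : ∀ v, v ∉ X0 → v ∉ vB → v ∉ T ∧ (∀ i, (v, i) ∉ Y) ∧ ∀ i, κ (v, i) = κ (v, 0) := by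
    intro v h1 h2
    simp only [X0, vB, Finset.mem_filter, Finset.mem_univ, true_and, not_and_or, not_or, not_not] at h1 h2
    have hvT : v ∉ T := by
      intro hv
      rw [hc1 v hv] at h2
      tauto
    have h11 : (1 : ZMod 2) + 1 = 0 := rfl
    have hY : ∀ i, (v, i) ∉ Y := by
      simp only [c, hvT, if_false] at h2
      have hh : (v, (0 : ZMod 2)) ∉ Y ∧ (v, (1 : ZMod 2)) ∉ Y := by
        by_cases h0 : (v, (0 : ZMod 2)) ∈ Y <;> simp [h0, h11] at h2 h1 ⊢ <;> tauto
      intro i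
      rcases zmod2_cases i with rfl | rfl
      · exact hh.1
      · exact hh.2
    refine ⟨hvT, hY, fun i => ?_⟩
    by_cases hi : i = 0
    · rw [hi]
    · exact hκ _ _ (hY _) (hY _) (Or.inl ⟨rfl, hi, hvT⟩)
  have hOsub : O ⊆ vB.image (fun v => κ (v, c v)) ∪ T1.image (fun v => κ (v, 1)) := by
    intro o ho
    by_contra hcon
    simp only [Finset.mem_union, Finset.mem_image, not_or, not_exists, not_and] at hcon
    have hodd := hO o ho
    have hall : ∀ v i, (v, i) ∉ Y → κ (v, i) = o → v ∉ X0 ∧ v ∉ vB := by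
      intro v i hvi hvo
      have hvB : v ∉ vB := by
        intro hv
        have hh := hcon.1 v hv
        simp only [vB, Finset.mem_filter, Finset.mem_univ, true_and] at hv
        by_cases hic : i = c v
        · exact hh (hic ▸ hvo)
        · have := zmod2_eq_of_ne hic
          rcases hv.2 with h | h
          · rw [hc1 v h, zero_add] at this
            subst this
            exact hcon.2 v (by simp [T1, h, hvi]) hvo
          · exact hvi (this ▸ h)
      refine ⟨?_, hvB⟩
      intro hv
      simp only [X0, Finset.mem_filter, Finset.mem_univ, true_and] at hv
      rcases zmod2_cases i with rfl | rfl
      · exact hvi hv.1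
      · rcases hv.2 with h | h
        · exact hcon.2 v (by simp [T1, h, hvi]) hvo
        · exact hvi h
    have : (Finset.univ.filter fun x => x ∉ Y ∧ κ x = o) =
        (Finset.univ.filter fun v => (v, 0) ∉ Y ∧ κ (v, 0) = o) ×ˢ Finset.univ := by
      ext ⟨v, i⟩
      simp only [Finset.mem_filter, Finset.mem_univ, true_and, Finset.mem_product, and_true]
      constructor
      · rintro ⟨h1, h2⟩
        obtain ⟨h3, h4⟩ := hall v i h1 h2
        have := hboth v h3 h4
        exact ⟨this.2.1 0, (this.2.2 i).symm.trans h2⟩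
      · rintro ⟨h1, h2⟩
        obtain ⟨h3, h4⟩ := hall v 0 h1 h2
        have := hboth v h3 h4
        exact ⟨this.2.1 i, (this.2.2 i).trans h2⟩
    rw [this, Finset.card_product] at hodd
    simp [ZMod.card] at hodd
    exact (Nat.not_even_iff_odd.2 hodd) (by simp)
  have hOcard : O.card ≤ (vB.image (fun v => κ (v, c v))).card + T1.card :=
    (Finset.card_le_card hOsub).trans ((Finset.card_union_le _ _).trans
      (Nat.add_le_add_left Finset.card_image_le _))
  let rep : ι → Option V := fun o => if h : ∃ v ∈ vB, κ (v, c v) = o then some h.choose else none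
  have hrep : ∀ v ∈ vB, ∃ w ∈ vB, rep (κ (v, c v)) = some w ∧ κ (w, c w) = κ (v, c v) := by
    intro v hv
    have h : ∃ w ∈ vB, κ (w, c w) = κ (v, c v) := ⟨v, hv, rfl⟩
    exact ⟨h.choose, h.choose_spec.1, by simp only [rep]; rw [dif_pos h], h.choose_spec.2⟩
  let U : Finset V := vB.filter fun v => rep (κ (v, c v)) = some v
  have hUcard : (vB.image (fun v => κ (v, c v))).card ≤ U.card := by
    have : vB.image (fun v => κ (v, c v)) ⊆ U.image (fun v => κ (v, c v)) := by
      intro o ho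
      obtain ⟨v, hv, rfl⟩ := Finset.mem_image.1 ho
      obtain ⟨w, hw, h1, h2⟩ := hrep v hv
      refine Finset.mem_image.2 ⟨w, ?_, h2⟩
      simp only [U, Finset.mem_filter]
      exact ⟨hw, by rw [h2, h1]⟩
    exact (Finset.card_le_card this).trans Finset.card_image_le
  have hUvB : U ⊆ vB := Finset.filter_subset _ _
  have hT1c : T1.card ≤ T.card := Finset.card_filter_le _ _
  have hXc : (X0 ∪ (vB \ U)).card ≤ 2 * k := by
    have h1 := Finset.card_union_le X0 (vB \ U)
    have h2 := Finset.card_sdiff_add_card_eq_card hUvB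
    omega
  have hX0vB : ∀ v ∈ vB, v ∉ X0 := by
    intro v hv
    simp only [vB, X0, Finset.mem_filter, Finset.mem_univ, true_and] at hv ⊢
    by_cases hvT : v ∈ T
    · rw [hc1 v hvT] at hv; tauto
    · by_cases h0 : (v, (0 : ZMod 2)) ∈ Y
      · simp only [c, hvT, h0, if_true, if_false] at hv; tauto
      · tauto
  have hUY : ∀ v ∈ U, (v, c v) ∉ Y ∧ (v ∈ T → c v = 0) := by
    intro v hv
    have := hUvB hv
    simp only [vB, Finset.mem_filter, Finset.mem_univ, true_and] at this
    exact ⟨this.1, hc1 v⟩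
  have hUr : ∀ v ∈ U, rep (κ (v, c v)) = some v := fun v hv => (Finset.mem_filter.1 hv).2
  have hnotU : ∀ v, v ∉ X0 ∪ (vB \ U) → v ∉ U → v ∉ T ∧ (∀ i, (v, i) ∉ Y) ∧ ∀ i, κ (v, i) = κ (v, 0) := by
    intro v h1 h2
    simp only [Finset.mem_union, Finset.mem_sdiff, not_or, not_and, not_not] at h1
    exact hboth v h1.1 (fun h => h2 (h1.2 h))
  have hUn : ∀ u v, G.Adj u v → u ∈ U → v ∉ X0 ∪ (vB \ U) → v ∉ U → rep (κ (v, 0)) = some u := by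
    intro u v huv hu hvX hv
    have h3 := hUY u hu
    have h4 := hnotU v hvX hv
    rw [← hUr u hu, ← h4.2.2 (c u + τ u v + 1)]
    congr 1
    exact (hκ _ _ h3.1 (h4.2.1 _) (Or.inr ⟨huv, rfl, h3.2, fun h => absurd h h4.1⟩)).symm
  refine ⟨X0 ∪ (vB \ U), U, fun v => rep (κ (v, 0)), c, hXc, ⟨?_, ?_, ?_⟩, ?_⟩
  · intro v hv
    have hv : v ∈ U := hv
    simp only [Finset.mem_union, Finset.mem_sdiff, not_or, not_and, not_not]
    exact ⟨hX0vB v (hUvB hv), fun _ => hv⟩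
  · intro v u hvu
    simp only [rep] at hvu
    by_cases h : ∃ w ∈ vB, κ (w, c w) = κ (v, 0)
    · rw [dif_pos h, Option.some.injEq] at hvu
      subst hvu
      simp only [U, Finset.mem_coe, Finset.mem_filter]
      refine ⟨h.choose_spec.1, ?_⟩
      rw [h.choose_spec.2]
      simp only [rep]; rw [dif_pos h]
    · rw [dif_neg h] at hvu; exact absurd hvu (by simp)
  · intro u v huv huX hvX
    simp only [Finset.mem_coe]
    by_cases hu : u ∈ U <;> by_cases hv : v ∈ U
    · refine Or.inl ⟨hu, hv, ?_⟩
      by_contra hne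
      have h1 := zmod2_eq_of_ne hne
      have h2 : κ (u, c u) = κ (v, c v) := by
        apply hκ _ _ (hUY u hu).1 (hUY v hv).1
        refine Or.inr ⟨huv, ?_, (hUY u hu).2, (hUY v hv).2⟩
        simp only
        grind
      have h3 := hUr u hu
      rw [h2, hUr v hv] at h3
      exact huv.ne (Option.some.inj h3).symm
    · exact Or.inr (Or.inl ⟨hu, hv, hUn u v huv hu hvX hv⟩)
    · exact Or.inr (Or.inr (Or.inl ⟨hu, hv, hUn v u huv.symm hv huX hu⟩))
    · refine Or.inr (Or.inr (Or.inr ⟨hu, hv, ?_⟩))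
      have h3 := hnotU u huX hu
      have h4 := hnotU v hvX hv
      have := hκ (u, 0) (v, 0 + τ u v + 1) (h3.2.1 0) (h4.2.1 _) (Or.inr ⟨huv, rfl, fun h => absurd h h3.1, fun h => absurd h h4.1⟩)
      rw [this, h4.2.2]
  · intro t ht htX
    refine ⟨?_, hc1 t ht⟩
    by_contra hU
    exact (hnotU t htX hU).1 ht

theorem signed_paths {V : Type} [Fintype V] (G : SimpleGraph V) (τ : V → V → ZMod 2)
    (hτ : ∀ u v, τ u v = τ v u) (T : Finset V) (k : ℕ) :
    (∃ (a b : Fin k → V) (p : ∀ i, G.Walk (a i) (b i)), IsFamily G τ T a b p) ∨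
    ∃ (X : Finset V) (U : Set V) (r : V → Option V) (χ : V → ZMod 2), X.card ≤ 2 * k ∧
      IsCert G τ X U r χ ∧ ∀ t ∈ T, t ∉ X → t ∈ U ∧ χ t = 0 := by
  classical
  by_cases hk : 2 * k ≤ T.card
  · rcases tutteBerge (auxG G τ hτ T) (2 * T.card - 2 * k) (by
      rw [Fintype.card_prod, ZMod.card]
      rw [show 2 * T.card - 2 * k = (T.card - k) * 2 by omega, ← add_mul]
      exact even_two.mul_left _) with ⟨μ, h1, h2⟩ | ⟨Y, ι, κ, O, h1, h2, h3⟩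
    · left
      exact matching_case G τ hτ T k hk μ h1 (by convert h2)
    · right
      exact violator_case G τ hτ T k hk Y κ O h1 (by intro o ho; convert h2 o ho) h3
  · right
    refine ⟨T, ∅, fun _ => none, 0, by omega, ⟨by simp, by simp, by simp⟩, ?_⟩
    intro t h1 h2
    exact absurd h1 h2

/-- Reachability inside a set. -/
def Rch {V : Type} (G : SimpleGraph V) (s : Set V) : V → V → Prop :=
  Relation.ReflTransGen (fun x y => G.Adj x y ∧ x ∈ s ∧ y ∈ s)

theorem Rch.mono {V : Type} {G G' : SimpleGraph V} {s t : Set V} {a b : V} (h : Rch G s a b)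
    (hst : s ⊆ t) (hG : ∀ x ∈ s, ∀ y ∈ s, G.Adj x y → G'.Adj x y) : Rch G' t a b := by
  induction h with
  | refl => exact .refl
  | tail _ h ih => exact ih.tail ⟨hG _ h.2.1 _ h.2.2 h.1, hst h.2.1, hst h.2.2⟩

theorem Rch.symm {V : Type} {G : SimpleGraph V} {s : Set V} {a b : V} (h : Rch G s a b) :
    Rch G s b a := by
  induction h with
  | refl => exact .refl
  | tail _ h ih => exact Relation.ReflTransGen.head ⟨h.1.symm, h.2.2, h.2.1⟩ ih

theorem Rch.mem {V : Type} {G : SimpleGraph V} {s : Set V} {a b : V} (h : Rch G s a b)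
    (ha : a ∈ s) : b ∈ s := by
  induction h with
  | refl => exact ha
  | tail _ h ih => exact h.2.2

theorem Rch.of_adj {V : Type} {G : SimpleGraph V} {s : Set V} {a b : V} (h : G.Adj a b)
    (ha : a ∈ s) (hb : b ∈ s) : Rch G s a b := .single ⟨h, ha, hb⟩

theorem Rch.trans {V : Type} {G : SimpleGraph V} {s : Set V} {a b c : V} (h : Rch G s a b)
    (h' : Rch G s b c) : Rch G s a c := Relation.ReflTransGen.trans h h'

/-- Connected sets. -/
def SConn {V : Type} (G : SimpleGraph V) (s : Set V) : Prop := ∀ a ∈ s, ∀ b ∈ s, Rch G s a b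

theorem SConn.singleton {V : Type} (G : SimpleGraph V) (v : V) : SConn G {v} := by
  rintro a rfl b rfl; exact .refl

theorem SConn.of_center {V : Type} {G : SimpleGraph V} {s : Set V} (c : V)
    (h : ∀ a ∈ s, Rch G s a c) : SConn G s :=
  fun a ha b hb => (h a ha).trans (h b hb).symm

/-- A model of a complete graph. -/
structure IsModel {V : Type} (G : SimpleGraph V) (A : Set V) {m : ℕ} (ρ : Fin m → Set V) : Prop where
  sub : ∀ i, ρ i ⊆ A
  nonempty : ∀ i, (ρ i).Nonempty
  conn : ∀ i, SConn G (ρ i)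
  disj : ∀ i j, i ≠ j → Disjoint (ρ i) (ρ j)
  adj : ∀ i j, i ≠ j → ∃ x ∈ ρ i, ∃ y ∈ ρ j, G.Adj x y

theorem IsModel.trans {V : Type} {G G' : SimpleGraph V} {A A' : Set V} {m : ℕ} {ρ : Fin m → Set V}
    (h : IsModel G' A' ρ) (σ : V → Set V) (h1 : ∀ u ∈ A', σ u ⊆ A) (h2 : ∀ u ∈ A', u ∈ σ u)
    (h3 : ∀ u ∈ A', SConn G (σ u)) (h4 : ∀ u ∈ A', ∀ w ∈ A', u ≠ w → Disjoint (σ u) (σ w))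
    (h5 : ∀ u ∈ A', ∀ w ∈ A', G'.Adj u w → ∃ x ∈ σ u, ∃ y ∈ σ w, G.Adj x y) :
    IsModel G A (fun i => ⋃ u ∈ ρ i, σ u) where
  sub i := by
    intro x hx
    simp only [Set.mem_iUnion] at hx
    obtain ⟨u, hu, hx⟩ := hx
    exact h1 u (h.sub i hu) hx
  nonempty i := by
    obtain ⟨u, hu⟩ := h.nonempty i
    exact ⟨u, Set.mem_biUnion hu (h2 u (h.sub i hu))⟩
  conn i := by
    have hin : ∀ u ∈ ρ i, σ u ⊆ ⋃ u ∈ ρ i, σ u := fun u hu => Set.subset_biUnion_of_mem hu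
    have key : ∀ a b, Rch G' (ρ i) a b → a ∈ ρ i → Rch G (⋃ u ∈ ρ i, σ u) a b := by
      intro a b hab ha
      induction hab with
      | refl => exact .refl
      | @tail b c hab hbc ih =>
        refine ih.trans ?_
        obtain ⟨x, hx, y, hy, hxy⟩ := h5 b (h.sub i hbc.2.1) c (h.sub i hbc.2.2) hbc.1
        have e1 := (h3 b (h.sub i hbc.2.1) b (h2 _ (h.sub i hbc.2.1)) x hx).mono (hin b hbc.2.1) (fun _ _ _ _ h => h)
        have e2 := (h3 c (h.sub i hbc.2.2) y hy c (h2 _ (h.sub i hbc.2.2))).mono (hin c hbc.2.2) (fun _ _ _ _ h => h)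
        exact e1.trans ((Rch.of_adj hxy (hin b hbc.2.1 hx) (hin c hbc.2.2 hy)).trans e2)
    intro a ha b hb
    simp only [Set.mem_iUnion] at ha hb
    obtain ⟨u, hu, ha⟩ := ha
    obtain ⟨w, hw, hb⟩ := hb
    have e1 := (h3 u (h.sub i hu) a ha u (h2 _ (h.sub i hu))).mono (hin u hu) (fun _ _ _ _ h => h)
    have e2 := (h3 w (h.sub i hw) w (h2 _ (h.sub i hw)) b hb).mono (hin w hw) (fun _ _ _ _ h => h)
    exact e1.trans ((key u w (h.conn i u hu w hw) hu).trans e2)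
  disj i j hij := by
    simp only [Set.disjoint_iUnion_left, Set.disjoint_iUnion_right]
    intro u hu w hw
    apply h4 _ (h.sub i (by assumption)) _ (h.sub j (by assumption))
    rintro rfl
    exact Set.disjoint_left.1 (h.disj i j hij) (by assumption) (by assumption)
  adj i j hij := by
    obtain ⟨x, hx, y, hy, hxy⟩ := h.adj i j hij
    obtain ⟨x', hx', y', hy', h'⟩ := h5 x (h.sub i hx) y (h.sub j hy) hxy
    exact ⟨x', Set.mem_biUnion hx hx', y', Set.mem_biUnion hy hy', h'⟩

theorem IsModel.cons {V : Type} {G : SimpleGraph V} {A : Set V} {m : ℕ} {ρ : Fin m → Set V} {v : V}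
    (h : IsModel G {u | u ∈ A ∧ G.Adj v u} ρ) (hv : v ∈ A) :
    ∃ ρ' : Fin (m + 1) → Set V, IsModel G A ρ' := by
  refine ⟨Fin.cons {v} ρ, ?_, ?_, ?_, ?_, ?_⟩
  · intro i
    refine Fin.cases ?_ (fun i => ?_) i
    · simpa using hv
    · intro u hu; exact (h.sub i hu).1
  · intro i
    refine Fin.cases ?_ (fun i => ?_) i
    · simp
    · exact h.nonempty i
  · intro i
    refine Fin.cases ?_ (fun i => ?_) i
    · exact SConn.singleton G v
    · exact h.conn i
  · intro i j
    refine Fin.cases ?_ (fun i => ?_) i <;> refine Fin.cases ?_ (fun j => ?_) j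
    · intro h; exact absurd rfl h
    · intro _
      simp only [Fin.cons_zero, Fin.cons_succ, Set.disjoint_singleton_left]
      intro hh; exact (h.sub j hh).2.ne rfl
    · intro _
      simp only [Fin.cons_zero, Fin.cons_succ, Set.disjoint_singleton_right]
      intro hh; exact (h.sub i hh).2.ne rfl
    · intro hij
      exact h.disj i j (fun e => hij (by rw [e]))
  · intro i j
    refine Fin.cases ?_ (fun i => ?_) i <;> refine Fin.cases ?_ (fun j => ?_) j
    · intro h; exact absurd rfl h
    · intro _
      obtain ⟨u, hu⟩ := h.nonempty j
      exact ⟨v, rfl, u, hu, (h.sub j hu).2⟩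
    · intro _
      obtain ⟨u, hu⟩ := h.nonempty i
      exact ⟨u, hu, v, rfl, (h.sub i hu).2.symm⟩
    · intro hij
      exact h.adj i j (fun e => hij (by rw [e]))

/-- contraction of y onto x -/
def contr {V : Type} (G : SimpleGraph V) (x y : V) : SimpleGraph V where
  Adj u v := u ≠ v ∧ u ≠ y ∧ v ≠ y ∧ (G.Adj u v ∨ (u = x ∧ G.Adj y v) ∨ (v = x ∧ G.Adj y u))
  symm := ⟨fun u v ⟨h1, h2, h3, h4⟩ => ⟨h1.symm, h3, h2, by
    rcases h4 with h | h | h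
    · exact Or.inl h.symm
    · exact Or.inr (Or.inr h)
    · exact Or.inr (Or.inl h)⟩⟩
  loopless := ⟨fun u h => h.1 rfl⟩

open scoped Classical in
theorem contr_count {V : Type} (G : SimpleGraph V) (A : Finset V) (x y : V) (hx : x ∈ A) (hy : y ∈ A)
    (hxy : G.Adj x y) :
    ∑ u ∈ A, (A.filter (G.Adj u)).card ≤
      ∑ u ∈ A.erase y, ((A.erase y).filter ((contr G x y).Adj u)).card + 2 +
        2 * (A.filter fun u => G.Adj x u ∧ G.Adj y u).card := by
  have hxy' : x ∈ A.erase y := Finset.mem_erase.2 ⟨hxy.ne, hx⟩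
  rw [← Finset.add_sum_erase A _ hy, ← Finset.add_sum_erase _ _ hxy', ← Finset.add_sum_erase (A.erase y) _ hxy']
  have e1 : (A.filter (G.Adj y)).card + (A.filter (G.Adj x)).card ≤
      ((A.erase y).filter ((contr G x y).Adj x)).card + 2 + (A.filter fun u => G.Adj x u ∧ G.Adj y u).card := by
    have h1 : A.filter (G.Adj x) ∪ A.filter (G.Adj y) ⊆ insert x (insert y ((A.erase y).filter ((contr G x y).Adj x))) := by
      intro u hu
      simp only [Finset.mem_union, Finset.mem_filter, Finset.mem_insert, Finset.mem_erase, contr] at hu ⊢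
      by_cases h1 : u = x
      · exact Or.inl h1
      by_cases h2 : u = y
      · exact Or.inr (Or.inl h2)
      have := hxy.ne
      grind
    have h2 := Finset.card_le_card h1
    have h3 := Finset.card_union_add_card_inter (A.filter (G.Adj x)) (A.filter (G.Adj y))
    have h4 : A.filter (G.Adj x) ∩ A.filter (G.Adj y) = A.filter fun u => G.Adj x u ∧ G.Adj y u := by
      ext u; simp only [Finset.mem_inter, Finset.mem_filter]; tauto
    rw [h4] at h3
    have h5 := Finset.card_insert_le x (insert y ((A.erase y).filter ((contr G x y).Adj x)))
    have h6 := Finset.card_insert_le y ((A.erase y).filter ((contr G x y).Adj x))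
    omega
  have e2 : ∑ u ∈ (A.erase y).erase x, (A.filter (G.Adj u)).card ≤
      ∑ u ∈ (A.erase y).erase x, ((A.erase y).filter ((contr G x y).Adj u)).card +
       (A.filter fun u => G.Adj x u ∧ G.Adj y u).card := by
    have h1 : (A.filter fun u => G.Adj x u ∧ G.Adj y u).card =
      ∑ u ∈ (A.erase y).erase x, if G.Adj x u ∧ G.Adj y u then 1 else 0 := by
        rw [Finset.sum_boole, Nat.cast_id]
        congr 1
        ext u
        simp only [Finset.mem_filter, Finset.mem_erase]
        have := G.loopless.irrefl x
        have := G.loopless.irrefl y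
        grind
    rw [h1, ← Finset.sum_add_distrib]
    apply Finset.sum_le_sum
    intro u hu
    simp only [Finset.mem_erase] at hu
    by_cases hyu : G.Adj y u
    · have hyu' := hyu.symm
      by_cases hxu : G.Adj x u
      · simp only [hxu, hyu, and_self, if_true]
        have : A.filter (G.Adj u) ⊆ insert y ((A.erase y).filter ((contr G x y).Adj u)) := by
          intro w hw
          simp only [Finset.mem_filter, Finset.mem_insert, Finset.mem_erase, contr] at hw ⊢
          have := hw.2.ne
          grind
        exact (Finset.card_le_card this).trans (Finset.card_insert_le _ _)
      · simp only [hxu, false_and, if_false, add_zero]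
        have : insert x ((A.filter (G.Adj u)).erase y) ⊆ ((A.erase y).filter ((contr G x y).Adj u)) := by
          intro w hw
          simp only [Finset.mem_filter, Finset.mem_insert, Finset.mem_erase, contr] at hw ⊢
          rcases hw with rfl | hw
          · have := hxy.ne
            grind
          · have := hw.2.2.ne
            grind
        have := Finset.card_le_card this
        rw [Finset.card_insert_of_notMem (by
          simp only [Finset.mem_erase, Finset.mem_filter]
          intro h; exact hxu h.2.2.symm), Finset.card_erase_of_mem (by simp [hy, hyu'])] at this
        omega
    · simp only [hyu, and_false, if_false, add_zero]
      apply Finset.card_le_card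
      intro w hw
      simp only [Finset.mem_filter, Finset.mem_erase, contr] at hw ⊢
      have := hw.2.ne
      have : w ≠ y := by rintro rfl; exact hyu hw.2.symm
      grind
  omega

open scoped Classical in
theorem mader {V : Type} (m : ℕ) : ∀ (n : ℕ) (G : SimpleGraph V) (A : Finset V), A.card = n → A.Nonempty →
    2 ^ m * A.card ≤ ∑ u ∈ A, (A.filter (G.Adj u)).card → ∃ ρ : Fin m → Set V, IsModel G A ρ := by
  induction m with
  | zero => intro n G A _ _ _; exact ⟨fun i => i.elim0, ⟨fun i => i.elim0, fun i => i.elim0, fun i => i.elim0, fun i => i.elim0, fun i => i.elim0⟩⟩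
  | succ m ihm =>
    intro n
    induction n using Nat.strong_induction_on with
    | _ n ihn =>
      intro G A hn hA hd
      by_cases hc : ∃ x ∈ A, ∃ y ∈ A, G.Adj x y ∧ (A.filter fun u => G.Adj x u ∧ G.Adj y u).card < 2 ^ m
      · obtain ⟨x, hx, y, hy, hxy, hc⟩ := hc
        have hcc := contr_count G A x y hx hy hxy
        have hpos : 0 < A.card := hA.card_pos
        have hce := Finset.card_erase_of_mem hy
        obtain ⟨ρ, hρ⟩ := ihn (A.erase y).card (by omega) (contr G x y) (A.erase y) rfl
          ⟨x, Finset.mem_erase.2 ⟨hxy.ne, hx⟩⟩ (by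
            rw [hce, Nat.mul_sub, mul_one]
            have : 2 ^ (m + 1) = 2 * 2 ^ m := pow_succ' 2 m
            omega)
        refine ⟨_, hρ.trans (A := A) (G := G) (fun u => if u = x then {x, y} else {u}) ?_ ?_ ?_ ?_ ?_⟩
        · intro u hu w hw
          simp only [Finset.coe_erase, Set.mem_sdiff, Finset.mem_coe] at hu ⊢
          split_ifs at hw <;> grind
        · intro u _; split_ifs with h
          · simp [h]
          · simp
        · intro u _; split_ifs with h
          · apply SConn.of_center x
            rintro a (rfl | rfl)
            · exact .refl
            · exact Rch.of_adj hxy.symm (by simp) (by simp)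
          · exact SConn.singleton G u
        · intro u hu w hw huw
          have : u ≠ y := (Finset.mem_erase.1 hu).1
          have : w ≠ y := (Finset.mem_erase.1 hw).1
          rw [Set.disjoint_left]
          intro z
          split_ifs <;> grind
        · rintro u hu w hw ⟨h1, h2, h3, h4 | ⟨rfl, h4⟩ | ⟨rfl, h4⟩⟩
          · refine ⟨u, ?_, w, ?_, h4⟩ <;> split_ifs <;> simp_all
          · refine ⟨y, ?_, w, ?_, h4⟩ <;> split_ifs <;> simp_all
          · refine ⟨u, ?_, y, ?_, h4.symm⟩ <;> split_ifs <;> simp_all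
      · push Not at hc
        have hpos : 0 < ∑ u ∈ A, (A.filter (G.Adj u)).card :=
          lt_of_lt_of_le (Nat.mul_pos (by positivity) hA.card_pos) hd
        obtain ⟨v, hv, hvd⟩ := Finset.exists_ne_zero_of_sum_ne_zero hpos.ne'
        have hNe : (A.filter (G.Adj v)).Nonempty := Finset.card_ne_zero.1 hvd
        obtain ⟨ρ, hρ⟩ := ihm _ G (A.filter (G.Adj v)) rfl hNe (by
          rw [mul_comm, ← smul_eq_mul, ← Finset.sum_const]
          apply Finset.sum_le_sum
          intro u hu
          rw [Finset.mem_filter] at hu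
          refine (hc v hv u hu.1 hu.2).trans ?_
          rw [Finset.filter_filter])
        have : IsModel G {u | u ∈ (A : Set V) ∧ G.Adj v u} ρ := by
          convert hρ using 1
          ext; simp
        exact this.cons hv

/-- bichromatic edges -/
def bip {V : Type} (G : SimpleGraph V) (χ : V → ZMod 2) : SimpleGraph V where
  Adj u v := G.Adj u v ∧ χ u ≠ χ v
  symm := ⟨fun _ _ h => ⟨h.1.symm, h.2.symm⟩⟩
  loopless := ⟨fun _ h => h.2 rfl⟩

/-- bipartite complete minor inside A -/
def BipModel {V : Type} (G : SimpleGraph V) (A : Set V) (M : ℕ) : Prop :=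
  ∃ (χ : V → ZMod 2) (ρ : Fin M → Set V), IsModel (bip G χ) A ρ

open scoped Classical in
theorem max_cut {V : Type} (G : SimpleGraph V) (R : Finset V) : ∃ χ : V → ZMod 2,
    ∑ u ∈ R, (R.filter (G.Adj u)).card ≤ 2 * ∑ u ∈ R, (R.filter ((bip G χ).Adj u)).card := by
  induction R using Finset.induction_on with
  | empty => exact ⟨0, by simp⟩
  | insert x R hx ih =>
    obtain ⟨χ, hχ⟩ := ih
    have gen : ∀ K : SimpleGraph V, ∑ u ∈ insert x R, ((insert x R).filter (K.Adj u)).card =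
        ∑ u ∈ R, (R.filter (K.Adj u)).card + 2 * (R.filter (K.Adj x)).card := by
      intro K
      rw [Finset.sum_insert hx]
      have h1 : (insert x R).filter (K.Adj x) = R.filter (K.Adj x) := by
        rw [Finset.filter_insert, if_neg (K.loopless.irrefl x)]
      have h2 : ∀ u ∈ R, ((insert x R).filter (K.Adj u)).card = (R.filter (K.Adj u)).card + if K.Adj x u then 1 else 0 := by
        intro u hu
        rw [Finset.filter_insert]
        by_cases h : K.Adj u x
        · rw [if_pos h, if_pos h.symm, Finset.card_insert_of_notMem (by simp [hx])]
        · rw [if_neg h, if_neg (fun h' => h h'.symm), add_zero]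
      rw [h1, Finset.sum_congr rfl h2, Finset.sum_add_distrib, Finset.sum_boole, Nat.cast_id]
      ring
    have hext : ∀ c, ∑ u ∈ R, (R.filter ((bip G (Function.update χ x c)).Adj u)).card = ∑ u ∈ R, (R.filter ((bip G χ).Adj u)).card := by
      intro c
      apply Finset.sum_congr rfl
      intro u hu
      congr 1
      apply Finset.filter_congr
      intro v hv
      have h1 : u ≠ x := fun h => hx (h ▸ hu)
      have h2 : v ≠ x := fun h => hx (h ▸ hv)
      simp [bip, h1, h2]
    have hsum : (R.filter (G.Adj x)).card = (R.filter ((bip G (Function.update χ x 0)).Adj x)).card +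
        (R.filter ((bip G (Function.update χ x 1)).Adj x)).card := by
      rw [← Finset.card_filter_add_card_filter_not (s := R.filter (G.Adj x)) (fun v => χ v = 1), Finset.filter_filter, Finset.filter_filter]
      congr 2 <;> apply Finset.filter_congr <;> intro v hv <;> 
        (have h2 : v ≠ x := fun h => hx (h ▸ hv)) <;> simp only [bip, Function.update_self, ne_eq, h2, not_false_eq_true, Function.update_of_ne] <;>
        rcases zmod2_cases (χ v) with h | h <;> simp [h]
    by_cases hc : (R.filter ((bip G (Function.update χ x 1)).Adj x)).card ≤ (R.filter ((bip G (Function.update χ x 0)).Adj x)).card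
    · refine ⟨Function.update χ x 0, ?_⟩
      rw [gen, gen, hext]; omega
    · refine ⟨Function.update χ x 1, ?_⟩
      rw [gen, gen, hext]; omega

theorem IsModel.mono {V : Type} {G : SimpleGraph V} {A A' : Set V} {m : ℕ} {ρ : Fin m → Set V}
    (h : IsModel G A ρ) (hA : A ⊆ A') : IsModel G A' ρ :=
  ⟨fun i => (h.sub i).trans hA, h.nonempty, h.conn, h.disj, h.adj⟩

open scoped Classical in
theorem dense1 {V : Type} (G : SimpleGraph V) (R : Finset V) (M : ℕ) (hR : R.Nonempty)
    (h : 2 * 2 ^ M * R.card ≤ ∑ u ∈ R, (R.filter (G.Adj u)).card) : BipModel G R M := by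
  obtain ⟨χ, hχ⟩ := max_cut G R
  obtain ⟨ρ, hρ⟩ := mader M _ (bip G χ) R rfl hR (by
    have : 2 * 2 ^ M * R.card = 2 * (2 ^ M * R.card) := by ring
    omega)
  exact ⟨χ, ρ, hρ⟩

open scoped Classical in
theorem dense2 {V : Type} (G : SimpleGraph V) (W R : Finset V) (M q : ℕ) (hR : R.Nonempty) (hRW : R ⊆ W)
    (hq : ∀ d ∈ W \ R, (R.filter (G.Adj d)).card ≤ q)
    (h : q * q * (2 ^ M * R.card) ≤ ∑ u ∈ R, (R.filter fun w => w ≠ u ∧ ∃ d ∈ W \ R, G.Adj u d ∧ G.Adj d w).card)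
    (hpos : 0 < q) :
    BipModel G W M := by
  let Ps : Finset (V × V) := (R ×ˢ R).filter fun p => p.2 ≠ p.1 ∧ ∃ d ∈ W \ R, G.Adj p.1 d ∧ G.Adj d p.2
  have hPs : Ps.card = ∑ u ∈ R, (R.filter fun w => w ≠ u ∧ ∃ d ∈ W \ R, G.Adj u d ∧ G.Adj d w).card := by
    simp only [Ps, Finset.card_filter]
    rw [Finset.sum_product]
  have hl : ∀ p : V × V, ∃ d, p ∈ Ps → d ∈ W \ R ∧ G.Adj p.1 d ∧ G.Adj d p.2 := by
    intro p
    by_cases hp : p ∈ Ps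
    · obtain ⟨d, hd⟩ := (Finset.mem_filter.1 hp).2.2
      exact ⟨d, fun _ => hd⟩
    · exact ⟨p.1, fun h => absurd h hp⟩
  choose l hl using hl
  let D := Ps.image l
  have hD : Ps.card ≤ q * q * D.card := by
    apply Finset.card_le_mul_card_image
    intro d hd
    obtain ⟨p, hp, rfl⟩ := Finset.mem_image.1 hd
    calc _ ≤ ((R.filter (G.Adj (l p))) ×ˢ (R.filter (G.Adj (l p)))).card := by
          apply Finset.card_le_card
          intro p' hp'
          rw [Finset.mem_filter] at hp'
          have h1 := hl p' hp'.1
          rw [hp'.2] at h1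
          have h2 := Finset.mem_product.1 (Finset.mem_filter.1 hp'.1).1
          simp only [Finset.mem_product, Finset.mem_filter]
          exact ⟨⟨h2.1, h1.2.1.symm⟩, h2.2, h1.2.2⟩
      _ = _ := Finset.card_product _ _
      _ ≤ q * q := Nat.mul_le_mul (hq _ (hl p hp).1) (hq _ (hl p hp).1)
  have he : ∀ d : V, ∃ p, d ∈ D → p ∈ Ps ∧ l p = d := by
    intro d
    by_cases hd : d ∈ D
    · obtain ⟨p, hp⟩ := Finset.mem_image.1 hd
      exact ⟨p, fun _ => hp⟩
    · exact ⟨(d, d), fun h => absurd h hd⟩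
  choose e he using he
  let Γ : SimpleGraph V :=
    { Adj := fun u w => u ≠ w ∧ ∃ d ∈ D, e d = (u, w) ∨ e d = (w, u)
      symm := ⟨fun u w ⟨h, d, hd, h'⟩ => ⟨h.symm, d, hd, h'.symm⟩⟩
      loopless := ⟨fun u h => h.1 rfl⟩ }
  have hΓ : D.card ≤ ∑ u ∈ R, (R.filter (Γ.Adj u)).card := by
    have : ∑ u ∈ R, (R.filter (Γ.Adj u)).card = ((R ×ˢ R).filter fun p => Γ.Adj p.1 p.2).card := by
      simp only [Finset.card_filter]
      rw [Finset.sum_product]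
    rw [this]
    apply Finset.card_le_card_of_injOn e
    · intro d hd
      have h1 := he d hd
      have h2 := Finset.mem_filter.1 h1.1
      simp only [Finset.coe_filter, Set.mem_ofPred_eq]
      exact ⟨h2.1, h2.2.1.symm, d, hd, Or.inl rfl⟩
    · intro d hd d' hd' h
      rw [← (he d hd).2, ← (he d' hd').2, h]
  obtain ⟨ρ, hρ⟩ := mader M _ Γ R rfl hR (by
    refine le_trans ?_ (hΓ.trans (le_of_eq (by congr!)))
    have h1 : q * q * (2 ^ M * R.card) ≤ q * q * D.card := h.trans (hPs ▸ hD)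
    exact Nat.le_of_mul_le_mul_left h1 (by positivity))
  refine ⟨fun v => if v ∈ R then 1 else 0, _, hρ.trans (A := W) (G := bip G _) (fun u => {w | w = u ∨ (w ∈ D ∧ (e w).1 = u)}) ?_ ?_ ?_ ?_ ?_⟩
  · rintro u hu w (rfl | ⟨h1, h2⟩)
    · exact hRW hu
    · have := (hl _ (he w h1).1).1
      rw [(he w h1).2] at this
      exact (Finset.mem_sdiff.1 this).1
  · intro u _; exact Or.inl rfl
  · intro u hu
    apply SConn.of_center u
    rintro a (rfl | ⟨h1, h2⟩)
    · exact .refl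
    · have := (hl _ (he a h1).1)
      rw [(he a h1).2, h2] at this
      refine Rch.of_adj ⟨this.2.1.symm, ?_⟩ (Or.inr ⟨h1, h2⟩) (Or.inl rfl)
      have h3 : u ∈ R := hu
      simp [(Finset.mem_sdiff.1 this.1).2, h3]
  · intro u hu w hw huw
    rw [Set.disjoint_left]
    have hDR : ∀ d ∈ D, d ∉ R := by
      intro d hd
      have := (hl _ (he d hd).1).1
      rw [(he d hd).2] at this
      exact (Finset.mem_sdiff.1 this).2
    rintro a (rfl | ⟨h1, h2⟩) (h3 | ⟨h3, h4⟩)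
    · exact huw h3
    · exact hDR _ h3 hu
    · exact hDR _ h1 (h3 ▸ hw)
    · exact huw (h2.symm.trans h4)
  · rintro u hu w hw ⟨h1, d, hd, h2 | h2⟩
    · have := (hl _ (he d hd).1)
      rw [(he d hd).2, h2] at this
      refine ⟨d, Or.inr ⟨hd, by rw [h2]⟩, w, Or.inl rfl, this.2.2, ?_⟩
      have h3 : w ∈ R := hw
      simp [(Finset.mem_sdiff.1 this.1).2, h3]
    · have := (hl _ (he d hd).1)
      rw [(he d hd).2, h2] at this
      refine ⟨u, Or.inl rfl, d, Or.inr ⟨hd, by rw [h2]⟩, this.2.2.symm, ?_⟩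
      have h3 : u ∈ R := hu
      simp [(Finset.mem_sdiff.1 this.1).2, h3]

/-- the first constant -/
def q1 (M : ℕ) : ℕ := 4 * 2 ^ M
/-- the second constant -/
def q2 (M : ℕ) : ℕ := 2 * (q1 M * q1 M * 2 ^ M)

open scoped Classical in
theorem dense {V : Type} (G : SimpleGraph V) (W R : Finset V) (M : ℕ) (hR : R.Nonempty) (hRW : R ⊆ W)
    (hno : ¬ BipModel G W M)
    (hq : ∀ d ∈ W \ R, (R.filter (G.Adj d)).card ≤ q1 M) :
    ∃ u ∈ R, (R.filter (G.Adj u)).card ≤ q1 M ∧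
      (R.filter fun w => w ≠ u ∧ ∃ d ∈ W \ R, G.Adj u d ∧ G.Adj d w).card ≤ q2 M := by
  by_contra hcon
  push Not at hcon
  let R1 := R.filter fun u => q1 M < (R.filter (G.Adj u)).card
  let R2 := R.filter fun u => ¬ q1 M < (R.filter (G.Adj u)).card
  have hsum : R1.card + R2.card = R.card := Finset.card_filter_add_card_filter_not _
  have s1 : q1 M * R1.card ≤ ∑ u ∈ R, (R.filter (G.Adj u)).card := by
    calc _ = ∑ u ∈ R1, q1 M := by rw [Finset.sum_const, smul_eq_mul, mul_comm]
      _ ≤ ∑ u ∈ R1, (R.filter (G.Adj u)).card := Finset.sum_le_sum fun u hu => (Finset.mem_filter.1 hu).2.le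
      _ ≤ _ := Finset.sum_le_sum_of_subset (Finset.filter_subset _ _)
  have s2 : q2 M * R2.card ≤ ∑ u ∈ R, (R.filter fun w => w ≠ u ∧ ∃ d ∈ W \ R, G.Adj u d ∧ G.Adj d w).card := by
    calc _ = ∑ u ∈ R2, q2 M := by rw [Finset.sum_const, smul_eq_mul, mul_comm]
      _ ≤ ∑ u ∈ R2, _ := Finset.sum_le_sum fun u hu => by
          obtain ⟨h1, h2⟩ := Finset.mem_filter.1 hu
          exact (hcon u h1 (not_lt.1 h2)).le
      _ ≤ _ := Finset.sum_le_sum_of_subset (Finset.filter_subset _ _)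
  by_cases hh : R.card ≤ 2 * R1.card
  · apply hno
    obtain ⟨χ, ρ, hρ⟩ := dense1 G R M hR (by
      refine le_trans ?_ s1
      unfold q1
      nlinarith [Nat.zero_le (2 ^ M)])
    exact ⟨χ, ρ, hρ.mono (by exact_mod_cast hRW)⟩
  · apply hno
    refine dense2 G W R M (q1 M) hR hRW hq ?_ (by unfold q1; positivity)
    refine le_trans ?_ s2
    unfold q2
    have : R.card ≤ 2 * R2.card := by omega
    nlinarith [Nat.zero_le (q1 M * q1 M * 2 ^ M)]

open scoped Classical in
theorem greedy {V : Type} (G : SimpleGraph V) (W : Finset V) (M : ℕ) (hno : ¬ BipModel G W M)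
    (L : V → Finset ℕ) (hL : ∀ v ∈ W, 2 * q1 M + q2 M < (L v).card) :
    ∃ φ : V → ℕ, (∀ v ∈ W, φ v ∈ L v) ∧ (∀ u ∈ W, ∀ v ∈ W, G.Adj u v → φ u ≠ φ v) ∧
      ∀ v ∈ W, (∃ w ∈ W, G.Adj v w) → ∃ w ∈ W, G.Adj v w ∧ ∀ w' ∈ W, G.Adj v w' → φ w' = φ w → w' = w := by
  suffices H : ∀ n, ∀ R : Finset V, R.card = n → R ⊆ W → (∀ d ∈ W \ R, (R.filter (G.Adj d)).card ≤ q1 M) →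
    ∃ φ : V → ℕ, (∀ v ∈ R, φ v ∈ L v) ∧ (∀ u ∈ R, ∀ v ∈ R, G.Adj u v → φ u ≠ φ v) ∧
      ∀ v ∈ W, (∃ w ∈ R, G.Adj v w) → ∃ w ∈ R, G.Adj v w ∧ ∀ w' ∈ R, G.Adj v w' → φ w' = φ w → w' = w from
    H _ W rfl (Finset.Subset.refl _) (by simp)
  intro n
  induction n with
  | zero =>
    intro R hR _ _
    rw [Finset.card_eq_zero] at hR
    subst hR
    exact ⟨0, by simp, by simp, by simp⟩
  | succ n ih =>
    intro R hR hRW hq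
    obtain ⟨u, hu, hu1, hu2⟩ := dense G W R M (Finset.card_pos.1 (by omega)) hRW hno hq
    have hsub : R.erase u ⊆ R := Finset.erase_subset _ _
    obtain ⟨φ, hφL, hφp, hφu⟩ := ih (R.erase u) (by rw [Finset.card_erase_of_mem hu]; omega) (hsub.trans hRW) (by
      intro d hd
      rw [Finset.mem_sdiff, Finset.mem_erase, not_and_or, not_not] at hd
      have hle : ((R.erase u).filter (G.Adj d)).card ≤ (R.filter (G.Adj d)).card :=
        Finset.card_le_card (Finset.filter_subset_filter _ hsub)
      rcases hd.2 with rfl | h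
      · exact hle.trans hu1
      · exact hle.trans (hq d (Finset.mem_sdiff.2 ⟨hd.1, h⟩)))
    have hwit : ∀ v, ∃ w, v ∈ W → (∃ w ∈ R.erase u, G.Adj v w) → w ∈ R.erase u ∧ G.Adj v w ∧ ∀ w' ∈ R.erase u, G.Adj v w' → φ w' = φ w → w' = w := by
      intro v
      by_cases h : v ∈ W ∧ (∃ w ∈ R.erase u, G.Adj v w)
      · obtain ⟨w, hw⟩ := hφu v h.1 h.2
        exact ⟨w, fun _ _ => hw⟩
      · exact ⟨v, fun h1 h2 => absurd ⟨h1, h2⟩ h⟩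
    choose wit hwit using hwit
    let F : Finset ℕ := (R.filter (G.Adj u)).image φ ∪ (R.filter (G.Adj u)).image (fun v => φ (wit v)) ∪
      (R.filter fun w => w ≠ u ∧ ∃ d ∈ W \ R, G.Adj u d ∧ G.Adj d w).image φ
    have hF : F.card ≤ 2 * q1 M + q2 M := by
      refine (Finset.card_union_le _ _).trans ?_
      refine (Nat.add_le_add_right (Finset.card_union_le _ _) _).trans ?_
      have h1 := (Finset.card_image_le (s := R.filter (G.Adj u)) (f := φ)).trans hu1
      have h2 := (Finset.card_image_le (s := R.filter (G.Adj u)) (f := fun v => φ (wit v))).trans hu1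
      have h3 := (Finset.card_image_le (f := φ)).trans hu2
      omega
    obtain ⟨c, hcL, hcF⟩ := Finset.exists_mem_notMem_of_card_lt_card (lt_of_le_of_lt hF (hL u (hRW hu)))
    simp only [F, Finset.mem_union, Finset.mem_image, Finset.mem_filter, not_or, not_exists, not_and] at hcF
    obtain ⟨⟨hc1, hc2⟩, hc3⟩ := hcF
    have hup : ∀ v, v ≠ u → Function.update φ u c v = φ v := fun v hv => Function.update_of_ne hv _ _
    refine ⟨Function.update φ u c, ?_, ?_, ?_⟩
    · intro v hv
      by_cases h : v = u
      · subst h; simpa using hcL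
      · rw [hup v h]; exact hφL v (Finset.mem_erase.2 ⟨h, hv⟩)
    · intro a ha b hb hab
      by_cases h1 : a = u
      · subst h1
        rw [Function.update_self, hup b hab.ne.symm]
        exact fun h => hc1 b ⟨hb, hab⟩ h.symm
      · by_cases h2 : b = u
        · subst h2
          rw [Function.update_self, hup a h1]
          exact fun h => hc1 a ⟨ha, hab.symm⟩ h
        · rw [hup a h1, hup b h2]
          exact hφp a (Finset.mem_erase.2 ⟨h1, ha⟩) b (Finset.mem_erase.2 ⟨h2, hb⟩) hab
    · intro v hv hne
      have case_u : G.Adj v u → (∀ w' ∈ R, w' ≠ u → G.Adj v w' → φ w' ≠ c) → ∃ w ∈ R, G.Adj v w ∧ ∀ w' ∈ R, G.Adj v w' →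
          Function.update φ u c w' = Function.update φ u c w → w' = w := by
        intro h1 h2
        refine ⟨u, hu, h1, ?_⟩
        intro w' hw' hvw' h
        by_contra hne'
        rw [hup w' hne', Function.update_self] at h
        exact h2 w' hw' hne' hvw' h
      have case_w : (∃ w ∈ R.erase u, G.Adj v w) → (G.Adj v u → φ (wit v) ≠ c) → ∃ w ∈ R, G.Adj v w ∧ ∀ w' ∈ R, G.Adj v w' →
          Function.update φ u c w' = Function.update φ u c w → w' = w := by
        intro h1 h2
        obtain ⟨h3, h4, h5⟩ := hwit v hv h1
        refine ⟨wit v, hsub h3, h4, ?_⟩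
        intro w' hw' hvw' h
        rw [hup (wit v) (Finset.mem_erase.1 h3).1] at h
        by_cases h6 : w' = u
        · subst h6
          rw [Function.update_self] at h
          exact absurd h.symm (h2 hvw')
        · rw [hup w' h6] at h
          exact h5 w' (Finset.mem_erase.2 ⟨h6, hw'⟩) hvw' h
      by_cases hvu : G.Adj v u
      · by_cases hvR : v ∈ R
        · by_cases hex : ∃ w ∈ R.erase u, G.Adj v w
          · exact case_w hex (fun _ => hc2 v ⟨hvR, hvu.symm⟩)
          · apply case_u hvu
            intro w' hw' hne' hadj
            exact absurd ⟨w', Finset.mem_erase.2 ⟨hne', hw'⟩, hadj⟩ hex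
        · apply case_u hvu
          intro w' hw' hne' hadj
          exact hc3 w' ⟨hw', hne', v, Finset.mem_sdiff.2 ⟨hv, hvR⟩, hvu.symm, hadj⟩
      · apply case_w
        · obtain ⟨w, hw, hvw⟩ := hne
          refine ⟨w, Finset.mem_erase.2 ⟨?_, hw⟩, hvw⟩
          rintro rfl; exact hvu hvw
        · intro h; exact absurd h hvu

/-- An odd model of a complete graph. -/
structure IsOddModel {V ι : Type} (G : SimpleGraph V) (ψ : V → ZMod 2) (Q : ι → Set V) : Prop where
  nonempty : ∀ i, (Q i).Nonempty
  conn : ∀ i, SConn (bip G ψ) (Q i)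
  disj : ∀ i j, i ≠ j → Disjoint (Q i) (Q j)
  adj : ∀ i j, i ≠ j → ∃ x ∈ Q i, ∃ y ∈ Q j, G.Adj x y ∧ ψ x = ψ y

theorem IsOddModel.isOddMinor {V ι : Type} {G : SimpleGraph V} {ψ : V → ZMod 2} {Q : ι → Set V}
    (h : IsOddModel G ψ Q) (H : SimpleGraph ι) : IsOddMinor H G := by
  classical
  let s : Set V := {v | ∃ i, v ∈ Q i}
  have hidx : ∀ x : s, ∃ i, x.1 ∈ Q i := fun x => x.2
  choose idx hidx using hidx
  have hidx_eq : ∀ (x : s) i, x.1 ∈ Q i → idx x = i := by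
    intro x i hx
    by_contra hne
    exact Set.disjoint_left.1 (h.disj _ _ hne) (hidx x) hx
  let G₀ : SimpleGraph s :=
    { Adj := fun x y => G.Adj x.1 y.1 ∧ ((idx x = idx y ∧ ψ x.1 ≠ ψ y.1) ∨ (H.Adj (idx x) (idx y) ∧ ψ x.1 = ψ y.1))
      symm := ⟨by
        rintro x y ⟨h1, ⟨h2, h3⟩ | ⟨h2, h3⟩⟩
        · exact ⟨h1.symm, Or.inl ⟨h2.symm, h3.symm⟩⟩
        · exact ⟨h1.symm, Or.inr ⟨h2.symm, h3.symm⟩⟩⟩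
      loopless := ⟨fun x hx => G.loopless.irrefl _ hx.1⟩ }
  let A : Set s := {x | ψ x.1 = 1}
  have hcross : ∀ x y, (crossGraph G₀ A).Adj x y ↔ G.Adj x.1 y.1 ∧ idx x = idx y ∧ ψ x.1 ≠ ψ y.1 := by
    intro x y
    unfold crossGraph
    rw [fromRel_adj]
    simp only [A, G₀, Set.mem_ofPred_eq]
    constructor
    · rintro ⟨_, ⟨⟨h1, h2⟩, h3, h4⟩ | ⟨⟨h1, h2⟩, h3, h4⟩⟩
      · refine ⟨h1, ?_⟩
        rcases h2 with h2 | h2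
        · exact h2
        · rw [h2.2] at h3; exact absurd h3 h4
      · refine ⟨h1.symm, ?_⟩
        rcases h2 with h2 | h2
        · exact ⟨h2.1.symm, h2.2.symm⟩
        · rw [h2.2] at h3; exact absurd h3 h4
    · rintro ⟨h1, h2, h3⟩
      refine ⟨fun e => h1.ne (congrArg Subtype.val e), ?_⟩
      rcases zmod2_cases (ψ x.1) with hx | hx
      · right
        rw [hx] at h3
        have hy := zmod2_eq_of_ne h3.symm
        exact ⟨⟨h1.symm, Or.inl ⟨h2.symm, by rw [hx]; exact h3.symm⟩⟩, by simpa using hy, by rw [hx]; decide⟩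
      · left
        rw [hx] at h3
        exact ⟨⟨h1, Or.inl ⟨h2, by rw [hx]; exact h3⟩⟩, hx, h3.symm⟩
  have hreach : ∀ x y, (crossGraph G₀ A).Reachable x y → idx x = idx y := by
    rintro x y ⟨p⟩
    induction p with
    | nil => rfl
    | cons hh _ ih => exact ((hcross _ _).1 hh).2.1.trans ih
  have hreach' : ∀ i a b, Rch (bip G ψ) (Q i) a b → (ha : a ∈ Q i) → (hb : b ∈ Q i) →
      (crossGraph G₀ A).Reachable ⟨a, i, ha⟩ ⟨b, i, hb⟩ := by
    intro i a b hab ha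
    induction hab with
    | refl => intro _; exact Reachable.refl _
    | @tail b c _ hbc ih =>
      intro hc
      refine (ih hbc.2.1).trans (Adj.reachable ?_)
      rw [hcross]
      exact ⟨hbc.1.1, (hidx_eq _ i hbc.2.1).trans (hidx_eq _ i hbc.2.2).symm, hbc.1.2⟩
  have hreach2 : ∀ x y, idx x = idx y → (crossGraph G₀ A).Reachable x y := by
    intro x y hxy
    have hx := hidx x
    have hy := hidx y
    rw [hxy] at hx
    exact hreach' (idx y) x.1 y.1 (h.conn _ _ hx _ hy) hx hy
  let pt : ι → s := fun i => ⟨(h.nonempty i).some, i, (h.nonempty i).some_mem⟩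
  have hpt : ∀ i, idx (pt i) = i := fun i => hidx_eq _ _ (h.nonempty i).some_mem
  refine ⟨s, G₀, fun x y hxy => hxy.1, _, oddContract G₀ A, .step G₀ A (.refl _), ⟨?_⟩⟩
  let E : ι ≃ (crossGraph G₀ A).ConnectedComponent :=
    Equiv.ofBijective (fun i => (crossGraph G₀ A).connectedComponentMk (pt i)) (by
      constructor
      · intro i j hij
        have := hreach _ _ (ConnectedComponent.exact hij)
        rwa [hpt, hpt] at this
      · intro c
        induction c using ConnectedComponent.ind with
        | h x => exact ⟨idx x, ConnectedComponent.sound (hreach2 _ _ (hpt _))⟩)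
  refine ⟨E, ?_⟩
  intro i j
  have hEi : ∀ i, E i = (crossGraph G₀ A).connectedComponentMk (pt i) := fun _ => rfl
  have key : ∀ i j, (∃ x y, (crossGraph G₀ A).connectedComponentMk x = E i ∧
      (crossGraph G₀ A).connectedComponentMk y = E j ∧ G₀.Adj x y) → i ≠ j → H.Adj i j := by
    rintro i j ⟨x, y, hx, hy, hxy⟩ hne
    have h1 := (hreach _ _ (ConnectedComponent.exact hx)).trans (hpt i)
    have h2 := (hreach _ _ (ConnectedComponent.exact hy)).trans (hpt j)
    have h3 := hxy.2
    rw [h1, h2] at h3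
    rcases h3 with h3 | h3
    · exact absurd h3.1 hne
    · exact h3.1
  unfold oddContract
  rw [fromRel_adj]
  constructor
  · rintro ⟨hne, h1 | h1⟩
    · exact key i j h1 (fun e => hne (congrArg _ e))
    · exact (key j i h1 (fun e => hne (congrArg _ e.symm))).symm
  · intro hij
    refine ⟨fun e => hij.ne (E.injective e), Or.inl ?_⟩
    obtain ⟨x, hx, y, hy, hxy, hψ⟩ := h.adj i j hij.ne
    have e1 := hidx_eq ⟨x, i, hx⟩ i hx
    have e2 := hidx_eq ⟨y, j, hy⟩ j hy
    refine ⟨⟨x, i, hx⟩, ⟨y, j, hy⟩, ConnectedComponent.sound (hreach2 _ _ (e1.trans (hpt i).symm)),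
      ConnectedComponent.sound (hreach2 _ _ (e2.trans (hpt j).symm)), hxy, Or.inr ⟨?_, hψ⟩⟩
    rw [e1, e2]; exact hij

theorem wt_append {V : Type} {G : SimpleGraph V} (τ : V → V → ZMod 2) {a b c : V}
    (p : G.Walk a b) (q : G.Walk b c) : wt τ (p.append q) = wt τ p + wt τ q := by
  induction p with
  | nil => simp [wt]
  | cons h p ih => simp only [Walk.cons_append, wt, ih]; ring

theorem wt_reverse {V : Type} {G : SimpleGraph V} (τ : V → V → ZMod 2)
    (hτ : ∀ u v, τ u v = τ v u) {a b : V}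
    (p : G.Walk a b) : wt τ p.reverse = wt τ p := by
  induction p with
  | nil => simp [wt]
  | cons h p ih => simp only [Walk.reverse_cons, wt, wt_append, ih, hτ]; ring

/-- Total cost of a walk. -/
def cst {V : Type} {G : SimpleGraph V} (γ : V → V → ℕ) : ∀ {a b : V}, G.Walk a b → ℕ
  | _, _, .nil => 0
  | u, _, .cons (v := v) _ p => γ u v + cst γ p

theorem cst_append {V : Type} {G : SimpleGraph V} (γ : V → V → ℕ) {a b c : V}
    (p : G.Walk a b) (q : G.Walk b c) : cst γ (p.append q) = cst γ p + cst γ q := by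
  induction p with
  | nil => simp [cst]
  | cons h p ih => simp only [Walk.cons_append, cst, ih]; ring

theorem cst_reverse {V : Type} {G : SimpleGraph V} (γ : V → V → ℕ)
    (hγ : ∀ u v, γ u v = γ v u) {a b : V}
    (p : G.Walk a b) : cst γ p.reverse = cst γ p := by
  induction p with
  | nil => simp [cst]
  | cons h p ih => simp only [Walk.reverse_cons, cst, cst_append, ih, hγ]; ring

theorem wt_congr {V : Type} {G : SimpleGraph V} (τ τ' : V → V → ZMod 2) {a b : V}
    (p : G.Walk a b) (h : ∀ u ∈ p.support, ∀ v ∈ p.support, G.Adj u v → τ u v = τ' u v) :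
    wt τ p = wt τ' p := by
  induction p with
  | nil => simp [wt]
  | cons hh p ih =>
    simp only [wt]
    rw [h _ (by simp) _ (by simp) hh, ih]
    intro u hu v hv
    exact h u (by simp [hu]) v (by simp [hv])

theorem Rch.of_walk {V : Type} {G : SimpleGraph V} {s : Set V} {a b : V} (p : G.Walk a b)
    (h : ∀ v ∈ p.support, v ∈ s) : Rch G s a b := by
  induction p with
  | nil => exact .refl
  | cons hh p ih =>
    refine Relation.ReflTransGen.head ⟨hh, h _ (by simp), h _ (by simp)⟩ (ih ?_)
    intro v hv; exact h v (by simp [hv])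

theorem isPath_append {V : Type} {G : SimpleGraph V} {a b c : V} (p : G.Walk a b) (q : G.Walk b c)
    (hp : p.IsPath) (hq : q.IsPath) (h : ∀ v ∈ p.support, v ∈ q.support → v = b) :
    (p.append q).IsPath := by
  induction p with
  | nil => simpa using hq
  | cons hh p ih =>
    rw [Walk.cons_isPath_iff] at hp
    rw [Walk.cons_append, Walk.cons_isPath_iff]
    refine ⟨ih q hp.1 hq fun v hv => h v (by simp [hv]), ?_⟩
    rw [Walk.mem_support_append_iff]
    rintro (h1 | h1)
    · exact hp.2 h1
    · have := h _ (by simp) h1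
      subst this
      exact hp.2 p.end_mem_support

theorem path_escape {V : Type} {G : SimpleGraph V} {a b : V} (p : G.Walk a b) (hp : p.IsPath)
    {x v : V} (hx : x ∈ p.support) (hv : v ≠ x) :
    Rch G ({w | w ∈ p.support} \ {v}) x a ∨ Rch G ({w | w ∈ p.support} \ {v}) x b := by
  obtain ⟨q, r, hq, hr, rfl⟩ := hp.mem_support_iff_exists_append.1 hx
  by_cases h1 : v ∈ q.support
  · right
    apply Rch.of_walk r
    intro w hw
    refine ⟨by simp [Walk.mem_support_append_iff, hw], ?_⟩
    rintro rfl
    exact hp.ne_of_mem_support_of_append hv h1 hw rfl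
  · left
    refine (Rch.of_walk q ?_).symm
    intro w hw
    refine ⟨by simp [Walk.mem_support_append_iff, hw], ?_⟩
    rintro rfl
    exact h1 hw

/-- A shortest connection inside `T` to a set `S`. -/
theorem first_hit {V : Type} {G B : SimpleGraph V} (hB : B ≤ G) (τ : V → V → ZMod 2) (γ : V → V → ℕ)
    {T S : Set V} (h0 : ∀ u ∈ T, ∀ v ∈ T, B.Adj u v → τ u v = 0)
    (h1 : ∀ u ∈ T, ∀ v ∈ T, γ u v = 0)
    {a x : V} (h : Rch B T a x) (hx : x ∈ S) (ha : a ∈ T) :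
    ∃ y ∈ S, ∃ q : G.Walk a y, q.IsPath ∧ wt τ q = 0 ∧ cst γ q = 0 ∧
      (∀ w ∈ q.support, w ∈ T ∧ (w ∈ S → w = y)) := by
  classical
  have key : ∃ y ∈ S, ∃ q : B.Walk a y, ∀ w ∈ q.support, w ∈ T ∧ (w ∈ S → w = y) := by
    induction h using Relation.ReflTransGen.head_induction_on with
    | refl => exact ⟨x, hx, .nil, by simp [ha]⟩
    | @head a c hac _ ih =>
      obtain ⟨y, hy, q, hq⟩ := ih hac.2.2
      by_cases haS : a ∈ S
      · exact ⟨a, haS, .nil, by simp [ha]⟩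
      · refine ⟨y, hy, .cons hac.1 q, ?_⟩
        intro w hw
        rw [Walk.support_cons, List.mem_cons] at hw
        rcases hw with rfl | hw
        · exact ⟨ha, fun h => absurd h haS⟩
        · exact hq w hw
  obtain ⟨y, hy, q, hq⟩ := key
  have hz : ∀ {a y : V} (q : B.Walk a y), (∀ w ∈ q.support, w ∈ T) → wt τ (q.mapLe hB) = 0 ∧ cst γ (q.mapLe hB) = 0 := by
    intro a y q hq
    induction q with
    | nil => exact ⟨rfl, rfl⟩
    | @cons u v w hh p ih =>
      have e : (Walk.cons hh p).mapLe hB = .cons (hB hh) (p.mapLe hB) := rfl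
      rw [e]
      simp only [wt, cst]
      have := ih (fun w hw => hq w (by simp [hw]))
      rw [this.1, this.2, h0 u (hq _ (by simp)) v (hq _ (by simp)) hh, h1 u (hq _ (by simp)) v (hq _ (by simp))]
      simp
  have hsub : ∀ w ∈ q.bypass.support, w ∈ q.support := fun w hw => Walk.support_bypass_subset_support q hw
  have hz' := hz q.bypass (fun w hw => (hq w (hsub w hw)).1)
  refine ⟨y, hy, q.bypass.mapLe hB, (Walk.isPath_mapLe hB).2 q.bypass_isPath, hz'.1, hz'.2, ?_⟩
  intro w hw
  rw [Walk.support_mapLe_eq_support] at hw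
  exact hq w (hsub w hw)

/-- A good family of disjoint breaking paths. -/
structure GoodFam {V : Type} (G : SimpleGraph V) (τ : V → V → ZMod 2) (T : Set V) {k : ℕ}
    (P : Fin k → Σ ab : V × V, G.Walk ab.1 ab.2) : Prop where
  isPath : ∀ i, (P i).2.IsPath
  left : ∀ i, (P i).1.1 ∈ T
  right : ∀ i, (P i).1.2 ∈ T
  wt_eq : ∀ i, wt τ (P i).2 = 1
  disj : ∀ i j, i ≠ j → ∀ v ∈ (P i).2.support, v ∉ (P j).2.support

theorem cst_ne_zero {V : Type} {G : SimpleGraph V} (γ : V → V → ℕ) {T : Set V}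
    (hγ : ∀ u v, u ∈ T → v ∉ T → γ u v ≠ 0) {a b : V} (p : G.Walk a b) (ha : a ∈ T) (hb : b ∉ T) :
    cst γ p ≠ 0 := by
  induction p with
  | nil => exact absurd ha hb
  | @cons u v w hh p ih =>
    simp only [cst]
    by_cases hv : v ∈ T
    · have := ih hv hb; omega
    · have := hγ u v ha hv; omega

theorem reroute {V : Type} {G B : SimpleGraph V} (hB : B ≤ G) (τ : V → V → ZMod 2)
    (hτ : ∀ u v, τ u v = τ v u) {M k : ℕ} (ρ : Fin M → Set V) (hρ : IsModel B Set.univ ρ)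
    (s : Fin M → V) (hs : ∀ j, s j ∈ ρ j) (hτB : ∀ u v, B.Adj u v → τ u v = 0)
    (hex : ∃ P : Fin k → Σ ab : V × V, G.Walk ab.1 ab.2, GoodFam G τ (Set.range s) P) :
    ∃ P : Fin k → Σ ab : V × V, G.Walk ab.1 ab.2, GoodFam G τ (Set.range s) P ∧
      ∀ j, (∃ i, ∃ v ∈ (P i).2.support, v ∈ ρ j) → ∃ i, (P i).1.1 = s j ∨ (P i).1.2 = s j := by
  classical
  let γ : V → V → ℕ := fun u v => if ∃ i, u ∈ ρ i ∧ v ∈ ρ i then 0 else 1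
  have hγs : ∀ u v, γ u v = γ v u := by
    intro u v; simp only [γ, and_comm]
  have hγ1 : ∀ j u v, u ∈ ρ j → v ∉ ρ j → γ u v ≠ 0 := by
    intro j u v hu hv
    simp only [γ]
    rw [if_neg]
    · simp
    · rintro ⟨i, h1, h2⟩
      by_cases e : i = j
      · subst e; exact hv h2
      · exact Set.disjoint_left.1 (hρ.disj i j e) h1 hu
  have hγ0 : ∀ j, ∀ u ∈ ρ j, ∀ v ∈ ρ j, γ u v = 0 := by
    intro j u hu v hv
    simp only [γ]
    rw [if_pos ⟨j, hu, hv⟩]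
  let cost : (Fin k → Σ ab : V × V, G.Walk ab.1 ab.2) → ℕ := fun P => ∑ i, cst γ (P i).2
  have hmin : ∃ n, ∃ P, GoodFam G τ (Set.range s) P ∧ cost P = n := by
    obtain ⟨P, hP⟩ := hex; exact ⟨_, P, hP, rfl⟩
  obtain ⟨P, hP, hPc⟩ := Nat.find_spec hmin
  refine ⟨P, hP, ?_⟩
  by_contra hcon
  push Not at hcon
  obtain ⟨j, ⟨i0, x0, hx0, hx0j⟩, hno⟩ := hcon
  obtain ⟨x, ⟨i, hxi⟩, q, hq, hq0, hqc, hqs⟩ := first_hit hB τ γ (T := ρ j)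
    (S := {v | ∃ i, v ∈ (P i).2.support}) (fun u _ v _ h => hτB u v h) (hγ0 j)
    (hρ.conn j _ (hs j) _ hx0j) ⟨i0, hx0⟩ (hs j)
  have hxj : x ∈ ρ j := (hqs x q.end_mem_support).1
  -- replacing path `i` by a cheaper one is a contradiction
  have key : ∀ (R : Σ ab : V × V, G.Walk ab.1 ab.2), R.2.IsPath → R.1.1 ∈ Set.range s → R.1.2 ∈ Set.range s →
      wt τ R.2 = 1 → (∀ v ∈ R.2.support, v ∈ (P i).2.support ∨ v ∈ q.support) →
      cst γ R.2 < cst γ (P i).2 → False := by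
    intro R h1 h2 h3 h4 h5 h6
    have hdj : ∀ l, l ≠ i → ∀ v ∈ R.2.support, v ∉ (P l).2.support := by
      intro l hl v hv hv'
      rcases h5 v hv with h | h
      · exact hP.disj i l hl.symm v h hv'
      · have := (hqs v h).2 ⟨l, hv'⟩
        subst this
        exact hP.disj i l hl.symm v hxi hv'
    have hg : GoodFam G τ (Set.range s) (Function.update P i R) := by
      refine ⟨?_, ?_, ?_, ?_, ?_⟩
      · intro l; by_cases e : l = i
        · subst e; rw [Function.update_self]; exact h1
        · rw [Function.update_of_ne e]; exact hP.isPath l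
      · intro l; by_cases e : l = i
        · subst e; rw [Function.update_self]; exact h2
        · rw [Function.update_of_ne e]; exact hP.left l
      · intro l; by_cases e : l = i
        · subst e; rw [Function.update_self]; exact h3
        · rw [Function.update_of_ne e]; exact hP.right l
      · intro l; by_cases e : l = i
        · subst e; rw [Function.update_self]; exact h4
        · rw [Function.update_of_ne e]; exact hP.wt_eq l
      · intro l m hlm v
        by_cases e : l = i
        · subst e
          rw [Function.update_self, Function.update_of_ne hlm.symm]
          exact hdj m hlm.symm v
        · rw [Function.update_of_ne e]
          by_cases e' : m = i
          · subst e'; rw [Function.update_self]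
            intro hv hv'; exact hdj l hlm v hv' hv
          · rw [Function.update_of_ne e']
            exact hP.disj l m hlm v
    have hlt : cost (Function.update P i R) < cost P := by
      simp only [cost]
      apply Finset.sum_lt_sum
      · intro l _
        by_cases e : l = i
        · subst e; rw [Function.update_self]; exact h6.le
        · rw [Function.update_of_ne e]
      · exact ⟨i, Finset.mem_univ _, by rw [Function.update_self]; exact h6⟩
    exact Nat.find_min hmin (hPc ▸ hlt) ⟨_, hg, rfl⟩
  obtain ⟨p1, p2, hp1, hp2, hpp⟩ := (hP.isPath i).mem_support_iff_exists_append.1 hxi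
  have hw : wt τ p1 + wt τ p2 = 1 := by rw [← wt_append, ← hpp]; exact hP.wt_eq i
  have hc : cst γ (P i).2 = cst γ p1 + cst γ p2 := by rw [hpp, cst_append]
  have hsup : ∀ v, v ∈ (P i).2.support ↔ v ∈ p1.support ∨ v ∈ p2.support := by
    intro v; rw [hpp, Walk.mem_support_append_iff]
  have hend : ∀ c, c ∈ Set.range s → c ≠ s j → c ∉ ρ j := by
    rintro _ ⟨l, rfl⟩ hne hl
    by_cases e : l = j
    · exact hne (by rw [e])
    · exact Set.disjoint_left.1 (hρ.disj l j e) (hs l) hl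
  rcases zmod2_cases (wt τ p1) with h | h
  · have h2 : wt τ p2 = 1 := by rw [h] at hw; simpa using hw
    refine key ⟨(s j, (P i).1.2), q.append p2⟩ ?_ ⟨j, rfl⟩ (hP.right i) ?_ ?_ ?_
    · apply isPath_append q p2 hq hp2
      intro v hv hv'
      exact (hqs v hv).2 ⟨i, (hsup v).2 (Or.inr hv')⟩
    · change wt τ (q.append p2) = 1
      rw [wt_append, hq0, h2, zero_add]
    · intro v hv
      change v ∈ (q.append p2).support at hv
      rw [Walk.mem_support_append_iff] at hv
      rw [hsup]; tauto
    · change cst γ (q.append p2) < _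
      rw [cst_append, hqc, hc]
      have := cst_ne_zero γ (hγ1 j) p1.reverse hxj (hend _ (hP.left i) (hno i).1)
      rw [cst_reverse γ hγs] at this
      omega
  · refine key ⟨((P i).1.1, s j), p1.append q.reverse⟩ ?_ (hP.left i) ⟨j, rfl⟩ ?_ ?_ ?_
    · apply isPath_append p1 q.reverse hp1 hq.reverse
      intro v hv hv'
      rw [Walk.support_reverse, List.mem_reverse] at hv'
      exact (hqs v hv').2 ⟨i, (hsup v).2 (Or.inl hv)⟩
    · change wt τ (p1.append q.reverse) = 1
      rw [wt_append, wt_reverse τ hτ, hq0, h, add_zero]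
    · intro v hv
      change v ∈ (p1.append q.reverse).support at hv
      rw [Walk.mem_support_append_iff, Walk.support_reverse, List.mem_reverse] at hv
      rw [hsup]; tauto
    · change cst γ (p1.append q.reverse) < _
      rw [cst_append, cst_reverse γ hγs, hqc, hc]
      have := cst_ne_zero γ (hγ1 j) p2 hxj (hend _ (hP.right i) (hno i).2)
      omega

theorem Rch.strengthen {V : Type} {G : SimpleGraph V} {s : Set V} {a b : V} (h : Rch G s a b) :
    Rch G {x | Rch G s a x} a b := by
  induction h with
  | refl => exact .refl
  | @tail b c h1 h2 ih => exact ih.tail ⟨h2.1, h1, h1.tail h2⟩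

theorem Rch.pred {V : Type} {G : SimpleGraph V} {T : Set V} {a v : V} (h : Rch G T a v) (hne : a ≠ v) :
    ∃ p, Rch G (T \ {v}) a p ∧ G.Adj p v ∧ p ∈ T ∧ v ∈ T ∧ p ≠ v := by
  have key : ∀ b, Rch G T a b → (Rch G (T \ {v}) a b ∧ b ≠ v) ∨
      ∃ p, Rch G (T \ {v}) a p ∧ G.Adj p v ∧ p ∈ T ∧ v ∈ T ∧ p ≠ v := by
    intro b hb
    induction hb with
    | refl => exact Or.inl ⟨.refl, hne⟩
    | @tail b c h1 h2 ih =>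
      rcases ih with ih | ih
      · by_cases hc : c = v
        · subst hc
          exact Or.inr ⟨b, ih.1, h2.1, h2.2.1, h2.2.2, ih.2⟩
        · exact Or.inl ⟨ih.1.tail ⟨h2.1, ⟨h2.2.1, ih.2⟩, ⟨h2.2.2, hc⟩⟩, hc⟩
      · exact Or.inr ih
  rcases key v h with h | h
  · exact absurd rfl h.2
  · exact h

theorem centroid {V ι : Type} [Fintype V] (B : SimpleGraph V) (T : Set V) (hT : SConn B T)
    (hne : T.Nonempty) (J : Finset ι) (y : ι → V) (hy : ∀ j ∈ J, y j ∈ T) :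
    open Classical in
    ∃ s ∈ T, ∀ v, v ≠ s → J.card ≤ 2 * (J.filter (fun j => Rch B (T \ {v}) s (y j))).card := by
  classical
  by_contra hcon
  push Not at hcon
  let C : V × V → Finset V := fun p => Finset.univ.filter (fun w => Rch B (T \ {p.2}) p.1 w)
  let bad : Finset (V × V) := Finset.univ.filter (fun p => p.1 ∈ T ∧ p.2 ≠ p.1 ∧
    2 * (J.filter (fun j => Rch B (T \ {p.2}) p.1 (y j))).card < J.card)
  have hbT : ∀ s v, s ∈ T → 2 * (J.filter (fun j => Rch B (T \ {v}) s (y j))).card < J.card → v ∈ T := by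
    intro s v hs h
    by_contra hv
    rw [Set.sdiff_singleton_eq_self hv, Finset.filter_true_of_mem] at h
    · omega
    · intro j hj; exact hT s hs _ (hy j hj)
  have hbne : bad.Nonempty := by
    obtain ⟨s, hs⟩ := hne
    obtain ⟨v, hv, h⟩ := hcon s hs
    exact ⟨(s, v), by simp only [bad, Finset.mem_filter, Finset.mem_univ, true_and]; exact ⟨hs, hv, h⟩⟩
  obtain ⟨⟨s, v⟩, hb, hmax⟩ := bad.exists_max_image (fun p => (C p).card) hbne
  simp only [bad, Finset.mem_filter, Finset.mem_univ, true_and] at hb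
  obtain ⟨hs, hvs, hsv⟩ := hb
  have hv := hbT s v hs hsv
  obtain ⟨w, hwv, hvw⟩ := hcon v hv
  have hCsub : ∀ x, Rch B (T \ {v}) s x → x ∈ T \ {v} := fun x hx => hx.mem ⟨hs, fun h => hvs h.symm⟩
  by_cases hw : Rch B (T \ {v}) s w
  · -- heavy contradiction
    have hsub : J \ J.filter (fun j => Rch B (T \ {v}) s (y j)) ⊆ J.filter (fun j => Rch B (T \ {w}) v (y j)) := by
      intro j hj
      simp only [Finset.mem_sdiff, Finset.mem_filter, not_and] at hj ⊢
      refine ⟨hj.1, ?_⟩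
      have hj2 := hj.2 hj.1
      by_cases e : y j = v
      · rw [e]; exact .refl
      · obtain ⟨p, hp, hpv, hpT, _, hpne⟩ := (hT _ (hy j hj.1) v hv).pred e
        have hCs : ∀ x, Rch B (T \ {v}) (y j) x → x ∈ T \ {w} := by
          intro x hx
          refine ⟨(hx.mem ⟨hy j hj.1, e⟩).1, ?_⟩
          rintro rfl
          exact hj2 (hw.trans hx.symm)
        have e1 : Rch B (T \ {w}) (y j) p := hp.strengthen.mono hCs (fun _ _ _ _ h => h)
        exact (e1.trans (Rch.of_adj hpv (hCs p hp) ⟨hv, fun h => hwv h.symm⟩)).symm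
    have h1 := Finset.card_le_card hsub
    have h2 := Finset.card_sdiff_add_card_eq_card (Finset.filter_subset (fun j => Rch B (T \ {v}) s (y j)) J)
    omega
  · have hle := hmax (v, w) (by
      simp only [bad, Finset.mem_filter, Finset.mem_univ, true_and]; exact ⟨hv, hwv, hvw⟩)
    obtain ⟨p, hp, hpv, hpT, _, hpne⟩ := (hT _ hs v hv).pred (fun h => hvs h.symm)
    have hCs : ∀ x, Rch B (T \ {v}) s x → x ∈ T \ {w} := by
      intro x hx
      refine ⟨(hCsub x hx).1, ?_⟩
      rintro rfl
      exact hw hx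
    have hvw' : v ∈ T \ {w} := ⟨hv, fun h => hwv h.symm⟩
    have hsub : insert v (C (s, v)) ⊆ C (v, w) := by
      intro x hx
      simp only [C, Finset.mem_insert, Finset.mem_filter, Finset.mem_univ, true_and] at hx ⊢
      rcases hx with rfl | hx
      · exact .refl
      · have e1 : Rch B (T \ {w}) s p := hp.strengthen.mono hCs (fun _ _ _ _ h => h)
        have e2 : Rch B (T \ {w}) s x := hx.strengthen.mono hCs (fun _ _ _ _ h => h)
        exact (Rch.of_adj hpv.symm hvw' (hCs p hp)).trans (e1.symm.trans e2)
    have h1 := Finset.card_le_card hsub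
    rw [Finset.card_insert_of_notMem] at h1
    · omega
    · simp only [C, Finset.mem_filter, Finset.mem_univ, true_and]
      intro h; exact (hCsub v h).2 rfl

theorem potential {V : Type} {G : SimpleGraph V} (τ : V → V → ZMod 2) {a b : V} (p : G.Walk a b)
    (hp : p.IsPath) : ∃ g : V → ZMod 2, g a = 0 ∧ g b = wt τ p ∧
      ∀ d ∈ p.darts, g d.snd = g d.fst + τ d.fst d.snd := by
  classical
  induction p with
  | nil => exact ⟨fun _ => 0, rfl, rfl, by simp⟩
  | @cons u v b hh p ih =>
    rw [Walk.cons_isPath_iff] at hp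
    obtain ⟨g, h1, h2, h3⟩ := ih hp.1
    have hne : ∀ w ∈ p.support, w ≠ u := by rintro w hw rfl; exact hp.2 hw
    refine ⟨fun w => if w = u then 0 else g w + τ u v, by simp, ?_, ?_⟩
    · simp only [wt]
      rw [if_neg (hne b p.end_mem_support), h2, add_comm]
    · intro d hd
      rw [Walk.darts_cons, List.mem_cons] at hd
      rcases hd with rfl | hd
      · simp only [if_true]
        rw [if_neg (hne v p.start_mem_support), h1]
      · simp only []
        rw [if_neg (hne _ (p.dart_fst_mem_support_of_mem_darts hd)),
          if_neg (hne _ (p.dart_snd_mem_support_of_mem_darts hd)), h3 d hd]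
        ring

theorem Rch.of_darts {V : Type} {G G' : SimpleGraph V} {s : Set V} {a b : V} (p : G.Walk a b)
    (h : ∀ d ∈ p.darts, Rch G' s d.fst d.snd) : ∀ w ∈ p.support, Rch G' s a w := by
  induction p with
  | nil => intro w hw; simp at hw; subst hw; exact .refl
  | cons hh p ih =>
    intro w hw
    rw [Walk.support_cons, List.mem_cons] at hw
    rcases hw with rfl | hw
    · exact .refl
    · have e1 := h ⟨(_, _), hh⟩ (by simp)
      exact e1.trans (ih (fun d hd => h d (by simp [hd])) w hw)

/-- The second auxiliary graph: bags indexed by `F` are shrunk to their centres. -/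
def linkG {V : Type} (G : SimpleGraph V) (χ : V → ZMod 2) {M : ℕ} (ρ : Fin M → Set V) (s : Fin M → V)
    (hs : ∀ j, s j ∈ ρ j) (F : Set (Fin M)) : SimpleGraph V where
  Adj u v := (G.Adj u v ∧ (∀ j ∈ F, u ∉ ρ j) ∧ (∀ j ∈ F, v ∉ ρ j)) ∨
    ((∀ j ∈ F, u ∉ ρ j) ∧ ∃ j ∈ F, v = s j ∧ ∃ z ∈ ρ j, (bip G χ).Adj u z) ∨
    ((∀ j ∈ F, v ∉ ρ j) ∧ ∃ j ∈ F, u = s j ∧ ∃ z ∈ ρ j, (bip G χ).Adj v z)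
  symm := ⟨by
    rintro u v (⟨h1, h2, h3⟩ | h | h)
    · exact Or.inl ⟨h1.symm, h3, h2⟩
    · exact Or.inr (Or.inr h)
    · exact Or.inr (Or.inl h)⟩
  loopless := ⟨by
    rintro u (⟨h1, h2, h3⟩ | ⟨h, j, hj, e, _⟩ | ⟨h, j, hj, e, _⟩)
    · exact G.loopless.irrefl _ h1
    · exact h j hj (e ▸ hs j)
    · exact h j hj (e ▸ hs j)⟩

open Classical in
/-- Signs on the second auxiliary graph. -/
noncomputable def linkT {V : Type} (χ : V → ZMod 2) {M : ℕ} (ρ : Fin M → Set V)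
    (F : Set (Fin M)) (u v : V) : ZMod 2 :=
  if (∀ j ∈ F, u ∉ ρ j) ∧ (∀ j ∈ F, v ∉ ρ j) then 1 + χ u + χ v else 0

theorem linkT_symm {V : Type} (χ : V → ZMod 2) {M : ℕ} (ρ : Fin M → Set V)
    (F : Set (Fin M)) (u v : V) : linkT χ ρ F u v = linkT χ ρ F v u := by
  unfold linkT
  by_cases h : (∀ j ∈ F, u ∉ ρ j) ∧ (∀ j ∈ F, v ∉ ρ j)
  · rw [if_pos h, if_pos h.symm]; ring
  · rw [if_neg h, if_neg (fun h' => h h'.symm)]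

theorem oddModel_of_family {V : Type} (G : SimpleGraph V) (χ : V → ZMod 2) {M t : ℕ} (ρ : Fin M → Set V)
    (hρ : IsModel (bip G χ) Set.univ ρ) (s : Fin M → V) (hs : ∀ j, s j ∈ ρ j) (F : Set (Fin M))
    (T : Finset V) (hT : ∀ v, v ∈ T ↔ ∃ j ∈ F, v = s j)
    (a b : Fin t → V) (p : ∀ i, (linkG G χ ρ s hs F).Walk (a i) (b i))
    (hp : IsFamily (linkG G χ ρ s hs F) (linkT χ ρ F) T a b p) :
    ∃ ψ, ∃ Q : Fin t → Set V, IsOddModel G ψ Q := by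
  classical
  have hf : ∀ i, ∃ j ∈ F, a i = s j := fun i => (hT _).1 (hp.left i)
  have hf' : ∀ i, ∃ j ∈ F, b i = s j := fun i => (hT _).1 (hp.right i)
  choose f hfF hfa using hf
  choose f' hfF' hfb using hf'
  choose g hg0 hg1 hgd using fun i => potential (linkT χ ρ F) (p i) (hp.isPath i)
  have huniq : ∀ {v i j}, v ∈ ρ i → v ∈ ρ j → i = j := by
    intro v i j h1 h2
    by_contra e
    exact Set.disjoint_left.1 (hρ.disj i j e) h1 h2
  have hsame : ∀ {v i l}, v ∈ (p i).support → v ∈ (p l).support → i = l := by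
    intro v i l h1 h2
    by_contra e
    exact hp.disj i l e v h1 h2
  have has : ∀ i, s (f i) ∈ (p i).support := fun i => by rw [← hfa]; exact (p i).start_mem_support
  have hbs : ∀ i, s (f' i) ∈ (p i).support := fun i => by rw [← hfb]; exact (p i).end_mem_support
  have hff' : ∀ i l, f i ≠ f' l := by
    intro i l e
    have h1 := has i
    rw [e] at h1
    have := hsame h1 (hbs l)
    subst this
    exact hp.ne i (by rw [hfa, hfb, e])
  have hfinj : ∀ i l, f i = f l → i = l := fun i l e => hsame (has i) (e ▸ has l)
  have hfinj' : ∀ i l, f' i = f' l → i = l := fun i l e => hsame (hbs i) (e ▸ hbs l)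
  let inW : V → Prop := fun v => ∀ j ∈ F, v ∉ ρ j
  let ψ : V → ZMod 2 := fun v =>
    if ∃ i, v ∈ ρ (f i) then χ v else if ∃ i, v ∈ ρ (f' i) then χ v + 1 else
      if h : ∃ i, v ∈ (p i).support then χ v + g h.choose v else 0
  have hψ1 : ∀ i v, v ∈ ρ (f i) → ψ v = χ v := by
    intro i v hv
    simp only [ψ]
    rw [if_pos ⟨i, hv⟩]
  have hψ2 : ∀ i v, v ∈ ρ (f' i) → ψ v = χ v + 1 := by
    intro i v hv
    simp only [ψ]
    rw [if_neg, if_pos ⟨i, hv⟩]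
    rintro ⟨l, hl⟩
    exact hff' l i (huniq hl hv)
  have hψ3 : ∀ i v, v ∈ (p i).support → inW v → ψ v = χ v + g i v := by
    intro i v hv hW
    simp only [ψ]
    have hex : ∃ i, v ∈ (p i).support := ⟨i, hv⟩
    rw [if_neg, if_neg, dif_pos hex]
    · rw [hsame hex.choose_spec hv]
    · rintro ⟨l, hl⟩; exact hW _ (hfF' l) hl
    · rintro ⟨l, hl⟩; exact hW _ (hfF l) hl
  let Q : Fin t → Set V := fun i => ρ (f i) ∪ ρ (f' i) ∪ {v | v ∈ (p i).support ∧ inW v}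
  have hρQ : ∀ i, ρ (f i) ⊆ Q i := fun i v hv => Or.inl (Or.inl hv)
  have hρQ' : ∀ i, ρ (f' i) ⊆ Q i := fun i v hv => Or.inl (Or.inr hv)
  have hc1 : ∀ i, ∀ x ∈ ρ (f i), ∀ y ∈ ρ (f i), Rch (bip G ψ) (Q i) x y := by
    intro i x hx y hy
    refine (hρ.conn (f i) x hx y hy).mono (hρQ i) ?_
    intro u hu v hv huv
    exact ⟨huv.1, by rw [hψ1 i u hu, hψ1 i v hv]; exact huv.2⟩
  have hc2 : ∀ i, ∀ x ∈ ρ (f' i), ∀ y ∈ ρ (f' i), Rch (bip G ψ) (Q i) x y := by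
    intro i x hx y hy
    refine (hρ.conn (f' i) x hx y hy).mono (hρQ' i) ?_
    intro u hu v hv huv
    exact ⟨huv.1, by rw [hψ2 i u hu, hψ2 i v hv]; intro h; exact huv.2 (add_right_cancel h)⟩
  have hlink : ∀ i u j z, u ∈ (p i).support → inW u → j ∈ F → s j ∈ (p i).support →
      g i (s j) = g i u → z ∈ ρ j → (bip G χ).Adj u z → Rch (bip G ψ) (Q i) u (s j) := by
    intro i u j z hu hW hj hsj hgg hz huz
    have huQ : u ∈ Q i := Or.inr ⟨hu, hW⟩
    rcases hp.inner i _ hsj ((hT _).2 ⟨j, hj, rfl⟩) with e | e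
    · have e1 : j = f i := by
        rw [hfa] at e; exact huniq (hs j) (e ▸ hs (f i))
      subst e1
      refine (Rch.of_adj (G := bip G ψ) (show G.Adj u z ∧ ψ u ≠ ψ z from ⟨huz.1, ?_⟩) huQ (hρQ i hz)).trans (hc1 i z hz _ (hs _))
      rw [hψ3 i u hu hW, hψ1 i z hz, ← hgg, e, hg0, add_zero]
      exact huz.2
    · have e1 : j = f' i := by
        rw [hfb] at e; exact huniq (hs j) (e ▸ hs (f' i))
      subst e1
      refine (Rch.of_adj (G := bip G ψ) (show G.Adj u z ∧ ψ u ≠ ψ z from ⟨huz.1, ?_⟩) huQ (hρQ' i hz)).trans (hc2 i z hz _ (hs _))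
      rw [hψ3 i u hu hW, hψ2 i z hz, ← hgg, e, hg1, hp.wt_eq i]
      intro h; exact huz.2 (add_right_cancel h)
  have hdart : ∀ i, ∀ d ∈ (p i).darts, Rch (bip G ψ) (Q i) d.fst d.snd := by
    intro i d hd
    have hgg := hgd i d hd
    have h1 := (p i).dart_fst_mem_support_of_mem_darts hd
    have h2 := (p i).dart_snd_mem_support_of_mem_darts hd
    rcases d.adj with ⟨hG, hW1, hW2⟩ | ⟨hW, j, hj, e, z, hz, huz⟩ | ⟨hW, j, hj, e, z, hz, huz⟩
    · refine Rch.of_adj ⟨hG, ?_⟩ (Or.inr ⟨h1, hW1⟩) (Or.inr ⟨h2, hW2⟩)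
      rw [hψ3 i _ h1 hW1, hψ3 i _ h2 hW2, hgg]
      unfold linkT
      rw [if_pos ⟨hW1, hW2⟩]
      generalize χ _ = A
      generalize χ _ = B
      generalize g i _ = C
      revert A B C; decide
    · unfold linkT at hgg
      rw [if_neg, add_zero] at hgg
      · rw [e] at hgg h2 ⊢
        exact hlink i _ j z h1 hW hj h2 hgg hz huz
      · rintro ⟨_, h⟩; rw [e] at h; exact h j hj (hs j)
    · unfold linkT at hgg
      rw [if_neg, add_zero] at hgg
      · rw [e] at hgg h1 ⊢
        exact (hlink i _ j z h2 hW hj h1 hgg.symm hz huz).symm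
      · rintro ⟨h, _⟩; rw [e] at h; exact h j hj (hs j)
  refine ⟨ψ, Q, ?_, ?_, ?_, ?_⟩
  · intro i; exact ⟨s (f i), hρQ i (hs _)⟩
  · intro i
    apply SConn.of_center (a i)
    rintro x ((hx | hx) | ⟨hx, _⟩)
    · rw [hfa]; exact hc1 i x hx _ (hs _)
    · have h1 := Rch.of_darts (p i) (hdart i) _ (hbs i)
      exact (hc2 i x hx _ (hs _)).trans h1.symm
    · exact (Rch.of_darts (p i) (hdart i) _ hx).symm
  · intro i l hil
    rw [Set.disjoint_left]
    rintro x ((hx | hx) | ⟨hx, hW⟩) ((hx' | hx') | ⟨hx', hW'⟩)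
    · exact hil (hfinj _ _ (huniq hx hx'))
    · exact hff' _ _ (huniq hx hx')
    · exact hW' _ (hfF i) hx
    · exact hff' _ _ (huniq hx' hx)
    · exact hil (hfinj' _ _ (huniq hx hx'))
    · exact hW' _ (hfF' i) hx
    · exact hW _ (hfF l) hx'
    · exact hW _ (hfF' l) hx'
    · exact hil (hsame hx hx')
  · intro i l hil
    obtain ⟨x, hx, y, hy, hxy⟩ := hρ.adj (f i) (f' l) (hff' i l)
    refine ⟨x, hρQ i hx, y, hρQ' l hy, hxy.1, ?_⟩
    rw [hψ1 i x hx, hψ2 l y hy]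
    exact zmod2_eq_of_ne hxy.2

theorem IsCert.propagate {V : Type} {H : SimpleGraph V} {τ : V → V → ZMod 2} {X : Finset V} {U : Set V}
    {r : V → Option V} {χ : V → ZMod 2} (hc : IsCert H τ X U r χ) {Z : Set V} (hZ : ∀ z ∈ Z, z ∉ X)
    {p w v : V} (hv : v ∉ Z) (hr : ∀ u, r p = some u → u = v) (hp : p ∉ U) (h : Rch H Z p w) :
    w ∉ U ∧ r w = r p := by
  induction h with
  | refl => exact ⟨hp, rfl⟩
  | @tail w w' _ h2 ih =>
    rcases hc.edge w w' h2.1 (hZ _ h2.2.1) (hZ _ h2.2.2) with h | h | h | h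
    · exact absurd h.1 ih.1
    · exact absurd h.1 ih.1
    · have := hr w' (by rw [← ih.2, h.2.2])
      rw [this] at h2; exact absurd h2.2.2 hv
    · exact ⟨h.2.1, by rw [← h.2.2, ih.2]⟩

open Classical in
/-- Potential of the anchor of a vertex. -/
noncomputable def anchor {V : Type} (U : Set V) (r : V → Option V) (w : V) : Option V :=
  if w ∈ U then some w else r w

theorem IsCert.anchor_const {V : Type} {H : SimpleGraph V} {τ : V → V → ZMod 2} {X : Finset V} {U : Set V}
    {r : V → Option V} {χ : V → ZMod 2} (hc : IsCert H τ X U r χ) {Z : Set V} (hZ : ∀ z ∈ Z, z ∉ X)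
    (h0 : ∀ u ∈ Z, ∀ v ∈ Z, H.Adj u v → τ u v = 0)
    {p w : V} (h : Rch H Z p w) :
    (anchor U r w).map χ = (anchor U r p).map χ := by
  induction h with
  | refl => rfl
  | @tail w w' _ h2 ih =>
    rw [← ih]
    unfold anchor
    rcases hc.edge w w' h2.1 (hZ _ h2.2.1) (hZ _ h2.2.2) with h | h | h | h
    · rw [if_pos h.1, if_pos h.2.1]
      have := h.2.2
      rw [h0 _ h2.2.1 _ h2.2.2 h2.1] at this
      simp only [Option.map_some]
      congr 1; grind
    · rw [if_pos h.1, if_neg h.2.1, h.2.2]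
    · rw [if_neg h.1, if_pos h.2.1, h.2.2]
    · rw [if_neg h.1, if_neg h.2.1, h.2.2]

theorem IsCert.wt_walk {V : Type} {H : SimpleGraph V} {τ : V → V → ZMod 2} {X : Finset V} {U : Set V}
    {r : V → Option V} {χ : V → ZMod 2} (hc : IsCert H τ X U r χ) {a b : V} (p : H.Walk a b)
    (hp : ∀ v ∈ p.support, v ∈ U) : wt τ p = χ a + χ b := by
  induction p with
  | nil => simp only [wt]; grind
  | @cons u v b hh p ih =>
    simp only [wt]
    rw [ih (fun v hv => hp v (by simp [hv]))]
    have hu := hp u (by simp)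
    have hv := hp v (by simp)
    rcases hc.edge u v hh (hc.disj _ hu) (hc.disj _ hv) with h | h | h | h
    · rw [← h.2.2]; grind
    · exact absurd hv h.2.1
    · exact absurd hu h.1
    · exact absurd hu h.1

theorem cert_contra {V : Type} (G : SimpleGraph V) (χ : V → ZMod 2) {M t k : ℕ} (ρ : Fin M → Set V)
    (hρ : IsModel (bip G χ) Set.univ ρ) (s : Fin M → V) (hs : ∀ j, s j ∈ ρ j)
    (y : Fin M → Fin M → V) (hy : ∀ c j, c ≠ j → ∃ z ∈ ρ j, (bip G χ).Adj (y c j) z)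
    (hyρ : ∀ c j, c ≠ j → y c j ∈ ρ c)
    (hcen : open Classical in ∀ c v, v ≠ s c → M - 1 ≤ 2 * ((Finset.univ.erase c).filter
      (fun j => Rch (bip G χ) (ρ c \ {v}) (s c) (y c j))).card)
    (P : Fin k → Σ ab : V × V, G.Walk ab.1 ab.2)
    (hP : GoodFam G (fun u v => 1 + χ u + χ v) (Set.range s) P)
    (l l' : Fin k → Fin M) (hl : ∀ i, (P i).1.1 = s (l i)) (hl' : ∀ i, (P i).1.2 = s (l' i))
    (hhit : ∀ j, (∃ i, ∃ v ∈ (P i).2.support, v ∈ ρ j) → ∃ i, j = l i ∨ j = l' i)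
    (hk : 4 * t < k) (hM : 2 * (2 * k + 2 * t + 1) < M - 1)
    (F : Set (Fin M)) (hF : ∀ j, j ∈ F ↔ ∀ i, j ≠ l i ∧ j ≠ l' i)
    (X : Finset V) (U : Set V) (r : V → Option V) (χ' : V → ZMod 2) (hX : X.card ≤ 2 * t)
    (hc : IsCert (linkG G χ ρ s hs F) (linkT χ ρ F) X U r χ')
    (hterm : ∀ j ∈ F, s j ∉ X → s j ∈ U ∧ χ' (s j) = 0) : False := by
  classical
  have huniq : ∀ {v i j}, v ∈ ρ i → v ∈ ρ j → i = j := by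
    intro v i j h1 h2
    by_contra e
    exact Set.disjoint_left.1 (hρ.disj i j e) h1 h2
  have hsinj : Function.Injective s := fun i j e => huniq (hs i) (e ▸ hs j)
  have hsame : ∀ {v i m}, v ∈ (P i).2.support → v ∈ (P m).2.support → i = m := by
    intro v i m h1 h2
    by_contra e
    exact hP.disj i m e v h1 h2
  have hls : ∀ i, s (l i) ∈ (P i).2.support := fun i => by rw [← hl]; exact (P i).2.start_mem_support
  have hls' : ∀ i, s (l' i) ∈ (P i).2.support := fun i => by rw [← hl']; exact (P i).2.end_mem_support
  -- choose a path untouched by X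
  obtain ⟨i, hi1, hi2⟩ : ∃ i, (∀ x ∈ X, x ∉ (P i).2.support) ∧ (∀ x ∈ X, x ∉ ρ (l i) ∧ x ∉ ρ (l' i)) := by
    let A1 : Finset (Fin k) := X.biUnion (fun x => Finset.univ.filter (fun i => x ∈ (P i).2.support))
    let A2 : Finset (Fin k) := X.biUnion (fun x => Finset.univ.filter (fun i => x ∈ ρ (l i) ∨ x ∈ ρ (l' i)))
    have h1 : A1.card ≤ X.card * 1 := by
      apply Finset.card_biUnion_le_card_mul
      intro x _
      rw [Finset.card_le_one]
      intro i hi m hm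
      simp only [Finset.mem_filter, Finset.mem_univ, true_and] at hi hm
      exact hsame hi hm
    have h2 : A2.card ≤ X.card * 1 := by
      apply Finset.card_biUnion_le_card_mul
      intro x _
      rw [Finset.card_le_one]
      intro i hi m hm
      simp only [Finset.mem_filter, Finset.mem_univ, true_and] at hi hm
      have key : ∀ c c', x ∈ ρ c → x ∈ ρ c' → s c ∈ (P i).2.support → s c' ∈ (P m).2.support → i = m := by
        intro c c' h1 h2 h3 h4
        have := huniq h1 h2
        subst this
        exact hsame h3 h4
      rcases hi with hi | hi <;> rcases hm with hm | hm
      · exact key _ _ hi hm (hls i) (hls m)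
      · exact key _ _ hi hm (hls i) (hls' m)
      · exact key _ _ hi hm (hls' i) (hls m)
      · exact key _ _ hi hm (hls' i) (hls' m)
    have h3 : (A1 ∪ A2).card < (Finset.univ : Finset (Fin k)).card := by
      have := Finset.card_union_le A1 A2
      rw [Finset.card_univ, Fintype.card_fin]; omega
    obtain ⟨i, _, hi⟩ := Finset.exists_mem_notMem_of_card_lt_card h3
    simp only [A1, A2, Finset.mem_union, Finset.mem_biUnion, Finset.mem_filter, Finset.mem_univ, true_and] at hi
    push Not at hi
    exact ⟨i, fun x hx h => hi.1 x hx h, fun x hx => hi.2 x hx⟩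
  have hexit : ∀ c v, v ≠ s c → ∃ j, j ≠ c ∧ j ∈ F ∧ s j ∉ X ∧ s j ≠ v ∧
      Rch (bip G χ) (ρ c \ {v}) (s c) (y c j) := by
    intro c v hv
    have h1 := hcen c v hv
    let B1 : Finset (Fin M) := Finset.univ.image l ∪ Finset.univ.image l'
    let B2 : Finset (Fin M) := Finset.univ.filter (fun j => s j ∈ X)
    let B3 : Finset (Fin M) := Finset.univ.filter (fun j => s j = v)
    have e1 : B1.card ≤ 2 * k := by
      have a1 := Finset.card_union_le (Finset.univ.image l) (Finset.univ.image l')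
      have a2 : (Finset.univ.image l).card ≤ _ := Finset.card_image_le
      have a3 : (Finset.univ.image l').card ≤ _ := Finset.card_image_le
      rw [Finset.card_univ, Fintype.card_fin] at a2 a3
      simp only [B1]; omega
    have e2 : B2.card ≤ 2 * t := by
      refine le_trans (Finset.card_le_card_of_injOn s ?_ hsinj.injOn) hX
      intro j hj
      simpa [B2] using hj
    have e3 : B3.card ≤ 1 := by
      rw [Finset.card_le_one]
      intro i hi m hm
      simp only [B3, Finset.mem_filter, Finset.mem_univ, true_and] at hi hm
      exact hsinj (hi.trans hm.symm)
    have e4 := Finset.card_union_le (B1 ∪ B2) B3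
    have e5 := Finset.card_union_le B1 B2
    obtain ⟨j, hj, hj'⟩ := Finset.exists_mem_notMem_of_card_lt_card
      (show (B1 ∪ B2 ∪ B3).card < ((Finset.univ.erase c).filter
      (fun j => Rch (bip G χ) (ρ c \ {v}) (s c) (y c j))).card by omega)
    simp only [B1, B2, B3, Finset.mem_filter, Finset.mem_univ, true_and, Finset.mem_erase, Finset.mem_union,
      Finset.mem_image, and_true] at hj hj'
    push Not at hj'
    refine ⟨j, hj.1, (hF j).2 fun i => ⟨?_, ?_⟩, hj'.1.2, hj'.2, hj.2⟩
    · exact (hj'.1.1.1 i).symm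
    · exact (hj'.1.1.2 i).symm
  have hPW : ∀ v ∈ (P i).2.support, ∀ j ∈ F, v ∉ ρ j := by
    intro v hv j hj hvj
    obtain ⟨m, hm⟩ := hhit j ⟨i, v, hv, hvj⟩
    have := (hF j).1 hj m
    tauto
  have hcF : ∀ c, c = l i ∨ c = l' i → c ∉ F := by
    intro c h hcF
    have := (hF c).1 hcF i
    tauto
  have hρW : ∀ c, c = l i ∨ c = l' i → ∀ v ∈ ρ c, ∀ j ∈ F, v ∉ ρ j := by
    intro c h v hv j hj hvj
    have := huniq hv hvj
    subst this
    exact hcF c h hj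
  have hρX : ∀ c, c = l i ∨ c = l' i → ∀ v ∈ ρ c, v ∉ X := by
    rintro c (rfl | rfl) v hv hvX
    · exact (hi2 v hvX).1 hv
    · exact (hi2 v hvX).2 hv
  set H := linkG G χ ρ s hs F with hH
  have hyH : ∀ c, c = l i ∨ c = l' i → ∀ j, j ≠ c → j ∈ F → H.Adj (y c j) (s j) := by
    intro c h j hj hjF
    refine Or.inr (Or.inl ⟨hρW c h _ (hyρ c j hj.symm), j, hjF, rfl, hy c j hj.symm⟩)
  have hρH : ∀ c, c = l i ∨ c = l' i → ∀ u ∈ ρ c, ∀ v ∈ ρ c, (bip G χ).Adj u v → H.Adj u v := by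
    intro c h u hu v hv huv
    exact Or.inl ⟨huv.1, hρW c h u hu, hρW c h v hv⟩
  have hPU : ∀ p ∈ (P i).2.support, p ∈ U := by
    intro p hp
    by_contra hpU
    have hne : (P i).1.1 ≠ (P i).1.2 := by
      have gen : ∀ {a b : V} (q : G.Walk a b), q.IsPath → wt (fun u v => 1 + χ u + χ v) q = 1 → a ≠ b := by
        rintro a b q h1 h2 rfl
        rw [(Walk.isPath_iff_nil.1 h1).eq_nil] at h2
        simp [wt] at h2
      exact gen (P i).2 (hP.isPath i) (hP.wt_eq i)
    obtain ⟨v, hv, hrv⟩ : ∃ v, v ≠ p ∧ ∀ u, r p = some u → u = v := by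
      cases hrp : r p with
      | none =>
        by_cases e : p = (P i).1.1
        · exact ⟨(P i).1.2, by rw [e]; exact hne.symm, by simp⟩
        · exact ⟨(P i).1.1, fun h => e h.symm, by simp⟩
      | some u =>
        refine ⟨u, ?_, by simp⟩
        rintro rfl
        exact hpU (hc.mem _ _ hrp)
    have fin : ∀ c e, c = l i ∨ c = l' i → e = s c → Rch G ({w | w ∈ (P i).2.support} \ {v}) p e → False := by
      rintro c e h rfl hR
      have hsv : s c ≠ v := (hR.mem ⟨hp, fun e => hv e.symm⟩).2
      have h1 : Rch H ({w | w ∈ (P i).2.support} \ {v}) p (s c) :=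
        hR.mono subset_rfl (fun a ha b hb hab => Or.inl ⟨hab, hPW a ha.1, hPW b hb.1⟩)
      have h2 := hc.propagate (fun z hz hzX => hi1 z hzX hz.1) (fun h => h.2 rfl) hrv hpU h1
      obtain ⟨j, hjc, hjF, hjX, hjv, hjR⟩ := hexit c v hsv.symm
      have h3 : Rch H ({w | w ∈ ρ c ∨ w = s j} \ {v}) (s c) (s j) := by
        refine (hjR.mono ?_ ?_).trans (Rch.of_adj (hyH c h j hjc hjF) ?_ ⟨Or.inr rfl, hjv⟩)
        · rintro x ⟨hx, hxv⟩; exact ⟨Or.inl hx, hxv⟩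
        · intro a ha b hb hab; exact hρH c h a ha.1 b hb.1 hab
        · have := hjR.mem ⟨hs c, hsv⟩
          exact ⟨Or.inl this.1, this.2⟩
      have h4 := hc.propagate (by
        rintro z ⟨hz | rfl, _⟩
        · exact hρX c h z hz
        · exact hjX) (fun h => h.2 rfl) (fun u hu => hrv u (by rw [← h2.2, hu])) h2.1 h3
      exact h4.1 (hterm j hjF hjX).1
    rcases path_escape (P i).2 (hP.isPath i) hp hv with h | h
    · exact fin _ _ (Or.inl rfl) (hl i) h
    · exact fin _ _ (Or.inr rfl) (hl' i) h
  have hzero : ∀ c, c = l i ∨ c = l' i → s c ∈ (P i).2.support → χ' (s c) = 0 := by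
    intro c h hsc
    have hne : ∃ v, v ≠ s c := by
      have : 1 < M := by omega
      by_cases e : c = ⟨0, by omega⟩
      · exact ⟨s ⟨1, this⟩, fun h => by have := hsinj h; rw [e] at this; simp at this⟩
      · exact ⟨s ⟨0, by omega⟩, fun h => e (hsinj h).symm⟩
    obtain ⟨v, hv⟩ := hne
    obtain ⟨j, hjc, hjF, hjX, hjv, hjR⟩ := hexit c v hv
    have h3 : Rch H {w | w ∈ ρ c ∨ w = s j} (s c) (s j) := by
      refine (hjR.mono ?_ ?_).trans (Rch.of_adj (hyH c h j hjc hjF) ?_ (Or.inr rfl))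
      · rintro x ⟨hx, hxv⟩; exact Or.inl hx
      · intro a ha b hb hab; exact hρH c h a ha.1 b hb.1 hab
      · exact Or.inl (hyρ c j hjc.symm)
    -- restrict to the bipartite part
    let H' : SimpleGraph V := H ⊓ (bip G χ ⊔ SimpleGraph.fromRel (fun a b => a = s j ∨ b = s j))
    have hc' : IsCert H' (linkT χ ρ F) X U r χ' := ⟨hc.disj, hc.mem, fun u v huv => hc.edge u v huv.1⟩
    have h3' : Rch H' {w | w ∈ ρ c ∨ w = s j} (s c) (s j) := by
      have e1 := hyH c h j hjc hjF
      refine (hjR.mono ?_ ?_).trans (Rch.of_adj ⟨e1, Or.inr ?_⟩ ?_ (Or.inr rfl))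
      · rintro x ⟨hx, hxv⟩; exact Or.inl hx
      · intro a ha b hb hab; exact ⟨hρH c h a ha.1 b hb.1 hab, Or.inl hab⟩
      · rw [fromRel_adj]; exact ⟨e1.ne, Or.inl (Or.inr rfl)⟩
      · exact Or.inl (hyρ c j hjc.symm)
    have h4 := hc'.anchor_const (by
        rintro z (hz | rfl)
        · exact hρX c h z hz
        · exact hjX) (by
        rintro u hu v hv ⟨_, huv⟩
        unfold linkT
        split_ifs with hW
        · rcases huv with huv | huv
          · have := zmod2_eq_of_ne huv.2
            rw [this]; grind
          · rw [fromRel_adj] at huv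
            exfalso
            rcases huv.2 with (e | e) | (e | e)
            · exact hW.1 j hjF (e ▸ hs j)
            · exact hW.2 j hjF (e ▸ hs j)
            · exact hW.2 j hjF (e ▸ hs j)
            · exact hW.1 j hjF (e ▸ hs j)
        · rfl) h3'
    unfold anchor at h4
    rw [if_pos (hPU _ hsc), if_pos (hterm j hjF hjX).1] at h4
    simp only [Option.map_some, Option.some.injEq] at h4
    rw [← h4]; exact (hterm j hjF hjX).2
  have htr : ∀ {a b : V} (q : G.Walk a b), (∀ v ∈ q.support, v ∈ (P i).2.support) →
      wt (fun u v => 1 + χ u + χ v) q = χ' a + χ' b := by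
    intro a b q hq
    induction q with
    | nil => simp only [wt]; grind
    | @cons u v b hh p ih =>
      have hu := hq u (by simp)
      have hv := hq v (by simp)
      simp only [wt]
      rw [ih (fun v hv => hq v (by simp [hv]))]
      rcases hc.edge u v (Or.inl ⟨hh, hPW u hu, hPW v hv⟩) (hc.disj _ (hPU u hu)) (hc.disj _ (hPU v hv)) with h | h | h | h
      · have := h.2.2
        unfold linkT at this
        rw [if_pos ⟨hPW u hu, hPW v hv⟩] at this
        rw [← this]; grind
      · exact absurd (hPU v hv) h.2.1
      · exact absurd (hPU u hu) h.1
      · exact absurd (hPU u hu) h.1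
  have h1 := htr (P i).2 (fun v hv => hv)
  rw [hP.wt_eq i, hl i, hl' i, hzero _ (Or.inl rfl) (hls i), hzero _ (Or.inr rfl) (hls' i)] at h1
  simp at h1

/-- The structure theorem. -/
theorem structure_thm {V : Type} [Fintype V] (G : SimpleGraph V) (χ : V → ZMod 2) (t N M : ℕ)
    (ρ : Fin M → Set V) (hρ : IsModel (bip G χ) Set.univ ρ)
    (hM : 2 * (2 * (4 * t + 1) + 2 * t + 1) < M - 1) (hM' : 2 * (4 * t + 1) + N + 2 ≤ M) :
    (∃ ψ, ∃ Q : Fin t → Set V, IsOddModel G ψ Q) ∨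
    ∃ (X : Finset V) (U : Set V) (r : V → Option V) (c : V → ZMod 2), X.card ≤ 2 * (4 * t + 1) ∧
      (∀ v ∈ U, v ∉ X) ∧ (∀ v u, r v = some u → u ∈ U) ∧
      (∀ u v, G.Adj u v → u ∉ X → v ∉ X →
        (u ∈ U ∧ v ∈ U ∧ c u ≠ c v) ∨ (u ∈ U ∧ v ∉ U ∧ r v = some u) ∨
        (u ∉ U ∧ v ∈ U ∧ r u = some v) ∨ (u ∉ U ∧ v ∉ U ∧ r u = r v)) ∧
      ∀ Y : Finset V, Y.card ≤ N → ∃ u ∈ U, ∃ v ∈ U, u ∉ Y ∧ v ∉ Y ∧ G.Adj u v := by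
  classical
  set τ : V → V → ZMod 2 := fun u v => 1 + χ u + χ v with hτdef
  have hτ : ∀ u v, τ u v = τ v u := fun u v => by simp only [τ]; ring
  have hτB : ∀ u v, (bip G χ).Adj u v → τ u v = 0 := by
    intro u v h
    have := zmod2_eq_of_ne h.2
    simp only [τ]; rw [this]; grind
  have hB : bip G χ ≤ G := fun u v h => h.1
  have huniq : ∀ {v i j}, v ∈ ρ i → v ∈ ρ j → i = j := by
    intro v i j h1 h2
    by_contra e
    exact Set.disjoint_left.1 (hρ.disj i j e) h1 h2
  have hex : ∀ c j, ∃ y z, c ≠ j → y ∈ ρ c ∧ z ∈ ρ j ∧ (bip G χ).Adj y z := by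
    intro c j
    obtain ⟨w, _⟩ := hρ.nonempty c
    by_cases e : c = j
    · exact ⟨w, w, fun h => absurd e h⟩
    · obtain ⟨x, hx, y, hy, h⟩ := hρ.adj c j e
      exact ⟨x, y, fun _ => ⟨hx, hy, h⟩⟩
  choose y z hyz using hex
  choose s hs hcen using fun c => centroid (bip G χ) (ρ c) (hρ.conn c) (hρ.nonempty c)
    (Finset.univ.erase c) (y c) (fun j hj => (hyz c j (Finset.ne_of_mem_erase hj).symm).1)
  have hsinj : Function.Injective s := fun i j e => huniq (hs i) (e ▸ hs j)
  have hcard : ∀ c : Fin M, (Finset.univ.erase c).card = M - 1 := by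
    intro c; rw [Finset.card_erase_of_mem (Finset.mem_univ _), Finset.card_univ, Fintype.card_fin]
  rcases signed_paths G τ hτ (Finset.univ.image s) (4 * t + 1) with ⟨a, b, p, hp⟩ | ⟨X, U, r, χ', hX, hc, hterm⟩
  · left
    have hTs : ∀ v, v ∈ Finset.univ.image s → v ∈ Set.range s := by
      intro v hv; simpa using hv
    obtain ⟨P, hP, hhit⟩ := reroute (k := 4 * t + 1) hB τ hτ ρ hρ s hs hτB
      ⟨fun i => ⟨(a i, b i), p i⟩, ⟨hp.isPath, fun i => hTs _ (hp.left i), fun i => hTs _ (hp.right i), hp.wt_eq, hp.disj⟩⟩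
    choose l hl using hP.left
    choose l' hl' using hP.right
    let F : Set (Fin M) := {j | ∀ i, j ≠ l i ∧ j ≠ l' i}
    let T : Finset V := (Finset.univ.filter (fun j => j ∈ F)).image s
    have hT : ∀ v, v ∈ T ↔ ∃ j ∈ F, v = s j := by
      intro v
      simp only [T, Finset.mem_image, Finset.mem_filter, Finset.mem_univ, true_and]
      exact ⟨fun ⟨j, h, e⟩ => ⟨j, h, e.symm⟩, fun ⟨j, h, e⟩ => ⟨j, h, e.symm⟩⟩
    rcases signed_paths (linkG G χ ρ s hs F) (linkT χ ρ F) (linkT_symm χ ρ F) T t with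
      ⟨a', b', p', hp'⟩ | ⟨X, U, r, χ', hX, hc, hterm⟩
    · exact oddModel_of_family G χ ρ hρ s hs F T hT a' b' p' hp'
    · exfalso
      refine cert_contra G χ ρ hρ s hs y (fun c j h => ⟨z c j, (hyz c j h).2⟩) (fun c j h => (hyz c j h).1)
        (fun c v hv => ?_) P hP l l' (fun i => (hl i).symm) (fun i => (hl' i).symm) ?_ (by omega) hM F
        (fun j => Iff.rfl) X U r χ' hX hc ?_
      · have := hcen c v hv
        rw [hcard] at this
        exact this
      · intro j hj
        obtain ⟨i, hi⟩ := hhit j hj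
        refine ⟨i, ?_⟩
        rw [← hl i, ← hl' i] at hi
        rcases hi with hi | hi
        · exact Or.inl (hsinj hi).symm
        · exact Or.inr (hsinj hi).symm
      · intro j hj hjX
        exact hterm _ ((hT _).2 ⟨j, hj, rfl⟩) hjX
  · right
    refine ⟨X, U, r, fun v => χ v + χ' v, hX, hc.disj, hc.mem, ?_, ?_⟩
    · intro u v huv hu hv
      rcases hc.edge u v huv hu hv with h | h | h | h
      · left
        refine ⟨h.1, h.2.1, ?_⟩
        have := h.2.2
        simp only [τ] at this
        change χ u + χ' u ≠ χ v + χ' v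
        revert this
        generalize χ u = A
        generalize χ v = B
        generalize χ' u = C
        generalize χ' v = D
        revert A B C D; decide
      · exact Or.inr (Or.inl h)
      · exact Or.inr (Or.inr (Or.inl h))
      · exact Or.inr (Or.inr (Or.inr h))
    · intro Y hY
      by_contra hcon
      push Not at hcon
      let Bd : Finset (Fin M) := (X ∪ Y).biUnion (fun x => Finset.univ.filter (fun c => x ∈ ρ c))
      have hBd : Bd.card ≤ (X ∪ Y).card * 1 := by
        apply Finset.card_biUnion_le_card_mul
        intro x _
        rw [Finset.card_le_one]
        intro i hi m hm
        simp only [Finset.mem_filter, Finset.mem_univ, true_and] at hi hm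
        exact huniq hi hm
      have hXY := Finset.card_union_le X Y
      have hcomp := Finset.card_compl Bd
      rw [Fintype.card_fin] at hcomp
      obtain ⟨c1, hc1, c2, hc2, hne⟩ := Finset.one_lt_card.1 (show 1 < Bdᶜ.card by omega)
      have hgood : ∀ c, c ∈ Bdᶜ → ∀ v ∈ ρ c, v ∉ X ∧ v ∉ Y := by
        intro c hc v hv
        simp only [Bd, Finset.mem_compl, Finset.mem_biUnion, Finset.mem_filter, Finset.mem_univ, true_and,
          Finset.mem_union, not_exists, not_and] at hc
        exact ⟨fun h => hc v (Or.inl h) hv, fun h => hc v (Or.inr h) hv⟩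
      have hZ : ∀ v ∈ ρ c1 ∪ ρ c2, v ∉ X ∧ v ∉ Y := by
        rintro v (hv | hv)
        · exact hgood c1 hc1 v hv
        · exact hgood c2 hc2 v hv
      have hR : Rch (bip G χ) (ρ c1 ∪ ρ c2) (s c1) (s c2) := by
        obtain ⟨e1, e2, e3⟩ := hyz c1 c2 hne
        exact ((hρ.conn c1 _ (hs c1) _ e1).mono Set.subset_union_left (fun _ _ _ _ h => h)).trans
          ((Rch.of_adj e3 (Or.inl e1) (Or.inr e2)).trans
          ((hρ.conn c2 _ e2 _ (hs c2)).mono Set.subset_union_right (fun _ _ _ _ h => h)))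
      have hconst : ∀ w, Rch (bip G χ) (ρ c1 ∪ ρ c2) (s c1) w → anchor U r w = anchor U r (s c1) := by
        intro w hw
        induction hw with
        | refl => rfl
        | @tail w w' _ h2 ih =>
          rw [← ih]
          unfold anchor
          rcases hc.edge w w' h2.1.1 (hZ _ h2.2.1).1 (hZ _ h2.2.2).1 with h | h | h | h
          · exact absurd h2.1.1 (hcon w h.1 w' h.2.1 (hZ _ h2.2.1).2 (hZ _ h2.2.2).2)
          · rw [if_pos h.1, if_neg h.2.1, h.2.2]
          · rw [if_neg h.1, if_pos h.2.1, h.2.2]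
          · rw [if_neg h.1, if_neg h.2.1, h.2.2]
      have h1 := hconst _ hR
      unfold anchor at h1
      have hU : ∀ c, c ∈ Bdᶜ → s c ∈ U := fun c hc =>
        (hterm (s c) (Finset.mem_image_of_mem s (Finset.mem_univ c)) (hgood c hc _ (hs c)).1).1
      rw [if_pos (hU c1 hc1), if_pos (hU c2 hc2)] at h1
      exact hne (hsinj (Option.some.inj h1)).symm

/-- Some colour appears a number of times in `S` on the neighbours of `v` inside `A`. -/
def Ach {V : Type} (G : SimpleGraph V) (S : Set ℕ) (A : Finset V) (ψ : V → ℕ) (v : V) : Prop :=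
  ∃ s ∈ S, ∃ c, {u | u ∈ A ∧ G.Adj v u ∧ ψ u = c}.ncard = s

theorem Ach.congr {V : Type} {G : SimpleGraph V} {S : Set ℕ} {A A' : Finset V} {ψ ψ' : V → ℕ} {v : V}
    (h : Ach G S A ψ v) (h1 : ∀ u, G.Adj v u → (u ∈ A ↔ u ∈ A')) (h2 : ∀ u ∈ A, G.Adj v u → ψ u = ψ' u) :
    Ach G S A' ψ' v := by
  obtain ⟨s, hs, c, hc⟩ := h
  refine ⟨s, hs, c, ?_⟩
  rw [← hc]
  congr 1
  ext u
  simp only [Set.mem_ofPred_eq]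
  constructor
  · rintro ⟨a1, a2, a3⟩
    have := (h1 u a2).2 a1
    exact ⟨this, a2, by rw [h2 u this a2]; exact a3⟩
  · rintro ⟨a1, a2, a3⟩
    exact ⟨(h1 u a2).1 a1, a2, by rw [← h2 u a1 a2]; exact a3⟩

theorem Ach.of_unique {V : Type} {G : SimpleGraph V} {S : Set ℕ} (hS : 1 ∈ S) {A : Finset V} {ψ : V → ℕ} {v w : V}
    (hw : w ∈ A) (hvw : G.Adj v w) (h : ∀ u ∈ A, G.Adj v u → ψ u = ψ w → u = w) : Ach G S A ψ v := by
  refine ⟨1, hS, ψ w, ?_⟩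
  rw [Set.ncard_eq_one]
  refine ⟨w, ?_⟩
  ext u
  simp only [Set.mem_ofPred_eq, Set.mem_singleton_iff]
  constructor
  · rintro ⟨a1, a2, a3⟩; exact h u a1 a2 a3
  · rintro rfl; exact ⟨hw, hvw, rfl⟩

/-- A precoloured state. -/
structure IsState {V : Type} (G : SimpleGraph V) (S : Set ℕ) (A Z : Finset V) (φ : V → ℕ) : Prop where
  sub : Z ⊆ A
  proper : ∀ u ∈ Z, ∀ v ∈ Z, G.Adj u v → φ u ≠ φ v
  ach : ∀ v ∈ A, v ∉ Z → (∃ u ∈ A, G.Adj v u) → (∀ u ∈ A, G.Adj v u → u ∈ Z) → Ach G S A φ v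

/-- An extension of a precoloured state. -/
structure IsExt {V : Type} (G : SimpleGraph V) (S : Set ℕ) (L : V → Finset ℕ) (A Z : Finset V)
    (φ f ψ : V → ℕ) : Prop where
  eq : ∀ z ∈ Z, ψ z = φ z
  mem : ∀ v ∈ A, v ∉ Z → ψ v ∈ L v
  proper : ∀ u ∈ A, ∀ v ∈ A, G.Adj u v → ψ u ≠ ψ v
  avoid : ∀ z ∈ Z, ∀ u ∈ A, u ∉ Z → G.Adj z u → ψ u ≠ f z
  ach : ∀ v ∈ A, v ∉ Z → (∃ u ∈ A, G.Adj v u) → Ach G S A ψ v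

theorem fresh {V : Type} [DecidableEq V] (l : Finset ℕ) (Z : Finset V) (φ f : V → ℕ) (d : ℕ)
    (h : 2 * Z.card + 1 < l.card) :
    ∃ c ∈ l, c ≠ d ∧ ∀ z ∈ Z, c ≠ φ z ∧ c ≠ f z := by
  have h1 : (insert d (Z.image φ ∪ Z.image f)).card < l.card := by
    have a1 := Finset.card_insert_le d (Z.image φ ∪ Z.image f)
    have a2 := Finset.card_union_le (Z.image φ) (Z.image f)
    have a3 : (Z.image φ).card ≤ Z.card := Finset.card_image_le
    have a4 : (Z.image f).card ≤ Z.card := Finset.card_image_le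
    omega
  obtain ⟨c, hc, hc'⟩ := Finset.exists_mem_notMem_of_card_lt_card h1
  simp only [Finset.mem_insert, Finset.mem_union, Finset.mem_image, not_or, not_exists, not_and] at hc'
  exact ⟨c, hc, hc'.1, fun z hz => ⟨fun e => hc'.2.1 z hz e.symm, fun e => hc'.2.2 z hz e.symm⟩⟩

theorem absorb_one {V : Type} {G : SimpleGraph V} {S : Set ℕ} (hS : 1 ∈ S) {L : V → Finset ℕ}
    {A Z : Finset V} {φ f : V → ℕ} (h : IsState G S A Z φ) (x : V) (hx : x ∈ A)
    (hL : ∀ v, 2 * Z.card + 1 < (L v).card) :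
    ∃ (Z' : Finset V) (φ' f' : V → ℕ), IsState G S A Z' φ' ∧ Z ⊆ Z' ∧ x ∈ Z' ∧ Z'.card ≤ Z.card + 2 ∧
      ∀ ψ, IsExt G S L A Z' φ' f' ψ → IsExt G S L A Z φ f ψ := by
  classical
  by_cases hxZ : x ∈ Z
  · exact ⟨Z, φ, f, h, subset_rfl, hxZ, by omega, fun ψ hψ => hψ⟩
  by_cases hN : ∀ u ∈ A, G.Adj x u → u ∈ Z
  · obtain ⟨c, hc, -, hcZ⟩ := fresh (L x) Z φ f 0 (hL x)
    have hne : ∀ z ∈ Z, z ≠ x := by rintro z hz rfl; exact hxZ hz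
    have hold : ∀ z ∈ Z, Function.update φ x c z = φ z := fun z hz => Function.update_of_ne (hne z hz) _ _
    refine ⟨insert x Z, Function.update φ x c, f, ⟨?_, ?_, ?_⟩, Finset.subset_insert _ _,
      Finset.mem_insert_self _ _, (Finset.card_insert_le _ _).trans (by omega), ?_⟩
    · exact Finset.insert_subset hx h.sub
    · intro u hu v hv huv
      rw [Finset.mem_insert] at hu hv
      rcases hu with rfl | hu <;> rcases hv with rfl | hv
      · exact absurd huv (G.loopless.irrefl _)
      · rw [Function.update_self, hold v hv]; exact (hcZ v hv).1
      · rw [Function.update_self, hold u hu]; exact (hcZ u hu).1.symm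
      · rw [hold u hu, hold v hv]; exact h.proper u hu v hv huv
    · intro v hv hvZ hex hall
      rw [Finset.mem_insert, not_or] at hvZ
      have hall' : ∀ u ∈ A, G.Adj v u → u ∈ Z := by
        intro u hu hvu
        rcases Finset.mem_insert.1 (hall u hu hvu) with rfl | h'
        · exact absurd (hN v hv hvu.symm) hvZ.2
        · exact h'
      exact (h.ach v hv hvZ.2 hex hall').congr (fun _ _ => Iff.rfl)
        (fun u hu hvu => (hold u (hall' u hu hvu)).symm)
    · intro ψ hψ
      have heq : ∀ z ∈ Z, ψ z = φ z := fun z hz => by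
        rw [hψ.eq z (Finset.mem_insert_of_mem hz), hold z hz]
      have hψx : ψ x = c := by rw [hψ.eq x (Finset.mem_insert_self _ _), Function.update_self]
      refine ⟨heq, ?_, hψ.proper, ?_, ?_⟩
      · intro v hv hvZ
        by_cases e : v = x
        · subst e; rw [hψx]; exact hc
        · exact hψ.mem v hv (by simp [e, hvZ])
      · intro z hz u hu huZ hzu
        by_cases e : u = x
        · subst e; rw [hψx]; exact (hcZ z hz).2
        · exact hψ.avoid z (Finset.mem_insert_of_mem hz) u hu (by simp [e, huZ]) hzu
      · intro v hv hvZ hex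
        by_cases e : v = x
        · subst e
          exact (h.ach v hv hvZ hex hN).congr (fun _ _ => Iff.rfl) (fun u hu hvu => (heq u (hN u hu hvu)).symm)
        · exact hψ.ach v hv (by simp [e, hvZ]) hex
  · push Not at hN
    obtain ⟨y, hy, hxy, hyZ⟩ := hN
    obtain ⟨c, hc, -, hcZ⟩ := fresh (L x) Z φ f 0 (hL x)
    obtain ⟨d, hd, hdc, hdZ⟩ := fresh (L y) Z φ f c (hL y)
    have hne : x ≠ y := hxy.ne
    let φ' : V → ℕ := fun v => if v = x then c else if v = y then d else φ v
    let f' : V → ℕ := fun v => if v = x then d else if v = y then c else f v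
    have hold : ∀ z ∈ Z, φ' z = φ z ∧ f' z = f z := by
      intro z hz
      have h1 : z ≠ x := by rintro rfl; exact hxZ hz
      have h2 : z ≠ y := by rintro rfl; exact hyZ hz
      simp [φ', f', h1, h2]
    have ex : φ' x = c ∧ f' x = d := by simp [φ', f']
    have ey : φ' y = d ∧ f' y = c := by simp [φ', f', hne.symm]
    have hmem : ∀ v, v ∈ insert x (insert y Z) ↔ v = x ∨ v = y ∨ v ∈ Z := by simp
    refine ⟨insert x (insert y Z), φ', f', ⟨?_, ?_, ?_⟩, ?_, by simp, ?_, ?_⟩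
    · exact Finset.insert_subset hx (Finset.insert_subset hy h.sub)
    · intro u hu v hv huv
      rw [hmem] at hu hv
      rcases hu with rfl | rfl | hu <;> rcases hv with rfl | rfl | hv
      · exact absurd huv (G.loopless.irrefl _)
      · rw [ex.1, ey.1]; exact hdc.symm
      · rw [ex.1, (hold v hv).1]; exact (hcZ v hv).1
      · rw [ex.1, ey.1]; exact hdc
      · exact absurd huv (G.loopless.irrefl _)
      · rw [ey.1, (hold v hv).1]; exact (hdZ v hv).1
      · rw [ex.1, (hold u hu).1]; exact (hcZ u hu).1.symm
      · rw [ey.1, (hold u hu).1]; exact (hdZ u hu).1.symm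
      · rw [(hold u hu).1, (hold v hv).1]; exact h.proper u hu v hv huv
    · intro v hv hvZ hex hall
      rw [hmem] at hvZ
      push Not at hvZ
      by_cases hvx : G.Adj v x
      · refine Ach.of_unique hS hx hvx ?_
        intro u hu hvu he
        rcases (hmem u).1 (hall u hu hvu) with rfl | rfl | h'
        · rfl
        · rw [ex.1, ey.1] at he; exact absurd he hdc
        · rw [ex.1, (hold u h').1] at he; exact absurd he.symm (hcZ u h').1
      by_cases hvy : G.Adj v y
      · refine Ach.of_unique hS hy hvy ?_
        intro u hu hvu he
        rcases (hmem u).1 (hall u hu hvu) with rfl | rfl | h'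
        · exact absurd hvu hvx
        · rfl
        · rw [ey.1, (hold u h').1] at he; exact absurd he.symm (hdZ u h').1
      have hall' : ∀ u ∈ A, G.Adj v u → u ∈ Z := by
        intro u hu hvu
        rcases (hmem u).1 (hall u hu hvu) with rfl | rfl | h'
        · exact absurd hvu hvx
        · exact absurd hvu hvy
        · exact h'
      exact (h.ach v hv hvZ.2.2 hex hall').congr (fun _ _ => Iff.rfl)
        (fun u hu hvu => (hold u (hall' u hu hvu)).1.symm)
    · intro z hz; rw [hmem]; exact Or.inr (Or.inr hz)
    · have a1 := Finset.card_insert_le x (insert y Z)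
      have a2 := Finset.card_insert_le y Z
      omega
    · intro ψ hψ
      have heq : ∀ z ∈ Z, ψ z = φ z := fun z hz => by
        rw [hψ.eq z ((hmem z).2 (Or.inr (Or.inr hz))), (hold z hz).1]
      have hψx : ψ x = c := by rw [hψ.eq x (by simp), ex.1]
      have hψy : ψ y = d := by rw [hψ.eq y (by simp), ey.1]
      refine ⟨heq, ?_, hψ.proper, ?_, ?_⟩
      · intro v hv hvZ
        by_cases e : v = x
        · subst e; rw [hψx]; exact hc
        by_cases e' : v = y
        · subst e'; rw [hψy]; exact hd
        · exact hψ.mem v hv (by simp [e, e', hvZ])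
      · intro z hz u hu huZ hzu
        by_cases e : u = x
        · subst e; rw [hψx]; exact (hcZ z hz).2
        by_cases e' : u = y
        · subst e'; rw [hψy]; exact (hdZ z hz).2
        · rw [← (hold z hz).2]
          exact hψ.avoid z (by simp [hz]) u hu (by simp [e, e', huZ]) hzu
      · intro v hv hvZ hex
        by_cases e : v = x
        · subst e
          refine Ach.of_unique hS hy hxy ?_
          intro u hu hvu he
          by_contra huy
          rw [hψy] at he
          by_cases huZ : u ∈ Z
          · rw [heq u huZ] at he; exact (hdZ u huZ).1 he.symm
          · refine hψ.avoid v (by simp) u hu (by simp [huZ, huy, hvu.ne.symm]) hvu ?_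
            rw [ex.2]; exact he
        by_cases e' : v = y
        · subst e'
          refine Ach.of_unique hS hx hxy.symm ?_
          intro u hu hvu he
          by_contra hux
          rw [hψx] at he
          by_cases huZ : u ∈ Z
          · rw [heq u huZ] at he; exact (hcZ u huZ).1 he.symm
          · refine hψ.avoid v (by simp) u hu (by simp [huZ, hux, hvu.ne.symm]) hvu ?_
            rw [ey.2]; exact he
        · exact hψ.ach v hv (by simp [e, e', hvZ]) hex

theorem absorb {V : Type} {G : SimpleGraph V} {S : Set ℕ} (hS : 1 ∈ S) {L : V → Finset ℕ}
    {A : Finset V} (X : Finset V) : ∀ {Z : Finset V} {φ f : V → ℕ}, IsState G S A Z φ → X ⊆ A →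
    (∀ v, 2 * (Z.card + 2 * X.card) + 1 < (L v).card) →
    ∃ (Z' : Finset V) (φ' f' : V → ℕ), IsState G S A Z' φ' ∧ Z ⊆ Z' ∧ X ⊆ Z' ∧
      Z'.card ≤ Z.card + 2 * X.card ∧
      ∀ ψ, IsExt G S L A Z' φ' f' ψ → IsExt G S L A Z φ f ψ := by
  classical
  induction X using Finset.induction_on with
  | empty => intro Z φ f h _ _; exact ⟨Z, φ, f, h, subset_rfl, by simp, by simp, fun ψ h => h⟩
  | insert x X hxX ih =>
    intro Z φ f h hXA hL
    rw [Finset.card_insert_of_notMem hxX] at hL ⊢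
    obtain ⟨Z1, φ1, f1, h1, h2, h3, h4, h5⟩ := absorb_one (L := L) hS (f := f) h x (hXA (Finset.mem_insert_self _ _))
      (fun v => by have := hL v; omega)
    obtain ⟨Z2, φ2, f2, g1, g2, g3, g4, g5⟩ := ih (f := f1) h1 (fun v hv => hXA (Finset.mem_insert_of_mem hv))
      (fun v => by have := hL v; omega)
    exact ⟨Z2, φ2, f2, g1, h2.trans g2, Finset.insert_subset (g2 h3) g3, by omega, fun ψ h => h5 ψ (g5 ψ h)⟩

theorem greedy_case {V : Type} {G : SimpleGraph V} {S : Set ℕ} (hS : 1 ∈ S) {L : V → Finset ℕ}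
    {A Z : Finset V} {φ f : V → ℕ} (h : IsState G S A Z φ) (M : ℕ)
    (hno : ¬ BipModel G ({v | v ∈ A ∧ v ∉ Z}) M)
    (hL : ∀ v, 2 * Z.card + (2 * q1 M + q2 M) < (L v).card) : ∃ ψ, IsExt G S L A Z φ f ψ := by
  classical
  have hW : (↑(A \ Z) : Set V) = {v | v ∈ A ∧ v ∉ Z} := by ext v; simp
  obtain ⟨φ0, h1, h2, h3⟩ := greedy G (A \ Z) M (by rw [hW]; exact hno)
    (fun v => L v \ (Z.image φ ∪ Z.image f)) (by
      intro v _
      have a1 := Finset.le_card_sdiff (Z.image φ ∪ Z.image f) (L v)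
      have a2 := Finset.card_union_le (Z.image φ) (Z.image f)
      have a3 : (Z.image φ).card ≤ Z.card := Finset.card_image_le
      have a4 : (Z.image f).card ≤ Z.card := Finset.card_image_le
      have := hL v
      omega)
  have h1' : ∀ v ∈ A, v ∉ Z → φ0 v ∈ L v ∧ ∀ z ∈ Z, φ0 v ≠ φ z ∧ φ0 v ≠ f z := by
    intro v hv hvZ
    have := h1 v (Finset.mem_sdiff.2 ⟨hv, hvZ⟩)
    simp only [Finset.mem_sdiff, Finset.mem_union, Finset.mem_image, not_or, not_exists, not_and] at this
    exact ⟨this.1, fun z hz => ⟨fun e => this.2.1 z hz e.symm, fun e => this.2.2 z hz e.symm⟩⟩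
  let ψ : V → ℕ := fun v => if v ∈ Z then φ v else φ0 v
  have e1 : ∀ v ∈ Z, ψ v = φ v := fun v hv => by simp [ψ, hv]
  have e2 : ∀ v, v ∉ Z → ψ v = φ0 v := fun v hv => by simp [ψ, hv]
  refine ⟨ψ, e1, ?_, ?_, ?_, ?_⟩
  · intro v hv hvZ; rw [e2 v hvZ]; exact (h1' v hv hvZ).1
  · intro u hu v hv huv
    by_cases hu' : u ∈ Z <;> by_cases hv' : v ∈ Z
    · rw [e1 u hu', e1 v hv']; exact h.proper u hu' v hv' huv
    · rw [e1 u hu', e2 v hv']; exact ((h1' v hv hv').2 u hu').1.symm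
    · rw [e2 u hu', e1 v hv']; exact ((h1' u hu hu').2 v hv').1
    · rw [e2 u hu', e2 v hv']; exact h2 u (by simp [hu, hu']) v (by simp [hv, hv']) huv
  · intro z hz u hu huZ _
    rw [e2 u huZ]; exact ((h1' u hu huZ).2 z hz).2
  · intro v hv hvZ hex
    by_cases hN : ∀ u ∈ A, G.Adj v u → u ∈ Z
    · exact (h.ach v hv hvZ hex hN).congr (fun _ _ => Iff.rfl) (fun u hu hvu => (e1 u (hN u hu hvu)).symm)
    · push Not at hN
      obtain ⟨w, hw, hvw, hwZ⟩ := hN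
      obtain ⟨w, hw, hvw, huniq⟩ := h3 v (by simp [hv, hvZ]) ⟨w, by simp [hw, hwZ], hvw⟩
      rw [Finset.mem_sdiff] at hw
      refine Ach.of_unique hS hw.1 hvw ?_
      intro u hu hvu he
      rw [e2 w hw.2] at he
      by_cases huZ : u ∈ Z
      · rw [e1 u huZ] at he; exact absurd he.symm ((h1' w hw.1 hw.2).2 u huZ).1
      · rw [e2 u huZ] at he; exact huniq u (by simp [hu, huZ]) hvu he

theorem heavy_case {V : Type} {G : SimpleGraph V} {S : Set ℕ} (hS : 1 ∈ S) {L : V → Finset ℕ}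
    {A Z : Finset V} {φ f : V → ℕ} (h : IsState G S A Z φ) (N : ℕ) (hZN : Z.card ≤ N)
    (IH : ∀ A' : Finset V, A'.card < A.card → ∀ (Z' : Finset V) (φ' f' : V → ℕ), IsState G S A' Z' φ' →
      Z'.card ≤ N → ∃ ψ, IsExt G S L A' Z' φ' f' ψ)
    (C NC : Finset V) (hCA : C ⊆ A) (hNCA : NC ⊆ A) (hCNC : ∀ v ∈ C, v ∉ NC)
    (hN : ∀ v ∈ C, ∀ u ∈ A, G.Adj v u → u ∈ C ∨ u ∈ NC) (hCne : C.Nonempty)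
    (hheavy : open Classical in 2 * NC.card ≤ (Z ∩ C).card)
    (hrich : ∃ u ∈ A, ∃ v ∈ A, G.Adj u v ∧ u ∉ C ∧ u ∉ Z ∧ u ∉ NC ∧ v ∉ Z ∧ v ∉ NC)
    (hL : ∀ v, 2 * (Z.card + 2 * NC.card) + 1 < (L v).card) :
    ∃ ψ, IsExt G S L A Z φ f ψ := by
  classical
  obtain ⟨Cs, hCs⟩ : ∃ Cs : Finset V, ∀ v, v ∈ Cs ↔ v ∈ C ∨ (v ∈ A ∧ v ∉ C ∧ v ∉ NC ∧ v ∉ Z ∧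
      (∀ u ∈ A, G.Adj v u → u ∈ NC ∨ u ∈ Z) ∧ ∃ u ∈ A, G.Adj v u ∧ u ∉ Z) :=
    ⟨C ∪ A.filter (fun v => v ∉ C ∧ v ∉ NC ∧ v ∉ Z ∧
      (∀ u ∈ A, G.Adj v u → u ∈ NC ∨ u ∈ Z) ∧ ∃ u ∈ A, G.Adj v u ∧ u ∉ Z), by simp⟩
  have F1 : ∀ v ∈ Cs, ∀ u ∈ A, G.Adj v u → u ∈ Cs ∨ u ∈ NC ∨ u ∈ Z := by
    intro v hv u hu hvu
    rcases (hCs v).1 hv with h' | h'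
    · rcases hN v h' u hu hvu with h'' | h''
      · exact Or.inl ((hCs u).2 (Or.inl h''))
      · exact Or.inr (Or.inl h'')
    · exact Or.inr (h'.2.2.2.2.1 u hu hvu)
  have F2 : ∀ v ∈ Cs, v ∈ A ∧ v ∉ NC := by
    intro v hv
    rcases (hCs v).1 hv with h' | h'
    · exact ⟨hCA h', hCNC v h'⟩
    · exact ⟨h'.1, h'.2.2.1⟩
  have F4 : ∀ v ∈ A, v ∉ Cs → v ∉ NC → v ∉ Z → (∀ u ∈ A, G.Adj v u → u ∈ NC ∨ u ∈ Z) →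
      ∀ u ∈ A, G.Adj v u → u ∈ Z := by
    intro v hv h1 h2 h3 h4 u hu hvu
    by_contra huZ
    rw [hCs] at h1
    push Not at h1
    exact huZ (h1.2 hv h1.1 h2 h3 h4 u hu hvu)
  obtain ⟨N1, hN1⟩ : ∃ N1 : Finset V, ∀ v, v ∈ N1 ↔ v ∈ NC ∧ v ∉ Z ∧ ∃ u ∈ A, G.Adj v u ∧ (u ∈ Cs ∨ u ∈ NC) ∧ u ∉ Z :=
    ⟨NC.filter (fun v => v ∉ Z ∧ ∃ u ∈ A, G.Adj v u ∧ (u ∈ Cs ∨ u ∈ NC) ∧ u ∉ Z), by simp⟩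
  have F6 : ∀ v ∈ A, v ∉ Cs → v ∉ NC → v ∉ Z → ∀ u ∈ Cs, ¬ G.Adj v u := by
    intro v hv h1 h2 h3 u hu hvu
    rcases F1 u hu v hv hvu.symm with h' | h' | h'
    · exact h1 h'
    · exact h2 h'
    · exact h3 h'
  have F5 : ∀ v ∈ A, v ∉ Cs → v ∉ Z → v ∉ N1 → ∀ u ∈ Cs, u ∉ Z → ¬ G.Adj v u := by
    intro v hv h1 h2 h3 u hu huZ hvu
    by_cases h4 : v ∈ NC
    · exact h3 ((hN1 v).2 ⟨h4, h2, u, (F2 u hu).1, hvu, Or.inl hu, huZ⟩)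
    · exact F6 v hv h1 h4 h2 u hu hvu
  obtain ⟨A', hA'⟩ : ∃ A' : Finset V, ∀ v, v ∈ A' ↔ v ∈ Cs ∨ v ∈ Z ∨ v ∈ N1 := ⟨Cs ∪ (Z ∪ N1), by simp⟩
  have hN1A : ∀ v ∈ N1, v ∈ A := fun v hv => hNCA ((hN1 v).1 hv).1
  have hN1Z : ∀ v ∈ N1, v ∉ Z := fun v hv => ((hN1 v).1 hv).2.1
  have hN1C : ∀ v ∈ N1, v ∉ Cs := fun v hv hc => (F2 v hc).2 ((hN1 v).1 hv).1
  have hA'A : A' ⊆ A := by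
    intro v hv
    rcases (hA' v).1 hv with h' | h' | h'
    · exact (F2 v h').1
    · exact h.sub h'
    · exact hN1A v h'
  -- neighbours of Cs \ Z inside A'
  have F7 : ∀ v ∈ Cs, v ∉ Z → ∀ u ∈ A, G.Adj v u → u ∈ A' := by
    intro v hv hvZ u hu hvu
    by_contra hu'
    rw [hA'] at hu'
    push Not at hu'
    exact F5 u hu hu'.1 hu'.2.1 hu'.2.2 v hv hvZ hvu.symm
  have hlt1 : A'.card < A.card := by
    apply Finset.card_lt_card
    refine ⟨hA'A, fun hsub => ?_⟩
    obtain ⟨u, hu, v, hv, huv, h1, h2, h3, h4, h5⟩ := hrich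
    rcases (hA' u).1 (hsub hu) with h' | h' | h'
    · rcases (hCs u).1 h' with h'' | h''
      · exact h1 h''
      · rcases h''.2.2.2.2.1 v hv huv with a | a
        · exact h5 a
        · exact h4 a
    · exact h2 h'
    · exact h3 ((hN1 u).1 h').1
  have hst1 : IsState G S A' Z φ := by
    refine ⟨fun v hv => (hA' v).2 (Or.inr (Or.inl hv)), h.proper, ?_⟩
    intro v hv hvZ hex hall
    rcases (hA' v).1 hv with h' | h' | h'
    · have e : ∀ u, G.Adj v u → (u ∈ A ↔ u ∈ A') := fun u hvu => ⟨fun hu => F7 v h' hvZ u hu hvu, fun hu => hA'A hu⟩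
      obtain ⟨u, hu, hvu⟩ := hex
      exact (h.ach v (hA'A hv) hvZ ⟨u, hA'A hu, hvu⟩ (fun u hu hvu => hall u ((e u hvu).1 hu) hvu)).congr e
        (fun _ _ _ => rfl)
    · exact absurd h' hvZ
    · exfalso
      obtain ⟨h1, h2, u, hu, hvu, hu1, hu2⟩ := (hN1 v).1 h'
      refine hu2 (hall u ?_ hvu)
      rw [hA']
      rcases hu1 with hu1 | hu1
      · exact Or.inl hu1
      · exact Or.inr (Or.inr ((hN1 u).2 ⟨hu1, hu2, v, hA'A hv, hvu.symm, Or.inr h1, h2⟩))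
  obtain ⟨ψ1, hψ1⟩ := IH A' hlt1 Z φ f hst1 hZN
  -- protected colours on N1
  have hprot : ∀ v, ∃ c, v ∈ N1 → ∃ s ∈ S, {u | u ∈ A' ∧ G.Adj v u ∧ ψ1 u = c}.ncard = s := by
    intro v
    by_cases hv : v ∈ N1
    · obtain ⟨h1, h2, u, hu, hvu, hu1, hu2⟩ := (hN1 v).1 hv
      have huA' : u ∈ A' := by
        rw [hA']
        rcases hu1 with hu1 | hu1
        · exact Or.inl hu1
        · exact Or.inr (Or.inr ((hN1 u).2 ⟨hu1, hu2, v, hN1A v hv, hvu.symm, Or.inr h1, h2⟩))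
      obtain ⟨s, hs, c, hc⟩ := hψ1.ach v ((hA' v).2 (Or.inr (Or.inr hv))) h2 ⟨u, huA', hvu⟩
      exact ⟨c, fun _ => ⟨s, hs, hc⟩⟩
    · exact ⟨0, fun h => absurd h hv⟩
  choose pc hpc using hprot
  let f2 : V → ℕ := fun v => if v ∈ N1 then pc v else f v
  obtain ⟨A2, hA2⟩ : ∃ A2 : Finset V, ∀ v, v ∈ A2 ↔ v ∈ A ∧ (v ∉ Cs ∨ v ∈ Z) :=
    ⟨A.filter (fun v => v ∉ Cs ∨ v ∈ Z), by simp⟩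
  have hA2A : A2 ⊆ A := fun v hv => ((hA2 v).1 hv).1
  have hst2 : IsState G S A2 (Z ∪ N1) ψ1 := by
    refine ⟨?_, ?_, ?_⟩
    · intro v hv
      rw [Finset.mem_union] at hv
      rw [hA2]
      rcases hv with hv | hv
      · exact ⟨h.sub hv, Or.inr hv⟩
      · exact ⟨hN1A v hv, Or.inl (hN1C v hv)⟩
    · intro u hu v hv huv
      rw [Finset.mem_union] at hu hv
      exact hψ1.proper u ((hA' u).2 (Or.inr hu)) v ((hA' v).2 (Or.inr hv)) huv
    · intro v hv hvZ hex hall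
      rw [Finset.mem_union, not_or] at hvZ
      obtain ⟨hvA, hvC⟩ := (hA2 v).1 hv
      have hvC : v ∉ Cs := by tauto
      have e : ∀ u, G.Adj v u → (u ∈ A ↔ u ∈ A2) := by
        intro u hvu
        refine ⟨fun hu => (hA2 u).2 ⟨hu, ?_⟩, fun hu => hA2A hu⟩
        by_contra hcon
        push Not at hcon
        exact F5 v hvA hvC hvZ.1 hvZ.2 u hcon.1 hcon.2 hvu
      have hallZ : ∀ u ∈ A, G.Adj v u → u ∈ Z := by
        by_cases hvN : v ∈ NC
        · intro u hu hvu
          by_contra huZ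
          have := hall u ((e u hvu).1 hu) hvu
          rw [Finset.mem_union] at this
          have hu1 : u ∈ N1 := by tauto
          exact hvZ.2 ((hN1 v).2 ⟨hvN, hvZ.1, u, hu, hvu, Or.inr ((hN1 u).1 hu1).1, huZ⟩)
        · refine F4 v hvA hvC hvN hvZ.1 ?_
          intro u hu hvu
          have := hall u ((e u hvu).1 hu) hvu
          rw [Finset.mem_union] at this
          rcases this with a | a
          · exact Or.inr a
          · exact Or.inl ((hN1 u).1 a).1
      obtain ⟨u, hu, hvu⟩ := hex
      exact (h.ach v hvA hvZ.1 ⟨u, hA2A hu, hvu⟩ hallZ).congr e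
        (fun u hu hvu => (hψ1.eq u (hallZ u hu hvu)).symm)
  -- absorb N2
  obtain ⟨N2, hN2⟩ : ∃ N2 : Finset V, ∀ v, v ∈ N2 ↔ v ∈ NC ∧ v ∉ Z ∧ v ∉ N1 :=
    ⟨NC.filter (fun v => v ∉ Z ∧ v ∉ N1), by simp⟩
  have hcN : N1.card + N2.card ≤ NC.card := by
    rw [← Finset.card_union_of_disjoint]
    · apply Finset.card_le_card
      intro v hv
      rw [Finset.mem_union, hN1, hN2] at hv
      rcases hv with hv | hv <;> exact hv.1
    · rw [Finset.disjoint_left]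
      intro v hv hv'
      exact ((hN2 v).1 hv').2.2 hv
  have hcU := Finset.card_union_le Z N1
  obtain ⟨Z3, φ3, f3, hst3, hZ3, hN2Z3, hcZ3, htr⟩ := absorb (L := L) hS N2 (f := f2) hst2 (by
    intro v hv
    have hv' := (hN2 v).1 hv
    rw [hA2]
    exact ⟨hNCA hv'.1, Or.inl fun hc => (F2 v hc).2 hv'.1⟩) (fun v => by have := hL v; omega)
  have hZ3Z : ∀ v ∈ Z, v ∈ Z3 := fun v hv => hZ3 (Finset.mem_union_left _ hv)
  have hZ3N : ∀ v ∈ NC, v ∈ Z3 := by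
    intro v hv
    by_cases h1 : v ∈ Z
    · exact hZ3Z v h1
    by_cases h2 : v ∈ N1
    · exact hZ3 (Finset.mem_union_right _ h2)
    · exact hN2Z3 ((hN2 v).2 ⟨hv, h1, h2⟩)
  -- outside vertices do not see Cs
  have F8 : ∀ v ∈ A2, v ∉ Z3 → v ∉ Cs ∧ ∀ u ∈ Cs, ¬ G.Adj v u := by
    intro v hv hvZ
    obtain ⟨h1, h2⟩ := (hA2 v).1 hv
    have h3 : v ∉ Z := fun h' => hvZ (hZ3Z v h')
    have h4 : v ∉ Cs := by tauto
    exact ⟨h4, F6 v h1 h4 (fun h' => hvZ (hZ3N v h')) h3⟩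
  have hA3 : ∀ v, v ∈ A \ Cs → v ∈ A2 := by
    intro v hv
    rw [Finset.mem_sdiff] at hv
    exact (hA2 v).2 ⟨hv.1, Or.inl hv.2⟩
  have hst3' : IsState G S (A \ Cs) (Z3 \ Cs) φ3 := by
    refine ⟨?_, ?_, ?_⟩
    · intro v hv
      rw [Finset.mem_sdiff] at hv ⊢
      exact ⟨hA2A (hst3.sub hv.1), hv.2⟩
    · intro u hu v hv huv
      exact hst3.proper u (Finset.mem_sdiff.1 hu).1 v (Finset.mem_sdiff.1 hv).1 huv
    · intro v hv hvZ hex hall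
      have hv2 := hA3 v hv
      have hvZ3 : v ∉ Z3 := fun h' => hvZ (Finset.mem_sdiff.2 ⟨h', (Finset.mem_sdiff.1 hv).2⟩)
      obtain ⟨h1, h2⟩ := F8 v hv2 hvZ3
      have e : ∀ u, G.Adj v u → (u ∈ A2 ↔ u ∈ A \ Cs) := by
        intro u hvu
        refine ⟨fun hu => ?_, fun hu => hA3 u hu⟩
        rw [Finset.mem_sdiff]
        exact ⟨hA2A hu, fun hc => h2 u hc hvu⟩
      obtain ⟨u, hu, hvu⟩ := hex
      refine (hst3.ach v hv2 hvZ3 ⟨u, hA3 u hu, hvu⟩ ?_).congr e (fun _ _ _ => rfl)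
      intro u hu hvu
      exact (Finset.mem_sdiff.1 (hall u ((e u hvu).1 hu) hvu)).1
  have hlt3 : (A \ Cs).card < A.card := by
    apply Finset.card_lt_card
    refine ⟨Finset.sdiff_subset, fun hsub => ?_⟩
    obtain ⟨v, hv⟩ := hCne
    exact (Finset.mem_sdiff.1 (hsub (hCA hv))).2 ((hCs v).2 (Or.inl hv))
  have hcard3 : (Z3 \ Cs).card ≤ N := by
    have a1 : (Z3 \ Cs).card + (Z ∩ C).card ≤ Z3.card := by
      rw [← Finset.card_union_of_disjoint]
      · apply Finset.card_le_card
        intro v hv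
        rw [Finset.mem_union, Finset.mem_sdiff, Finset.mem_inter] at hv
        rcases hv with hv | hv
        · exact hv.1
        · exact hZ3Z v hv.1
      · rw [Finset.disjoint_left]
        intro v hv hv'
        exact (Finset.mem_sdiff.1 hv).2 ((hCs v).2 (Or.inl (Finset.mem_inter.1 hv').2))
    omega
  obtain ⟨ψ3, hψ3⟩ := IH (A \ Cs) hlt3 (Z3 \ Cs) φ3 f3 hst3' hcard3
  let ψ2 : V → ℕ := fun v => if v ∈ Z3 then φ3 v else ψ3 v
  have e21 : ∀ v ∈ Z3, ψ2 v = φ3 v := fun v hv => by simp [ψ2, hv]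
  have e22 : ∀ v, v ∉ Cs → ψ2 v = ψ3 v := by
    intro v hv
    by_cases hvZ : v ∈ Z3
    · rw [e21 v hvZ]; exact (hψ3.eq v (Finset.mem_sdiff.2 ⟨hvZ, hv⟩)).symm
    · simp [ψ2, hvZ]
  have hA2C : ∀ v ∈ A2, v ∉ Cs → v ∈ A \ Cs := fun v hv hc => Finset.mem_sdiff.2 ⟨hA2A hv, hc⟩
  have hA2Z : ∀ v ∈ A2, v ∈ Cs → v ∈ Z3 := by
    intro v hv hc
    have := (hA2 v).1 hv
    exact hZ3Z v (by tauto)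
  have hext2' : IsExt G S L A2 Z3 φ3 f3 ψ2 := by
    refine ⟨e21, ?_, ?_, ?_, ?_⟩
    · intro v hv hvZ
      have hc := (F8 v hv hvZ).1
      rw [e22 v hc]
      exact hψ3.mem v (hA2C v hv hc) (fun h' => hvZ (Finset.mem_sdiff.1 h').1)
    · intro u hu v hv huv
      by_cases hu' : u ∈ Z3 <;> by_cases hv' : v ∈ Z3
      · rw [e21 u hu', e21 v hv']; exact hst3.proper u hu' v hv' huv
      · have hvc := F8 v hv hv'
        have huc : u ∉ Cs := fun hc => hvc.2 u hc huv.symm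
        rw [e22 u huc, e22 v hvc.1]
        exact hψ3.proper u (hA2C u hu huc) v (hA2C v hv hvc.1) huv
      · have huc := F8 u hu hu'
        have hvc : v ∉ Cs := fun hc => huc.2 v hc huv
        rw [e22 u huc.1, e22 v hvc]
        exact hψ3.proper u (hA2C u hu huc.1) v (hA2C v hv hvc) huv
      · have huc := F8 u hu hu'
        have hvc := F8 v hv hv'
        rw [e22 u huc.1, e22 v hvc.1]
        exact hψ3.proper u (hA2C u hu huc.1) v (hA2C v hv hvc.1) huv
    · intro z hz u hu huZ hzu
      have huc := F8 u hu huZ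
      have hzc : z ∉ Cs := fun hc => huc.2 z hc hzu.symm
      rw [e22 u huc.1]
      exact hψ3.avoid z (Finset.mem_sdiff.2 ⟨hz, hzc⟩) u (hA2C u hu huc.1)
        (fun h' => huZ (Finset.mem_sdiff.1 h').1) hzu
    · intro v hv hvZ hex
      have hvc := F8 v hv hvZ
      have e : ∀ u, G.Adj v u → (u ∈ A \ Cs ↔ u ∈ A2) :=
        fun u hvu => ⟨fun hu => hA3 u hu, fun hu => hA2C u hu (fun hc => hvc.2 u hc hvu)⟩
      obtain ⟨u, hu, hvu⟩ := hex
      refine (hψ3.ach v (hA2C v hv hvc.1) (fun h' => hvZ (Finset.mem_sdiff.1 h').1)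
        ⟨u, (e u hvu).2 hu, hvu⟩).congr e ?_
      intro u hu hvu
      exact (e22 u (Finset.mem_sdiff.1 hu).2).symm
  have hext2 := htr ψ2 hext2'
  -- glue
  let ψ : V → ℕ := fun v => if v ∈ A' then ψ1 v else ψ2 v
  have g1 : ∀ v ∈ A', ψ v = ψ1 v := fun v hv => by simp [ψ, hv]
  have g2 : ∀ v ∈ A2, ψ v = ψ2 v := by
    intro v hv
    by_cases hv' : v ∈ A'
    · rw [g1 v hv']
      refine (hext2.eq v ?_).symm
      have h1 := (hA2 v).1 hv
      have h2 := (hA' v).1 hv'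
      rw [Finset.mem_union]; tauto
    · simp [ψ, hv']
  have hout : ∀ v ∈ A, v ∉ A' → v ∈ A2 ∧ v ∉ Z ∪ N1 := by
    intro v hv hv'
    rw [hA'] at hv'
    rw [hA2, Finset.mem_union]
    tauto
  have hA'2 : ∀ v ∈ A', v ∉ Cs ∨ v ∈ Z → v ∈ A2 := fun v hv h' => (hA2 v).2 ⟨hA'A hv, h'⟩
  have hZA' : ∀ v ∈ Z, v ∈ A' := fun v hv => (hA' v).2 (Or.inr (Or.inl hv))
  have hf2Z : ∀ z ∈ Z, f2 z = f z := by
    intro z hz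
    have : z ∉ N1 := fun h' => hN1Z z h' hz
    simp [f2, this]
  have hcross : ∀ u ∈ A', ∀ v ∈ A, v ∉ A' → G.Adj u v → u ∈ A2 := by
    intro u hu v hv hv' huv
    apply hA'2 u hu
    by_contra hcon
    push Not at hcon
    exact hv' (F7 u hcon.1 hcon.2 v hv huv)
  refine ⟨ψ, ?_, ?_, ?_, ?_, ?_⟩
  · intro z hz; rw [g1 z (hZA' z hz)]; exact hψ1.eq z hz
  · intro v hv hvZ
    by_cases hv' : v ∈ A'
    · rw [g1 v hv']; exact hψ1.mem v hv' hvZ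
    · obtain ⟨h1, h2⟩ := hout v hv hv'
      rw [g2 v h1]; exact hext2.mem v h1 h2
  · intro u hu v hv huv
    by_cases hu' : u ∈ A' <;> by_cases hv' : v ∈ A'
    · rw [g1 u hu', g1 v hv']; exact hψ1.proper u hu' v hv' huv
    · have h1 := (hout v hv hv').1
      have h2 := hcross u hu' v hv hv' huv
      rw [g2 u h2, g2 v h1]; exact hext2.proper u h2 v h1 huv
    · have h1 := (hout u hu hu').1
      have h2 := hcross v hv' u hu hu' huv.symm
      rw [g2 u h1, g2 v h2]; exact hext2.proper u h1 v h2 huv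
    · have h1 := (hout u hu hu').1
      have h2 := (hout v hv hv').1
      rw [g2 u h1, g2 v h2]; exact hext2.proper u h1 v h2 huv
  · intro z hz u hu huZ hzu
    by_cases hu' : u ∈ A'
    · rw [g1 u hu']; exact hψ1.avoid z hz u hu' huZ hzu
    · obtain ⟨h1, h2⟩ := hout u hu hu'
      rw [g2 u h1, ← hf2Z z hz]
      exact hext2.avoid z (Finset.mem_union_left _ hz) u h1 h2 hzu
  · intro v hv hvZ hex
    obtain ⟨u0, hu0, hvu0⟩ := hex
    by_cases hvC : v ∈ Cs
    · have hv' : v ∈ A' := (hA' v).2 (Or.inl hvC)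
      exact (hψ1.ach v hv' hvZ ⟨u0, F7 v hvC hvZ u0 hu0 hvu0, hvu0⟩).congr
        (fun u hvu => ⟨fun hu => hA'A hu, fun hu => F7 v hvC hvZ u hu hvu⟩) (fun u hu _ => (g1 u hu).symm)
    by_cases hvN : v ∈ N1
    · obtain ⟨s, hs, hc⟩ := hpc v hvN
      refine ⟨s, hs, pc v, ?_⟩
      rw [← hc]
      congr 1
      ext u
      simp only [Set.mem_ofPred_eq]
      constructor
      · rintro ⟨a1, a2, a3⟩
        by_cases hu' : u ∈ A'
        · exact ⟨hu', a2, by rw [← g1 u hu']; exact a3⟩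
        · exfalso
          obtain ⟨h1, h2⟩ := hout u a1 hu'
          have := hext2.avoid v (Finset.mem_union_right _ hvN) u h1 h2 a2
          rw [← g2 u h1] at this
          apply this
          simp only [f2]
          rw [if_pos hvN]; exact a3
      · rintro ⟨a1, a2, a3⟩
        exact ⟨hA'A a1, a2, by rw [g1 u a1]; exact a3⟩
    · have hv2 : v ∈ A2 := (hA2 v).2 ⟨hv, Or.inl hvC⟩
      have e : ∀ u, G.Adj v u → (u ∈ A2 ↔ u ∈ A) := by
        intro u hvu
        refine ⟨fun hu => hA2A hu, fun hu => (hA2 u).2 ⟨hu, ?_⟩⟩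
        by_contra hcon
        push Not at hcon
        exact F5 v hv hvC hvZ hvN u hcon.1 hcon.2 hvu
      exact (hext2.ach v hv2 (by rw [Finset.mem_union]; tauto) ⟨u0, (e u0 hvu0).2 hu0, hvu0⟩).congr e
        (fun u hu _ => (g2 u hu).symm)

theorem bip_color {V : Type} {G : SimpleGraph V} {S : Set ℕ} (hpos : ∀ s ∈ S, 0 < s) {L : V → Finset ℕ}
    {k : ℕ} (hk : ∀ s : Set V, (G.induce s).Colorable 2 → SChoosable S (G.induce s) k)
    (Z P : Finset V) (φ f : V → ℕ) (hL : ∀ v, k + 2 * Z.card ≤ (L v).card)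
    (hcol : (G.induce (P : Set V)).Colorable 2) :
    ∃ φ0 f0 : V → ℕ, (∀ v ∈ P, φ0 v ∈ L v ∧ ∀ z ∈ Z, φ0 v ≠ φ z ∧ φ0 v ≠ f z) ∧
      (∀ u ∈ P, ∀ v ∈ P, G.Adj u v → φ0 u ≠ φ0 v) ∧
      (∀ v ∈ P, (∃ u ∈ P, G.Adj v u) → (∀ z ∈ Z, φ z ≠ f0 v) ∧
        {u | u ∈ P ∧ G.Adj v u ∧ φ0 u = f0 v}.ncard ∈ S) := by
  classical
  have hk' := hk (P : Set V) hcol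
  obtain ⟨φ', h1, h2, h3⟩ := hk' (fun v => L v.1 \ (Z.image φ ∪ Z.image f)) (by
    intro v
    have a0 := hL v.1
    have a1 := Finset.le_card_sdiff (Z.image φ ∪ Z.image f) (L v.1)
    have a2 := Finset.card_union_le (Z.image φ) (Z.image f)
    have a3 : (Z.image φ).card ≤ Z.card := Finset.card_image_le
    have a4 : (Z.image f).card ≤ Z.card := Finset.card_image_le
    omega)
  let φ0 : V → ℕ := fun v => if h : v ∈ P then φ' ⟨v, h⟩ else 0
  have e : ∀ v (h : v ∈ P), φ0 v = φ' ⟨v, h⟩ := fun v h => by simp [φ0, h]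
  have q1 : ∀ v ∈ P, φ0 v ∈ L v ∧ ∀ z ∈ Z, φ0 v ≠ φ z ∧ φ0 v ≠ f z := by
    intro v hv
    have := h1 ⟨v, hv⟩
    simp only [Finset.mem_sdiff, Finset.mem_union, Finset.mem_image, not_or, not_exists, not_and] at this
    rw [e v hv]
    exact ⟨this.1, fun z hz => ⟨fun e => this.2.1 z hz e.symm, fun e => this.2.2 z hz e.symm⟩⟩
  have q3 : ∀ v, ∃ c, v ∈ P → (∃ u ∈ P, G.Adj v u) → (∀ z ∈ Z, φ z ≠ c) ∧
        {u | u ∈ P ∧ G.Adj v u ∧ φ0 u = c}.ncard ∈ S := by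
    intro v
    by_cases hv : v ∈ P ∧ (∃ u ∈ P, G.Adj v u)
    · obtain ⟨hv, u, hu, hvu⟩ := hv
      obtain ⟨s, hs, c, hc⟩ := h3 ⟨v, hv⟩ ⟨⟨u, hu⟩, hvu⟩
      have key : {u | u ∈ P ∧ G.Adj v u ∧ φ0 u = c} =
          Set.image Subtype.val {u : (P : Set V) | (G.induce (P : Set V)).Adj ⟨v, hv⟩ u ∧ φ' u = c} := by
        ext w
        simp only [Set.mem_ofPred_eq, Set.mem_image]
        constructor
        · rintro ⟨a1, a2, a3⟩
          exact ⟨⟨w, a1⟩, ⟨a2, by rw [← e w a1]; exact a3⟩, rfl⟩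
        · rintro ⟨⟨w', hw'⟩, ⟨a1, a2⟩, rfl⟩
          exact ⟨hw', a1, by rw [e w' hw']; exact a2⟩
      have hn : {u | u ∈ P ∧ G.Adj v u ∧ φ0 u = c}.ncard = s := by
        rw [key, Set.ncard_image_of_injective _ Subtype.val_injective]; exact hc
      refine ⟨c, fun _ _ => ⟨?_, by rw [hn]; exact hs⟩⟩
      have hne : {u | u ∈ P ∧ G.Adj v u ∧ φ0 u = c}.Nonempty := by
        apply Set.nonempty_of_ncard_ne_zero
        have := hpos s hs
        omega
      obtain ⟨w, hw1, hw2, hw3⟩ := hne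
      intro z hz
      rw [← hw3]
      exact ((q1 w hw1).2 z hz).1.symm
    · exact ⟨0, fun a b => absurd ⟨a, b⟩ hv⟩
  choose f0 hf0 using q3
  refine ⟨φ0, f0, q1, ?_, hf0⟩
  intro u hu v hv huv
  rw [e u hu, e v hv]
  exact h2 (show (G.induce (P : Set V)).Adj ⟨u, hu⟩ ⟨v, hv⟩ from huv)

theorem light_core {V : Type} {G : SimpleGraph V} {S : Set ℕ} (hS : 1 ∈ S) (hpos : ∀ s ∈ S, 0 < s)
    {L : V → Finset ℕ} {k : ℕ} (hk : ∀ s : Set V, (G.induce s).Colorable 2 → SChoosable S (G.induce s) k)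
    {A Z : Finset V} {φ f : V → ℕ} (h : IsState G S A Z φ) (N : ℕ)
    (IH : ∀ A' : Finset V, A'.card < A.card → ∀ (Z' : Finset V) (φ' f' : V → ℕ), IsState G S A' Z' φ' →
      Z'.card ≤ N → ∃ ψ, IsExt G S L A' Z' φ' f' ψ)
    (X : Finset V) (U : Set V) (r : V → Option V) (c : V → ZMod 2) (hXZ : X ⊆ Z) (hUX : ∀ v ∈ U, v ∉ X)
    (hE : ∀ u ∈ A, ∀ v ∈ A, G.Adj u v → u ∉ X → v ∉ X → (u ∈ U ∧ v ∈ U ∧ c u ≠ c v) ∨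
      (u ∈ U ∧ v ∉ U ∧ r v = some u) ∨ (u ∉ U ∧ v ∈ U ∧ r u = some v) ∨ (u ∉ U ∧ v ∉ U ∧ r u = r v))
    (hrU : ∀ v u, r v = some u → u ∈ U)
    (D : Option V → Finset V) (hD : ∀ ρ v, v ∈ D ρ ↔ v ∈ A ∧ v ∉ X ∧ v ∉ U ∧ r v = ρ)
    (hlight : open Classical in ∀ ρ, (Z ∩ D ρ).card + X.card + 2 ≤ N)
    (hrich : ∀ ρ, ∃ u ∈ A, u ∉ D ρ ∧ u ∉ X ∧ some u ≠ ρ)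
    (hL : ∀ v, k + 2 * Z.card ≤ (L v).card) :
    ∃ ψ, IsExt G S L A Z φ f ψ := by
  classical
  obtain ⟨U0, hU0⟩ : ∃ U0 : Finset V, ∀ v, v ∈ U0 ↔ v ∈ A ∧ v ∈ U ∧ v ∉ Z :=
    ⟨A.filter (fun v => v ∈ U ∧ v ∉ Z), by simp⟩
  obtain ⟨W, hW⟩ : ∃ W : Finset V, ∀ v, v ∈ W ↔ v ∈ U0 ∧ (∀ u ∈ U0, ¬ G.Adj v u) ∧ ∃ y ∈ A, G.Adj v y ∧ y ∉ Z :=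
    ⟨U0.filter (fun v => (∀ u ∈ U0, ¬ G.Adj v u) ∧ ∃ y ∈ A, G.Adj v y ∧ y ∉ Z), by simp⟩
  have hy : ∀ v, ∃ y, v ∈ W → y ∈ A ∧ G.Adj v y ∧ y ∉ Z := by
    intro v
    by_cases hv : v ∈ W
    · obtain ⟨y, a, b⟩ := ((hW v).1 hv).2.2
      exact ⟨y, fun _ => ⟨a, b⟩⟩
    · exact ⟨v, fun h' => absurd h' hv⟩
  choose y hy using hy
  obtain ⟨Y, hY⟩ : ∃ Y : Finset V, ∀ w, w ∈ Y ↔ ∃ v ∈ W, y v = w := ⟨W.image y, by simp⟩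
  have hyU : ∀ v ∈ W, y v ∉ U := by
    intro v hv hu
    exact ((hW v).1 hv).2.1 (y v) ((hU0 _).2 ⟨(hy v hv).1, hu, (hy v hv).2.2⟩) (hy v hv).2.1
  have hyr : ∀ v ∈ W, r (y v) = some v := by
    intro v hv
    have hv0 := (hU0 v).1 ((hW v).1 hv).1
    have := hE v hv0.1 (y v) (hy v hv).1 (hy v hv).2.1 (hUX v hv0.2.1) (fun h' => (hy v hv).2.2 (hXZ h'))
    have := hyU v hv
    tauto
  obtain ⟨P, hP⟩ : ∃ P : Finset V, ∀ v, v ∈ P ↔ v ∈ U0 ∨ v ∈ Y := ⟨U0 ∪ Y, by simp⟩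
  have hYA : ∀ w ∈ Y, w ∈ A ∧ w ∉ Z ∧ w ∉ U := by
    intro w hw
    obtain ⟨v, hv, rfl⟩ := (hY w).1 hw
    exact ⟨(hy v hv).1, (hy v hv).2.2, hyU v hv⟩
  have hPA : ∀ v ∈ P, v ∈ A ∧ v ∉ Z := by
    intro v hv
    rcases (hP v).1 hv with h' | h'
    · have := (hU0 v).1 h'; exact ⟨this.1, this.2.2⟩
    · have := hYA v h'; exact ⟨this.1, this.2.1⟩
  have hYr : ∀ w ∈ Y, ∀ u, r w = some u → u ∈ W ∧ y u = w := by
    intro w hw u hu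
    obtain ⟨v, hv, rfl⟩ := (hY w).1 hw
    rw [hyr v hv] at hu
    obtain rfl := Option.some.inj hu
    exact ⟨hv, rfl⟩
  have hYr' : ∀ w ∈ Y, ∃ u, r w = some u := by
    intro w hw
    obtain ⟨v, hv, rfl⟩ := (hY w).1 hw
    exact ⟨v, hyr v hv⟩
  have hcol : (G.induce (P : Set V)).Colorable 2 := by
    let col : V → ZMod 2 := fun v => if v ∈ U then c v else match r v with
      | none => 0
      | some u => c u + 1
    have hcol : ∀ u ∈ P, ∀ v ∈ P, G.Adj u v → col u ≠ col v := by
      intro u hu v hv huv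
      have hu' := hPA u hu
      have hv' := hPA v hv
      have := hE u hu'.1 v hv'.1 huv (fun h' => hu'.2 (hXZ h')) (fun h' => hv'.2 (hXZ h'))
      rcases this with ⟨a, b, e⟩ | ⟨a, b, e⟩ | ⟨a, b, e⟩ | ⟨a, b, e⟩
      · simp only [col, if_pos a, if_pos b]; exact e
      · simp only [col, if_pos a, if_neg b, e]; grind
      · simp only [col, if_pos b, if_neg a, e]; grind
      · exfalso
        have huY : u ∈ Y := by
          rcases (hP u).1 hu with h' | h'
          · exact absurd ((hU0 u).1 h').2.1 a
          · exact h'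
        have hvY : v ∈ Y := by
          rcases (hP v).1 hv with h' | h'
          · exact absurd ((hU0 v).1 h').2.1 b
          · exact h'
        obtain ⟨w, hw⟩ := hYr' u huY
        have e1 := (hYr u huY w hw).2
        have e2 := (hYr v hvY w (by rw [← e]; exact hw)).2
        exact huv.ne (e1.symm.trans e2)
    have C : (G.induce (P : Set V)).Coloring (ZMod 2) :=
      Coloring.mk (fun v => col v.1) (fun {u v} huv => hcol u.1 u.2 v.1 v.2 huv)
    have := C.colorable
    simpa using this
  obtain ⟨φ0, f0, p1, p2, p3⟩ := bip_color hpos hk Z P φ f hL hcol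
  let φ1 : V → ℕ := fun v => if v ∈ Z then φ v else φ0 v
  let f1 : V → ℕ := fun v => if v ∈ Z then f v else f0 v
  have phiOnZ : ∀ v ∈ Z, φ1 v = φ v := fun v hv => by simp [φ1, hv]
  have phiOnP : ∀ v ∈ P, φ1 v = φ0 v := fun v hv => by simp [φ1, (hPA v hv).2]
  have f1Z : ∀ v ∈ Z, f1 v = f v := fun v hv => by simp [f1, hv]
  have f1P : ∀ v ∈ P, f1 v = f0 v := fun v hv => by simp [f1, (hPA v hv).2]
  have phiProper : ∀ u, (u ∈ Z ∨ u ∈ P) → ∀ v, (v ∈ Z ∨ v ∈ P) → G.Adj u v → φ1 u ≠ φ1 v := by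
    rintro u (hu | hu) v (hv | hv) huv
    · rw [phiOnZ u hu, phiOnZ v hv]; exact h.proper u hu v hv huv
    · rw [phiOnZ u hu, phiOnP v hv]; exact (((p1 v hv).2 u hu).1).symm
    · rw [phiOnP u hu, phiOnZ v hv]; exact (((p1 u hu).2 v hv).1)
    · rw [phiOnP u hu, phiOnP v hv]; exact p2 u hu v hv huv
  -- pieces
  have hAD : ∃ AD : Option V → Finset V, ∀ ρ v, v ∈ AD ρ ↔ v ∈ D ρ ∨ v ∈ X ∨ (v ∈ A ∧ v ∈ U ∧ ρ = some v) :=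
    ⟨fun ρ => D ρ ∪ (X ∪ A.filter (fun v => v ∈ U ∧ ρ = some v)), by simp⟩
  obtain ⟨AD, hAD⟩ := hAD
  have hZD : ∃ ZD : Option V → Finset V, ∀ ρ v, v ∈ ZD ρ ↔ v ∈ AD ρ ∧ (v ∈ Z ∨ v ∈ P) :=
    ⟨fun ρ => (AD ρ).filter (fun v => v ∈ Z ∨ v ∈ P), by simp⟩
  obtain ⟨ZD, hZD⟩ := hZD
  have hADA : ∀ ρ, ∀ v ∈ AD ρ, v ∈ A := by
    intro ρ v hv
    rcases (hAD ρ v).1 hv with h' | h' | h'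
    · exact ((hD ρ v).1 h').1
    · exact h.sub (hXZ h')
    · exact h'.1
  have hnb : ∀ ρ, ∀ v ∈ D ρ, ∀ u ∈ A, G.Adj v u → u ∈ AD ρ := by
    intro ρ v hv u hu hvu
    obtain ⟨a1, a2, a3, a4⟩ := (hD ρ v).1 hv
    rw [hAD, hD]
    by_cases hux : u ∈ X
    · exact Or.inr (Or.inl hux)
    rcases hE v a1 u hu hvu a2 hux with ⟨a, b, e⟩ | ⟨a, b, e⟩ | ⟨a, b, e⟩ | ⟨a, b, e⟩
    · exact absurd a a3
    · exact absurd a a3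
    · exact Or.inr (Or.inr ⟨hu, b, by rw [← a4, e]⟩)
    · exact Or.inl ⟨hu, hux, b, by rw [← e, a4]⟩
  have hADn : ∀ ρ, ∀ v ∈ AD ρ, v ∉ ZD ρ → v ∈ D ρ := by
    intro ρ v hv hvZ
    rcases (hAD ρ v).1 hv with h' | h' | h'
    · exact h'
    · exact absurd ((hZD ρ v).2 ⟨hv, Or.inl (hXZ h')⟩) hvZ
    · exfalso
      apply hvZ
      rw [hZD]
      refine ⟨hv, ?_⟩
      by_cases hz : v ∈ Z
      · exact Or.inl hz
      · exact Or.inr ((hP v).2 (Or.inl ((hU0 v).2 ⟨h'.1, h'.2.1, hz⟩)))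
  -- members of P in a piece
  have hPD : ∀ ρ, ∀ w ∈ AD ρ, w ∈ P → ∃ u, ρ = some u ∧ (w = u ∨ (u ∈ W ∧ w = y u)) := by
    intro ρ w hw hwP
    rcases (hAD ρ w).1 hw with h' | h' | h'
    · have hwD := (hD ρ w).1 h'
      rcases (hP w).1 hwP with h'' | h''
      · exact absurd ((hU0 w).1 h'').2.1 hwD.2.2.1
      · obtain ⟨u, hu⟩ := hYr' w h''
        have := hYr w h'' u hu
        exact ⟨u, by rw [← hwD.2.2.2, hu], Or.inr ⟨this.1, this.2.symm⟩⟩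
    · exact absurd (hXZ h') (hPA w hwP).2
    · exact ⟨w, h'.2.2, Or.inl rfl⟩
  have hlt : ∀ ρ, (AD ρ).card < A.card := by
    intro ρ
    apply Finset.card_lt_card
    refine ⟨fun v hv => hADA ρ v hv, fun hsub => ?_⟩
    obtain ⟨u, hu, a1, a2, a3⟩ := hrich ρ
    rcases (hAD ρ u).1 (hsub hu) with h' | h' | h'
    · exact a1 h'
    · exact a2 h'
    · exact a3 h'.2.2.symm
  have hcard : ∀ ρ, (ZD ρ).card ≤ N := by
    intro ρ
    have hEE : ∃ E : Finset V, E.card ≤ 2 ∧ ∀ u, ρ = some u → u ∈ E ∧ y u ∈ E := by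
      cases ρ with
      | none => exact ⟨∅, by simp, by simp⟩
      | some u =>
        refine ⟨{u, y u}, Finset.card_le_two, ?_⟩
        intro u' hu'
        obtain rfl := Option.some.inj hu'
        simp
    obtain ⟨E, hE1, hE2⟩ := hEE
    have hs : ZD ρ ⊆ (Z ∩ D ρ) ∪ (X ∪ E) := by
      intro v hv
      obtain ⟨a1, a2⟩ := (hZD ρ v).1 hv
      simp only [Finset.mem_union, Finset.mem_inter]
      by_cases hvP : v ∈ P
      · obtain ⟨u, hu, h'⟩ := hPD ρ v a1 hvP
        have := hE2 u hu
        rcases h' with rfl | ⟨_, rfl⟩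
        · exact Or.inr (Or.inr this.1)
        · exact Or.inr (Or.inr this.2)
      · have hvZ : v ∈ Z := by tauto
        rcases (hAD ρ v).1 a1 with h' | h' | h'
        · exact Or.inl ⟨hvZ, h'⟩
        · exact Or.inr (Or.inl h')
        · exact Or.inr (Or.inr (hE2 v h'.2.2).1)
    have b1 := Finset.card_le_card hs
    have b2 := Finset.card_union_le (Z ∩ D ρ) (X ∪ E)
    have b3 := Finset.card_union_le X E
    have b4 := hlight ρ
    omega
  have hst : ∀ ρ, IsState G S (AD ρ) (ZD ρ) φ1 := by
    intro ρ
    refine ⟨fun v hv => ((hZD ρ v).1 hv).1, ?_, ?_⟩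
    · intro u hu v hv huv
      exact phiProper u ((hZD ρ u).1 hu).2 v ((hZD ρ v).1 hv).2 huv
    · intro v hv hvZ hex hall
      have hvD := hADn ρ v hv hvZ
      have hvA := hADA ρ v hv
      have hvZ' : v ∉ Z := fun h' => hvZ ((hZD ρ v).2 ⟨hv, Or.inl h'⟩)
      have e : ∀ u, G.Adj v u → (u ∈ A ↔ u ∈ AD ρ) :=
        fun u hvu => ⟨fun hu => hnb ρ v hvD u hu hvu, fun hu => hADA ρ u hu⟩
      by_cases hZ : ∀ u ∈ A, G.Adj v u → u ∈ Z
      · obtain ⟨u, hu, hvu⟩ := hex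
        exact (h.ach v hvA hvZ' ⟨u, hADA ρ u hu, hvu⟩ hZ).congr e
          (fun u hu hvu => (phiOnZ u (hZ u hu hvu)).symm)
      · push Not at hZ
        obtain ⟨w, hwA, hvw, hwZ⟩ := hZ
        have hwD := (e w hvw).1 hwA
        have hwP : w ∈ P := by
          have := ((hZD ρ w).1 (hall w hwD hvw)).2
          tauto
        refine Ach.of_unique hS hwD hvw ?_
        intro u hu hvu heq
        rcases ((hZD ρ u).1 (hall u hu hvu)).2 with huZ | huP
        · rw [phiOnZ u huZ, phiOnP w hwP] at heq
          exact absurd heq.symm ((p1 w hwP).2 u huZ).1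
        · by_contra hne
          have hadj : G.Adj u w := by
            obtain ⟨a, ha, ha'⟩ := hPD ρ u hu huP
            obtain ⟨b, hb, hb'⟩ := hPD ρ w hwD hwP
            obtain rfl := Option.some.inj (ha.symm.trans hb)
            rcases ha' with rfl | ⟨h1, rfl⟩ <;> rcases hb' with rfl | ⟨h2, rfl⟩
            · exact absurd rfl hne
            · exact (hy _ h2).2.1
            · exact (hy _ h1).2.1.symm
            · exact absurd rfl hne
          exact phiProper u (Or.inr huP) w (Or.inr hwP) hadj heq
  choose ψD hψD using fun ρ => IH (AD ρ) (hlt ρ) (ZD ρ) φ1 f1 (hst ρ) (hcard ρ)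
  let ψ : V → ℕ := fun v => if v ∈ Z ∨ v ∈ P then φ1 v else ψD (r v) v
  have ψ1 : ∀ v, (v ∈ Z ∨ v ∈ P) → ψ v = φ1 v := fun v hv => by simp only [ψ, if_pos hv]
  have hout : ∀ v ∈ A, ¬ (v ∈ Z ∨ v ∈ P) → v ∈ D (r v) ∧ v ∈ AD (r v) ∧ v ∉ ZD (r v) := by
    intro v hv hn
    have hvD : v ∈ D (r v) := by
      rw [hD]
      refine ⟨hv, fun h' => hn (Or.inl (hXZ h')), fun h' => hn (Or.inr ?_), rfl⟩
      exact (hP v).2 (Or.inl ((hU0 v).2 ⟨hv, h', fun h'' => hn (Or.inl h'')⟩))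
    exact ⟨hvD, (hAD _ v).2 (Or.inl hvD), fun h' => hn ((hZD _ v).1 h').2⟩
  have ψ2 : ∀ ρ, ∀ v ∈ AD ρ, ψ v = ψD ρ v := by
    intro ρ v hv
    by_cases hp : v ∈ Z ∨ v ∈ P
    · rw [ψ1 v hp]; exact ((hψD ρ).eq v ((hZD ρ v).2 ⟨hv, hp⟩)).symm
    · have hvD := hADn ρ v hv (fun h' => hp ((hZD ρ v).1 h').2)
      have := ((hD ρ v).1 hvD).2.2.2
      simp only [ψ, if_neg hp, this]
  refine ⟨ψ, ?_, ?_, ?_, ?_, ?_⟩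
  · intro z hz; rw [ψ1 z (Or.inl hz), phiOnZ z hz]
  · intro v hv hvZ
    by_cases hp : v ∈ Z ∨ v ∈ P
    · have hvP : v ∈ P := by tauto
      rw [ψ1 v hp, phiOnP v hvP]; exact (p1 v hvP).1
    · obtain ⟨a1, a2, a3⟩ := hout v hv hp
      rw [ψ2 _ v a2]; exact (hψD _).mem v a2 a3
  · intro u hu v hv huv
    by_cases hpu : u ∈ Z ∨ u ∈ P
    · by_cases hpv : v ∈ Z ∨ v ∈ P
      · rw [ψ1 u hpu, ψ1 v hpv]; exact phiProper u hpu v hpv huv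
      · obtain ⟨a1, a2, a3⟩ := hout v hv hpv
        have := hnb _ v a1 u hu huv.symm
        rw [ψ2 _ v a2, ψ2 _ u this]
        exact (hψD _).proper u this v a2 huv
    · obtain ⟨a1, a2, a3⟩ := hout u hu hpu
      have := hnb _ u a1 v hv huv
      rw [ψ2 _ u a2, ψ2 _ v this]
      exact (hψD _).proper u a2 v this huv
  · intro z hz u hu huZ hzu
    by_cases hpu : u ∈ Z ∨ u ∈ P
    · have huP : u ∈ P := by tauto
      rw [ψ1 u hpu, phiOnP u huP]; exact ((p1 u huP).2 z hz).2
    · obtain ⟨a1, a2, a3⟩ := hout u hu hpu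
      have := hnb _ u a1 z (h.sub hz) hzu.symm
      rw [ψ2 _ u a2, ← f1Z z hz]
      exact (hψD _).avoid z ((hZD _ z).2 ⟨this, Or.inl hz⟩) u a2 a3 hzu
  · intro v hv hvZ hex
    by_cases hpv : v ∈ Z ∨ v ∈ P
    · have hvP : v ∈ P := by tauto
      by_cases hnP : ∃ u ∈ P, G.Adj v u
      · obtain ⟨b1, b2⟩ := p3 v hvP hnP
        refine ⟨_, b2, f0 v, ?_⟩
        congr 1
        ext u
        simp only [Set.mem_ofPred_eq]
        constructor
        · rintro ⟨a1, a2, a3⟩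
          by_cases hpu : u ∈ Z ∨ u ∈ P
          · rw [ψ1 u hpu] at a3
            rcases hpu with hu | hu
            · rw [phiOnZ u hu] at a3
              exact absurd a3 (b1 u hu)
            · rw [phiOnP u hu] at a3
              exact ⟨hu, a2, a3⟩
          · exfalso
            obtain ⟨d1, d2, d3⟩ := hout u a1 hpu
            have := hnb _ u d1 v hv a2.symm
            have h' := (hψD _).avoid v ((hZD _ v).2 ⟨this, Or.inr hvP⟩) u d2 d3 a2
            rw [f1P v hvP, ← ψ2 _ u d2] at h'
            exact h' a3
        · rintro ⟨a1, a2, a3⟩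
          exact ⟨(hPA u a1).1, a2, by rw [ψ1 u (Or.inr a1), phiOnP u a1]; exact a3⟩
      · push Not at hnP
        have hvU : v ∈ U0 := by
          rcases (hP v).1 hvP with h' | h'
          · exact h'
          · exfalso
            obtain ⟨w, hw, rfl⟩ := (hY v).1 h'
            exact hnP w ((hP w).2 (Or.inl ((hW w).1 hw).1)) (hy w hw).2.1.symm
        have hall : ∀ u ∈ A, G.Adj v u → u ∈ Z := by
          intro u hu hvu
          by_contra huZ
          have hvW : v ∈ W := (hW v).2 ⟨hvU, fun u hu => hnP u ((hP u).2 (Or.inl hu)), u, hu, hvu, huZ⟩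
          exact hnP (y v) ((hP _).2 (Or.inr ((hY _).2 ⟨v, hvW, rfl⟩))) (hy v hvW).2.1
        exact (h.ach v hv hvZ hex hall).congr (fun _ _ => Iff.rfl)
          (fun u hu hvu => by rw [ψ1 u (Or.inl (hall u hu hvu)), phiOnZ u (hall u hu hvu)])
    · obtain ⟨a1, a2, a3⟩ := hout v hv hpv
      obtain ⟨u, hu, hvu⟩ := hex
      exact ((hψD _).ach v a2 a3 ⟨u, hnb _ v a1 u hu hvu, hvu⟩).congr
        (fun u hvu => ⟨fun hu => hADA _ u hu, fun hu => hnb _ v a1 u hu hvu⟩) (fun u hu _ => (ψ2 _ u hu).symm)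

theorem main_ind {V : Type} [Fintype V] {G : SimpleGraph V} {S : Set ℕ} (hS : 1 ∈ S) (hpos : ∀ s ∈ S, 0 < s)
    {L : V → Finset ℕ} {k : ℕ} (hk : ∀ s : Set V, (G.induce s).Colorable 2 → SChoosable S (G.induce s) k)
    (t x N M : ℕ) (hx : x = 2 * (4 * t + 1)) (hN : N = 5 * x + 3)
    (hno : ∀ (ψ : V → ZMod 2) (Q : Fin t → Set V), ¬ IsOddModel G ψ Q)
    (hM : 2 * (2 * (4 * t + 1) + 2 * t + 1) < M - 1) (hM' : 2 * (4 * t + 1) + (N + x + 1) + 2 ≤ M)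
    (hL : ∀ v, k + (2 * (N + 4 * x + 10) + 2 * q1 M + q2 M) ≤ (L v).card) :
    ∀ (n : ℕ) (A : Finset V), A.card = n → ∀ (Z : Finset V) (φ f : V → ℕ), IsState G S A Z φ →
      Z.card ≤ N → ∃ ψ, IsExt G S L A Z φ f ψ := by
  classical
  intro n
  induction n using Nat.strong_induction_on with
  | _ n ih =>
  intro A hAn Z φ f h hZN
  have IH : ∀ A' : Finset V, A'.card < A.card → ∀ (Z' : Finset V) (φ' f' : V → ℕ), IsState G S A' Z' φ' →
      Z'.card ≤ N → ∃ ψ, IsExt G S L A' Z' φ' f' ψ :=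
    fun A' hA' => ih A'.card (by omega) A' rfl
  by_cases hB : BipModel G ({v | v ∈ A ∧ v ∉ Z}) M
  swap
  · exact greedy_case hS h M hB (fun v => by have := hL v; omega)
  obtain ⟨χ, ρ, hρ⟩ := hB
  let G' : SimpleGraph V :=
    { Adj := fun u v => G.Adj u v ∧ u ∈ A ∧ v ∈ A
      symm := ⟨fun _ _ h => ⟨h.1.symm, h.2.2, h.2.1⟩⟩
      loopless := ⟨fun _ h => h.1.ne rfl⟩ }
  have hρA : ∀ i, ∀ v ∈ ρ i, v ∈ A := fun i v hv => (hρ.sub i hv).1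
  have hρ' : IsModel (bip G' χ) Set.univ ρ := by
    refine ⟨fun i => Set.subset_univ _, hρ.nonempty, ?_, hρ.disj, ?_⟩
    · intro i a ha b hb
      exact (hρ.conn i a ha b hb).mono subset_rfl
        (fun x hx y hy hxy => ⟨⟨hxy.1, hρA i x hx, hρA i y hy⟩, hxy.2⟩)
    · intro i j hij
      obtain ⟨x, hx, y, hy, hxy⟩ := hρ.adj i j hij
      exact ⟨x, hx, y, hy, ⟨hxy.1, hρA i x hx, hρA j y hy⟩, hxy.2⟩
  rcases structure_thm G' χ t (N + x + 1) M ρ hρ' hM hM' with ⟨ψ, Q, hQ⟩ | ⟨X0, U, r, c, hX, hUX, hrU, hE, hrich⟩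
  · exfalso
    refine hno ψ Q ⟨hQ.nonempty, ?_, hQ.disj, ?_⟩
    · intro i a ha b hb
      exact (hQ.conn i a ha b hb).mono subset_rfl (fun x _ y _ hxy => ⟨hxy.1.1, hxy.2⟩)
    · intro i j hij
      obtain ⟨x, hx, y, hy, hxy, e⟩ := hQ.adj i j hij
      exact ⟨x, hx, y, hy, hxy.1, e⟩
  rw [← hx] at hX
  obtain ⟨X, hXm⟩ : ∃ X : Finset V, ∀ v, v ∈ X ↔ v ∈ X0 ∧ v ∈ A := ⟨X0 ∩ A, by simp⟩
  have hXc : X.card ≤ x := (Finset.card_le_card (fun v hv => ((hXm v).1 hv).1)).trans hX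
  have hXA : X ⊆ A := fun v hv => ((hXm v).1 hv).2
  have hUX' : ∀ v ∈ U, v ∉ X := fun v hv hv' => hUX v hv ((hXm v).1 hv').1
  have hE' : ∀ u ∈ A, ∀ v ∈ A, G.Adj u v → u ∉ X → v ∉ X → (u ∈ U ∧ v ∈ U ∧ c u ≠ c v) ∨
      (u ∈ U ∧ v ∉ U ∧ r v = some u) ∨ (u ∉ U ∧ v ∈ U ∧ r u = some v) ∨ (u ∉ U ∧ v ∉ U ∧ r u = r v) := by
    intro u hu v hv huv hux hvx
    exact hE u v ⟨huv, hu, hv⟩ (fun h' => hux ((hXm u).2 ⟨h', hu⟩)) (fun h' => hvx ((hXm v).2 ⟨h', hv⟩))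
  obtain ⟨D, hD⟩ : ∃ D : Option V → Finset V, ∀ ρ v, v ∈ D ρ ↔ v ∈ A ∧ v ∉ X ∧ v ∉ U ∧ r v = ρ :=
    ⟨fun ρ => A.filter (fun v => v ∉ X ∧ v ∉ U ∧ r v = ρ), by simp⟩
  obtain ⟨NC, hNC⟩ : ∃ NC : Option V → Finset V, ∀ ρ v, v ∈ NC ρ ↔ v ∈ X ∨ (v ∈ A ∧ v ∈ U ∧ ρ = some v) :=
    ⟨fun ρ => X ∪ A.filter (fun v => v ∈ U ∧ ρ = some v), by simp⟩
  have hNCc : ∀ ρ, (NC ρ).card ≤ x + 1 := by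
    intro ρ
    obtain ⟨E, hE1, hE2⟩ : ∃ E : Finset V, E.card ≤ 1 ∧ ∀ u, ρ = some u → u ∈ E := by
      cases ρ with
      | none => exact ⟨∅, by simp, by simp⟩
      | some u => exact ⟨{u}, by simp, fun u' hu' => by simp [Option.some.inj hu']⟩
    have hs : NC ρ ⊆ X ∪ E := by
      intro v hv
      rw [Finset.mem_union]
      rcases (hNC ρ v).1 hv with h' | h'
      · exact Or.inl h'
      · exact Or.inr (hE2 v h'.2.2)
    have := Finset.card_le_card hs
    have := Finset.card_union_le X E
    omega
  have hrich' : ∀ ρ, ∃ u ∈ U, ∃ v ∈ U, u ∉ Z ∧ u ∉ NC ρ ∧ v ∉ Z ∧ v ∉ NC ρ ∧ u ∈ A ∧ v ∈ A ∧ G.Adj u v := by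
    intro ρ
    obtain ⟨u, hu, v, hv, a1, a2, a3⟩ := hrich (Z ∪ NC ρ) (by
      have := Finset.card_union_le Z (NC ρ)
      have := hNCc ρ
      omega)
    rw [Finset.mem_union, not_or] at a1 a2
    exact ⟨u, hu, v, hv, a1.1, a1.2, a2.1, a2.2, a3.2.1, a3.2.2, a3.1⟩
  by_cases hheavy : ∃ ρ, 2 * (x + 1) ≤ (Z ∩ D ρ).card
  · obtain ⟨ρ, hheavy⟩ := hheavy
    obtain ⟨u, hu, v, hv, a1, a2, a3, a4, a5, a6, a7⟩ := hrich' ρ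
    refine heavy_case hS h N hZN IH (D ρ) (NC ρ) (fun v hv => ((hD ρ v).1 hv).1) ?_ ?_ ?_ ?_ ?_ ?_ ?_
    · intro v hv
      rcases (hNC ρ v).1 hv with h' | h'
      · exact hXA h'
      · exact h'.1
    · intro v hv hv'
      have b := (hD ρ v).1 hv
      rcases (hNC ρ v).1 hv' with h' | h'
      · exact b.2.1 h'
      · exact b.2.2.1 h'.2.1
    · intro v hv u hu hvu
      obtain ⟨b1, b2, b3, b4⟩ := (hD ρ v).1 hv
      rw [hNC, hD]
      by_cases hux : u ∈ X
      · exact Or.inr (Or.inl hux)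
      rcases hE' v b1 u hu hvu b2 hux with ⟨a, b, e⟩ | ⟨a, b, e⟩ | ⟨a, b, e⟩ | ⟨a, b, e⟩
      · exact absurd a b3
      · exact absurd a b3
      · exact Or.inr (Or.inr ⟨hu, b, by rw [← b4, e]⟩)
      · exact Or.inl ⟨hu, hux, b, by rw [← e, b4]⟩
    · have : (Z ∩ D ρ).Nonempty := by rw [← Finset.card_pos]; omega
      obtain ⟨w, hw⟩ := this
      exact ⟨w, (Finset.mem_inter.1 hw).2⟩
    · have := hNCc ρ
      exact le_trans (by omega) hheavy
    · exact ⟨u, a5, v, a6, a7, fun h' => ((hD ρ u).1 h').2.2.1 hu, a1, a2, a3, a4⟩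
    · intro v
      have := hL v
      have := hNCc ρ
      omega
  · push Not at hheavy
    obtain ⟨Z1, φ1, f1, hst1, hZ1, hXZ1, hc1, htr⟩ := absorb (L := L) hS X (f := f) h hXA
      (fun v => by have := hL v; omega)
    obtain ⟨ψ, hψ⟩ := light_core (f := f1) hS hpos hk hst1 N IH X U r c hXZ1 hUX' hE' hrU D hD (by
        intro ρ
        have e1 : Z1 ∩ D ρ ⊆ (Z ∩ D ρ) ∪ (Z1 \ Z) := by
          intro v hv
          simp only [Finset.mem_inter, Finset.mem_union, Finset.mem_sdiff] at hv ⊢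
          tauto
        have e2 := Finset.card_le_card e1
        have e3 := Finset.card_union_le (Z ∩ D ρ) (Z1 \ Z)
        have e4 := Finset.card_sdiff_add_card_eq_card hZ1
        have e5 := hheavy ρ
        have e6 : (Z1 ∩ D ρ).card + X.card + 2 ≤ N := by omega
        convert e6) (by
        intro ρ
        obtain ⟨u, hu, v, hv, a1, a2, a3, a4, a5, a6, a7⟩ := hrich' ρ
        rw [hNC] at a2
        push Not at a2
        exact ⟨u, a5, fun h' => ((hD ρ u).1 h').2.2.1 hu, a2.1, fun e => a2.2 a5 hu e.symm⟩)
        (fun v => by have := hL v; omega)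
    exact ⟨ψ, htr ψ hψ⟩

theorem stmt5 (WH : Type) [Fintype WH] (H : SimpleGraph WH) :
    ∃ c : ℕ, ∀ (V : Type) [Fintype V] (G : SimpleGraph V), ¬ IsOddMinor H G →
      ∀ S : Set ℕ, (∀ s ∈ S, 0 < s) → 1 ∈ S →
      ∀ k : ℕ, 0 < k →
        (∀ s : Set V, (G.induce s).Colorable 2 → SChoosable S (G.induce s) k) →
        SChoosable S G (k + c) := by
  classical
  obtain ⟨t, ht⟩ : ∃ t, t = Fintype.card WH := ⟨_, rfl⟩
  obtain ⟨x, hx⟩ : ∃ x, x = 2 * (4 * t + 1) := ⟨_, rfl⟩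
  obtain ⟨N, hN⟩ : ∃ N, N = 5 * x + 3 := ⟨_, rfl⟩
  obtain ⟨M, hM⟩ : ∃ M, M = 2 * (2 * (4 * t + 1) + 2 * t + 1) + 2 * (4 * t + 1) + (N + x + 1) + 10 := ⟨_, rfl⟩
  refine ⟨2 * (N + 4 * x + 10) + 2 * q1 M + q2 M, ?_⟩
  intro V _ G hG S hpos hS k _ hk L hL
  let e : WH ≃ Fin t := (Fintype.equivFin WH).trans (finCongr ht.symm)
  have hno : ∀ (ψ : V → ZMod 2) (Q : Fin t → Set V), ¬ IsOddModel G ψ Q := by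
    intro ψ Q hQ
    have : IsOddModel G ψ (fun w : WH => Q (e w)) :=
      ⟨fun i => hQ.nonempty _, fun i => hQ.conn _, fun i j hij => hQ.disj _ _ (fun h => hij (e.injective h)),
        fun i j hij => hQ.adj _ _ (fun h => hij (e.injective h))⟩
    exact hG (this.isOddMinor H)
  obtain ⟨ψ, hψ⟩ := main_ind hS hpos hk t x N M hx hN hno (by omega) (by omega) hL _ Finset.univ rfl ∅
    (fun _ => 0) (fun _ => 0) ⟨by simp, by simp, by
      intro v _ _ hex hall
      obtain ⟨u, hu, hvu⟩ := hex
      exact absurd (hall u hu hvu) (by simp)⟩ (by simp)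
  refine ⟨ψ, fun v => hψ.mem v (by simp) (by simp), fun u v huv => hψ.proper u (by simp) v (by simp) huv, ?_⟩
  rintro v ⟨u, hu⟩
  obtain ⟨s, hs, c, hc⟩ := hψ.ach v (by simp) (by simp) ⟨u, by simp, hu⟩
  refine ⟨s, hs, c, ?_⟩
  rw [← hc]
  simp

end CFPaper
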